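/- arXiv:math/0305242 — 3 statements merged into one kernel-verified Lean document; each statement's English description precedes it below -/
import Mathlib

section
/- Every 3-net in ℙ²(ℂ) realizing a cyclic group is algebraic: if m ≥ 2 and p₁, p₂, p₃ : ℤ/mℤ → ℙ²(ℂ) are injective maps with pairwise disjoint images such that for all x,y,z ∈ ℤ/mℤ the points p₁(x), p₂(y), p₃(z) are collinear if and only if x+y+z = 0, then there exists a nonzero homogeneous cubic polynomial F ∈ ℂ[X,Y,Z] such that F vanishes at (representatives of) all the 3m points in the images of p₁, p₂, p₃, and the gradient of F is nonzero at a representative of each of these points. -/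
/-- The complex projective plane ℙ²(ℂ) = ℙ(ℂ³). -/
abbrev P2 : Type := Projectivization ℂ (Fin 3 → ℂ)

/-- Three points of ℙ²(ℂ) are collinear if representative vectors in ℂ³ span a linear
subspace of dimension at most 2. -/
def Collin (p q r : P2) : Prop :=
  Module.finrank ℂ (Submodule.span ℂ {p.rep, q.rep, r.rep} : Submodule ℂ (Fin 3 → ℂ)) ≤ 2

/-- A realization of a finite abelian group `H` by a 3-net in ℙ²(ℂ), stated dually in
terms of the points dual to the lines of the net: three injective maps `H → ℙ²(ℂ)` with
pairwise disjoint images such that `p₁ x`, `p₂ y`, `p₃ z` are collinear iff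
`x + y + z = 0`. -/
def Realizes {H : Type} [AddCommGroup H] (p₁ p₂ p₃ : H → P2) : Prop :=
  Function.Injective p₁ ∧ Function.Injective p₂ ∧ Function.Injective p₃ ∧
  Disjoint (Set.range p₁) (Set.range p₂) ∧
  Disjoint (Set.range p₁) (Set.range p₃) ∧
  Disjoint (Set.range p₂) (Set.range p₃) ∧
  ∀ x y z : H, Collin (p₁ x) (p₂ y) (p₃ z) ↔ x + y + z = 0

/-- A realization (given dually by three maps into ℙ²(ℂ)) is algebraic if there is a
nonzero homogeneous cubic polynomial `F` on ℂ³ vanishing at every point of the images,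
all of these points being smooth points of the cubic curve `F = 0`. -/
def AlgebraicOn {H : Type} (p₁ p₂ p₃ : H → P2) : Prop :=
  ∃ F : MvPolynomial (Fin 3) ℂ, F ≠ 0 ∧ F.IsHomogeneous 3 ∧
    ∀ q ∈ Set.range p₁ ∪ Set.range p₂ ∪ Set.range p₃,
      MvPolynomial.eval q.rep F = 0 ∧
      ∃ j : Fin 3, MvPolynomial.eval q.rep (MvPolynomial.pderiv j F) ≠ 0

/-!
Choose a generator `g` and a nonzero cubic through nine points of the net with indices close to `0`
in `ℤ • g`. Nine points of the net that two sets of three lines cut into collinear triples form a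
`3 × 3` grid, and by Cayley–Bacharach a cubic through eight points of a grid passes through the
ninth; moving such grids along the net shows that the cubic contains all of it. If it were singular
at a point of one family, each line joining that point to a point of the second family would meet it
with multiplicity at least four and therefore be a component. The cubic would consist of three of
these lines and miss the remaining points of the first family.

In the group of order two there are no such grids. The six points are then the vertices of a
complete quadrilateral, and the sum of the products of three out of the four line equations is
smooth there.
-/

open MvPolynomial Matrix

section LinearForms

variable {σ K : Type*} [Fintype σ] [Field K] {n m q : σ → K} {F : MvPolynomial σ K} {d : ℕ}

/-- The linear form `v ↦ n ⬝ᵥ v` as a polynomial; for `n ≠ 0` it is the equation of a hyperplane. -/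
noncomputable def linearForm (n : σ → K) : MvPolynomial σ K :=
  ∑ i, C (n i) * X i

@[simp]
lemma eval_linearForm (n v : σ → K) : eval v (linearForm n) = n ⬝ᵥ v := by
  simp [linearForm, dotProduct]

lemma isHomogeneous_linearForm (n : σ → K) : (linearForm n).IsHomogeneous 1 :=
  .sum _ _ _ fun _ _ ↦ isHomogeneous_C_mul_X _ _

@[simp]
lemma pderiv_linearForm (n : σ → K) (i : σ) : pderiv i (linearForm n) = C (n i) := by
  classical simp [linearForm, pderiv_X, Pi.single_apply]

/-- Composition of a polynomial with the map `v ↦ v - (n ⬝ᵥ v) • q`; if `n ⬝ᵥ q = 1`, this map is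
the linear projection onto the hyperplane `n ⬝ᵥ v = 0` along `q`. -/
noncomputable def projectAlong (n q : σ → K) : MvPolynomial σ K →ₐ[K] MvPolynomial σ K :=
  aeval fun i ↦ X i - linearForm n * C (q i)

lemma eval_projectAlong (n q v : σ → K) (F : MvPolynomial σ K) :
    eval v (projectAlong n q F) = eval (v - (n ⬝ᵥ v) • q) F := by
  have hcomp : (aeval v).comp (projectAlong n q) = aeval (R := K) (v - (n ⬝ᵥ v) • q) := by
    ext i
    simp [projectAlong, aeval_eq_eval]
  exact DFunLike.congr_fun hcomp F

lemma isHomogeneous_projectAlong (n q : σ → K) (hF : F.IsHomogeneous d) :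
    (projectAlong n q F).IsHomogeneous d := by
  have h := hF.aeval (fun i ↦ X i - linearForm n * C (q i)) fun i ↦
    (isHomogeneous_X K i).sub ((isHomogeneous_linearForm n).mul (isHomogeneous_C σ (q i)))
  rwa [one_mul] at h

lemma linearForm_dvd_sub_projectAlong (n q : σ → K) (F : MvPolynomial σ K) :
    linearForm n ∣ F - projectAlong n q F := by
  let I := Ideal.span {linearForm n}
  have hmk : (Ideal.Quotient.mkₐ K I).comp (projectAlong n q) = Ideal.Quotient.mkₐ K I := by
    ext i
    simp [projectAlong, I]
  rw [← Ideal.mem_span_singleton, ← Ideal.Quotient.mk_eq_mk_iff_sub_mem]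
  exact (DFunLike.congr_fun hmk F).symm

lemma projectAlong_linearForm (hnq : n ⬝ᵥ q = 1) : projectAlong n q (linearForm n) = 0 := by
  have hC : ∑ i, C (n i) * C (q i) = (1 : MvPolynomial σ K) := by
    rw [← C_1, ← hnq, dotProduct, map_sum]
    simp only [C_mul]
  calc projectAlong n q (linearForm n)
      = ∑ i, C (n i) * (X i - linearForm n * C (q i)) := by simp [projectAlong, linearForm]
    _ = linearForm n - linearForm n * ∑ i, C (n i) * C (q i) := by
        simp only [mul_sub, Finset.sum_sub_distrib, Finset.mul_sum, mul_left_comm, linearForm]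
    _ = 0 := by rw [hC, mul_one, sub_self]

lemma linearForm_dvd_iff_projectAlong_eq_zero (hnq : n ⬝ᵥ q = 1) :
    linearForm n ∣ F ↔ projectAlong n q F = 0 := by
  refine ⟨?_, fun h ↦ by simpa [h] using linearForm_dvd_sub_projectAlong n q F⟩
  rintro ⟨Q, rfl⟩
  rw [map_mul, projectAlong_linearForm hnq, zero_mul]

lemma exists_dotProduct_eq_one (hn : n ≠ 0) : ∃ q, n ⬝ᵥ q = 1 := by
  classical
  obtain ⟨i, hi⟩ := Function.ne_iff.mp hn
  exact ⟨Pi.single i (n i)⁻¹, by simp [mul_inv_cancel₀ hi]⟩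

lemma linearForm_ne_zero (hn : n ≠ 0) : linearForm n ≠ 0 := by
  obtain ⟨q, hq⟩ := exists_dotProduct_eq_one hn
  intro h
  simpa [hq] using congrArg (eval q) h

lemma prime_linearForm (hn : n ≠ 0) : Prime (linearForm n) := by
  obtain ⟨q, hq⟩ := exists_dotProduct_eq_one hn
  refine ⟨linearForm_ne_zero hn, fun h ↦ ?_, fun F G hFG ↦ ?_⟩
  · simpa only [eval_linearForm, dotProduct_zero, isUnit_zero_iff, zero_ne_one] using
      h.map (eval (0 : σ → K))
  · simpa only [linearForm_dvd_iff_projectAlong_eq_zero hq, map_mul, mul_eq_zero] using hFG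

theorem linearForm_dvd_iff [Infinite K] (hn : n ≠ 0) :
    linearForm n ∣ F ↔ ∀ v, n ⬝ᵥ v = 0 → eval v F = 0 := by
  obtain ⟨q, hq⟩ := exists_dotProduct_eq_one hn
  constructor
  · rintro ⟨Q, rfl⟩ v hv
    simp [hv]
  · intro h
    rw [linearForm_dvd_iff_projectAlong_eq_zero hq]
    refine MvPolynomial.funext fun v ↦ ?_
    rw [eval_projectAlong, map_zero]
    exact h _ (by simp [dotProduct_sub, hq])

attribute [local instance] MvPolynomial.gradedAlgebra in
lemma exists_isHomogeneous_eq_linearForm_mul (hF : F.IsHomogeneous (d + 1))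
    (hdvd : linearForm n ∣ F) : ∃ Q, Q.IsHomogeneous d ∧ F = linearForm n * Q := by
  obtain ⟨Q, rfl⟩ := hdvd
  have hcomp := DirectSum.coe_decompose_mul_add_of_left_mem (homogeneousSubmodule σ K)
    (i := 1) (j := d) (b := Q) (isHomogeneous_linearForm n)
  rw [add_comm, DirectSum.decompose_of_mem_same _ hF] at hcomp
  exact ⟨_, SetLike.coe_mem (DirectSum.decompose (homogeneousSubmodule σ K) Q d), hcomp⟩

theorem exists_eq_linearForm_mul_add_linearForm_mul [Infinite K] (hnq : n ⬝ᵥ q = 1)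
    (hmq : m ⬝ᵥ q = 0) (hm : m ≠ 0) (hF : F.IsHomogeneous (d + 1))
    (hzero : ∀ v, n ⬝ᵥ v = 0 → m ⬝ᵥ v = 0 → eval v F = 0) :
    ∃ M Q, Q.IsHomogeneous d ∧ F = linearForm n * M + linearForm m * Q := by
  have hdvd : linearForm m ∣ projectAlong n q F := by
    refine (linearForm_dvd_iff hm).mpr fun v hv ↦ ?_
    rw [eval_projectAlong]
    exact hzero _ (by simp [dotProduct_sub, hnq]) (by simp [dotProduct_sub, hmq, hv])
  obtain ⟨Q, hQ, hFQ⟩ :=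
    exists_isHomogeneous_eq_linearForm_mul (isHomogeneous_projectAlong n q hF) hdvd
  obtain ⟨M, hFM⟩ := linearForm_dvd_sub_projectAlong n q F
  exact ⟨M, Q, hQ, by rw [← hFM, ← hFQ, sub_add_cancel]⟩

lemma exists_eq_C_mul_prod_linearForm {ι : Type*} (s : Finset ι)
    {n : ι → σ → K} (hn : ∀ i ∈ s, n i ≠ 0)
    (hndvd : (s : Set ι).Pairwise fun i j ↦ ¬ linearForm (n i) ∣ linearForm (n j))
    (hF : F.IsHomogeneous s.card)
    (hdvd : ∀ i ∈ s, linearForm (n i) ∣ F) : ∃ c, F = C c * ∏ i ∈ s, linearForm (n i) := by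
  classical
  induction s using Finset.induction_on generalizing F with
  | empty =>
    exact ⟨_, by simpa using totalDegree_eq_zero_iff_eq_C.mp (hF.totalDegree_le.antisymm bot_le)⟩
  | insert i s hi ih =>
    rw [Finset.card_insert_of_notMem hi] at hF
    obtain ⟨Q, hQ, rfl⟩ :=
      exists_isHomogeneous_eq_linearForm_mul hF (hdvd i (Finset.mem_insert_self i s))
    obtain ⟨c, rfl⟩ := ih (fun j hj ↦ hn j (Finset.mem_insert_of_mem hj))
      (hndvd.mono (by simp)) hQ fun j hj ↦
        ((prime_linearForm (hn j (Finset.mem_insert_of_mem hj))).dvd_or_dvd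
          (hdvd j (Finset.mem_insert_of_mem hj))).resolve_left
          (hndvd (by simp [hj]) (by simp) (ne_of_mem_of_not_mem hj hi))
    exact ⟨c, by rw [Finset.prod_insert hi, mul_left_comm]⟩

end LinearForms

lemma eval_smul_of_isHomogeneous {σ R : Type*} [CommSemiring R] {F : MvPolynomial σ R} {d : ℕ}
    (hF : F.IsHomogeneous d) (c : R) (v : σ → R) : eval (c • v) F = c ^ d * eval v F := by
  rw [eval_eq, eval_eq, Finset.mul_sum]
  refine Finset.sum_congr rfl fun e he ↦ ?_
  have hdeg : ∑ i ∈ e.support, e i = d := by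
    rw [← Finsupp.degree_apply, Finsupp.degree_eq_weight_one]
    exact hF (mem_support_iff.mp he)
  simp only [Pi.smul_apply, smul_eq_mul, mul_pow, Finset.prod_mul_distrib,
    Finset.prod_pow_eq_pow_sum, hdeg]
  ring

lemma finrank_homogeneousSubmodule (σ K : Type*) [Fintype σ] [Field K] (d : ℕ) :
    Module.finrank K (homogeneousSubmodule σ K d) = (Fintype.card σ).multichoose d := by
  classical
  have hdegs : {e : σ →₀ ℕ | e.degree = d} = (Finset.univ : Finset σ).finsuppAntidiag d := by
    ext e
    simp [Finset.mem_finsuppAntidiag, Finsupp.degree_eq_sum]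
  rw [homogeneousSubmodule_eq_finsupp_supported, hdegs, ← restrictSupport,
    Module.finrank_eq_nat_card_basis (basisRestrictSupport K _)]
  rw [Nat.card_eq_card_toFinset, Finset.toFinset_coe,
    Finset.card_finsuppAntidiag_nat_eq_multichoose, Finset.card_univ]

lemma exists_isHomogeneous_forall_eval_eq_zero {ι σ K : Type*} [Fintype ι] [Fintype σ] [Field K]
    {d : ℕ} (w : ι → σ → K) (hcard : Fintype.card ι < (Fintype.card σ).multichoose d) :
    ∃ F : MvPolynomial σ K, F ≠ 0 ∧ F.IsHomogeneous d ∧ ∀ i, eval (w i) F = 0 := by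
  let evals : homogeneousSubmodule σ K d →ₗ[K] ι → K :=
    LinearMap.pi fun i ↦ (aeval (w i)).toLinearMap ∘ₗ Submodule.subtype _
  have : Module.Finite K (homogeneousSubmodule σ K d) :=
    Module.Finite.of_fg (homogeneousSubmodule_fg σ K d)
  have hker : LinearMap.ker evals ≠ ⊥ := LinearMap.ker_ne_bot_of_finrank_lt (by
    simpa only [finrank_homogeneousSubmodule, Module.finrank_fintype_fun_eq_card] using hcard)
  obtain ⟨F, hF, hF0⟩ := Submodule.exists_mem_ne_zero_of_ne_bot hker
  exact ⟨F, by simpa using hF0, F.2, fun i ↦ congrFun hF i⟩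

section Plane

variable {K : Type*} [Field K] {n P q u v : Fin 3 → K} {F : MvPolynomial (Fin 3) K} {d : ℕ}

lemma exists_eq_smul_of_cross_eq_zero (hP : P ≠ 0) (h : P ⨯₃ v = 0) : ∃ c : K, v = c • P := by
  by_contra! hv
  exact crossProduct_ne_zero_iff_linearIndependent.mpr
    ((LinearIndependent.pair_iff' hP).mpr fun c hc ↦ hv c hc.symm) h

lemma cross_ne_zero_of_dotProduct (hu : u ≠ 0) (hnu : n ⬝ᵥ u = 0) (hnv : n ⬝ᵥ v ≠ 0) :
    u ⨯₃ v ≠ 0 := by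
  intro h
  obtain ⟨c, rfl⟩ := exists_eq_smul_of_cross_eq_zero hu h
  simp [hnu] at hnv

lemma cross_eq_neg_smul (hnP : n ⬝ᵥ P = 0) (hnv : n ⬝ᵥ v = 0) (hnq : n ⬝ᵥ q = 1) :
    P ⨯₃ v = -((P ⨯₃ q) ⬝ᵥ v) • n := by
  have hn : n ≠ 0 := by
    rintro rfl
    simp at hnq
  have hparallel : n ⨯₃ (P ⨯₃ v) = 0 := by
    rw [cross_cross_eq_smul_sub_smul', hnv, dotProduct_comm, hnP, zero_smul, zero_smul, sub_zero]
  obtain ⟨c, hc⟩ := exists_eq_smul_of_cross_eq_zero hn hparallel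
  have htriple : v ⬝ᵥ P ⨯₃ q = -c := by
    rw [triple_product_permutation, triple_product_permutation, ← cross_anticomm, dotProduct_neg,
      hc, dotProduct_smul, dotProduct_comm, hnq, smul_eq_mul, mul_one]
  rw [hc, dotProduct_comm, htriple, neg_neg]

lemma dotProduct_cross_eq_zero_of_normal {w : Fin 3 → K} (hn : n ≠ 0) (hu : n ⬝ᵥ u = 0)
    (hv : n ⬝ᵥ v = 0) (hw : n ⬝ᵥ w = 0) : u ⬝ᵥ v ⨯₃ w = 0 := by
  have hparallel : n ⨯₃ (v ⨯₃ w) = 0 := by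
    rw [cross_cross_eq_smul_sub_smul', hw, dotProduct_comm, hv, zero_smul, zero_smul, sub_zero]
  obtain ⟨c, hc⟩ := exists_eq_smul_of_cross_eq_zero hn hparallel
  rw [hc, dotProduct_smul, dotProduct_comm, hu, smul_zero]

-- On the line `n` the residual `Q` is the quotient of `F` by the equation `m` of `P`: this is
-- division of a binary form by a linear factor, without choosing coordinates on the line.
lemma exists_residual [Infinite K] (hn : n ≠ 0) (hP : P ≠ 0) (hnP : n ⬝ᵥ P = 0)
    (hF : F.IsHomogeneous (d + 1)) (hFP : eval P F = 0) :
    ∃ m M Q, Q.IsHomogeneous d ∧ F = linearForm n * M + linearForm m * Q ∧ m ⬝ᵥ P = 0 ∧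
      ∀ v, n ⬝ᵥ v = 0 → P ⨯₃ v ≠ 0 → m ⬝ᵥ v ≠ 0 := by
  obtain ⟨q, hnq⟩ := exists_dotProduct_eq_one hn
  have hm : P ⨯₃ q ≠ 0 := cross_ne_zero_of_dotProduct hP hnP (hnq.trans_ne one_ne_zero)
  have hzero (v) (hnv : n ⬝ᵥ v = 0) (hmv : (P ⨯₃ q) ⬝ᵥ v = 0) : P ⨯₃ v = 0 := by
    rw [cross_eq_neg_smul hnP hnv hnq, hmv, neg_zero, zero_smul]
  obtain ⟨M, Q, hQ, hFMQ⟩ := exists_eq_linearForm_mul_add_linearForm_mul hnq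
    (by rw [dotProduct_comm, dot_cross_self]) hm hF fun v hnv hmv ↦ by
      obtain ⟨c, rfl⟩ := exists_eq_smul_of_cross_eq_zero hP (hzero v hnv hmv)
      rw [eval_smul_of_isHomogeneous hF, hFP, mul_zero]
  exact ⟨P ⨯₃ q, M, Q, hQ, hFMQ, by rw [dotProduct_comm, dot_self_cross],
    fun v hnv ↦ mt (hzero v hnv)⟩

theorem linearForm_dvd_of_zeros [Infinite K] (hn : n ≠ 0) (l : List (Fin 3 → K))
    (hdistinct : l.Pairwise (· ⨯₃ · ≠ 0)) (hline : ∀ v ∈ l, n ⬝ᵥ v = 0)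
    (hF : F.IsHomogeneous d) (hd : l.length = d + 1) (hzero : ∀ v ∈ l, eval v F = 0) :
    linearForm n ∣ F := by
  induction l generalizing d F with
  | nil => simp at hd
  | cons P l ih =>
    obtain ⟨hP, hl⟩ := List.pairwise_cons.mp hdistinct
    obtain ⟨hnP, hnl⟩ := List.forall_mem_cons.mp hline
    obtain ⟨hFP, hFl⟩ := List.forall_mem_cons.mp hzero
    cases d with
    | zero =>
      have hFC := totalDegree_eq_zero_iff_eq_C.mp (hF.totalDegree_le.antisymm bot_le)
      rw [hFC, eval_C] at hFP
      rw [hFC, hFP, C_0]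
      exact dvd_zero _
    | succ d =>
      have hP0 : P ≠ 0 := by
        rintro rfl
        cases l with
        | nil => simp at hd
        | cons u _ => simpa using hP u
      obtain ⟨m, M, Q, hQ, rfl, -, hm⟩ := exists_residual hn hP0 hnP hF hFP
      refine (dvd_mul_right _ _).add (Dvd.dvd.mul_left (ih hl hnl hQ (by simpa using hd) ?_) _)
      intro v hv
      simpa [hnl v hv, hm v (hnl v hv) (hP v hv)] using hFl v hv

theorem linearForm_dvd_of_singular_zero [Infinite K] (hn : n ≠ 0) (l : List (Fin 3 → K))
    (hdistinct : (P :: u :: l).Pairwise (· ⨯₃ · ≠ 0)) (hline : ∀ v ∈ P :: u :: l, n ⬝ᵥ v = 0)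
    (hF : F.IsHomogeneous (l.length + 2)) (hzero : ∀ v ∈ P :: u :: l, eval v F = 0)
    (hsing : ∀ j, eval P (pderiv j F) = 0) :
    linearForm n ∣ F := by
  obtain ⟨hP, -⟩ := List.pairwise_cons.mp hdistinct
  obtain ⟨hnP, hnl⟩ := List.forall_mem_cons.mp hline
  obtain ⟨hFP, hFl⟩ := List.forall_mem_cons.mp hzero
  have hP0 : P ≠ 0 := by
    rintro rfl
    simpa using hP u
  obtain ⟨m, M, Q, hQ, rfl, hmP, hm⟩ := exists_residual hn hP0 hnP hF hFP
  have hgrad : eval P M • n + eval P Q • m = 0 := by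
    ext j
    simpa [hnP, hmP, mul_comm] using hsing j
  have hQP : eval P Q = 0 := by
    have hu := congrArg (· ⬝ᵥ u) hgrad
    simpa [add_dotProduct, hnl u, hm u (hnl u (by simp)) (hP u (by simp))] using hu
  have hQl (v) (hv : v ∈ u :: l) : eval v Q = 0 := by
    simpa [hnl v hv, hm v (hnl v hv) (hP v hv)] using hFl v hv
  exact (dvd_mul_right _ _).add (Dvd.dvd.mul_left (linearForm_dvd_of_zeros hn _ hdistinct hline hQ
    (by simp) (List.forall_mem_cons.mpr ⟨hQP, hQl⟩)) _)

end Plane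

section Grid

variable {K : Type*} [Field K] [Infinite K] {P : Fin 3 → Fin 3 → Fin 3 → K}
  {row col : Fin 3 → Fin 3 → K} {F : MvPolynomial (Fin 3) K} {x : Fin 3 → K}

lemma eval_eq_zero_of_grid_of_mem_row (hrow : ∀ i k l, row i ⬝ᵥ P k l = 0 ↔ i = k)
    (hcol : ∀ j k l, col j ⬝ᵥ P k l = 0 ↔ j = l) (hrowx : row 0 ⬝ᵥ x = 0)
    (hcolx : ∀ j, col j ⬝ᵥ x ≠ 0) (hF : F.IsHomogeneous 3)
    (hzero : ∀ k l, (k, l) ≠ (2, 2) → eval (P k l) F = 0) (hFx : eval x F = 0) :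
    eval (P 2 2) F = 0 := by
  have hrow0 (i) : row i ≠ 0 := fun h ↦ by simpa [h] using hrow i (i + 1) 0
  have hP0 (k l) : P k l ≠ 0 := fun h ↦ by simpa [h] using hrow (k + 1) k l
  have hPx (k l) : P k l ⨯₃ x ≠ 0 :=
    cross_ne_zero_of_dotProduct (hP0 k l) ((hcol l k l).mpr rfl) (hcolx l)
  have hP (k l l') (hl : l ≠ l') : P k l ⨯₃ P k l' ≠ 0 :=
    cross_ne_zero_of_dotProduct (hP0 k l) ((hcol l k l).mpr rfl) (mt (hcol l k l').mp hl)
  obtain ⟨Q, hQ, rfl⟩ := exists_isHomogeneous_eq_linearForm_mul hF <|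
    linearForm_dvd_of_zeros (hrow0 0) [P 0 0, P 0 1, P 0 2, x] (by simp [hP, hPx])
      (by simp [hrow, hrowx]) hF rfl (by simp [hzero, hFx])
  have hQzero (k l) (hk : k ≠ 0) (hkl : (k, l) ≠ (2, 2)) : eval (P k l) Q = 0 := by
    simpa [hrow, hk.symm] using hzero k l hkl
  obtain ⟨L, hL, rfl⟩ := exists_isHomogeneous_eq_linearForm_mul hQ <|
    linearForm_dvd_of_zeros (hrow0 1) [P 1 0, P 1 1, P 1 2] (by simp [hP])
      (by simp [hrow]) hQ rfl (by simp [hQzero])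
  have hLzero (l) (hl : l ≠ 2) : eval (P 2 l) L = 0 := by
    simpa [hrow] using hQzero 2 l (by decide) (by simpa using hl)
  have hdvd : linearForm (row 2) ∣ L :=
    linearForm_dvd_of_zeros (hrow0 2) [P 2 0, P 2 1] (by simp [hP]) (by simp [hrow]) hL rfl
      (by simp [hLzero])
  simp [(linearForm_dvd_iff (hrow0 2)).mp hdvd (P 2 2) ((hrow 2 2 2).mpr rfl)]

theorem eval_eq_zero_of_grid (hrow : ∀ i k l, row i ⬝ᵥ P k l = 0 ↔ i = k)
    (hcol : ∀ j k l, col j ⬝ᵥ P k l = 0 ↔ j = l) (hF : F.IsHomogeneous 3)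
    (hzero : ∀ k l, (k, l) ≠ (2, 2) → eval (P k l) F = 0) : eval (P 2 2) F = 0 := by
  obtain ⟨x, hrowx, hcolx⟩ : ∃ x, row 0 ⬝ᵥ x = 0 ∧ ∀ j, col j ⬝ᵥ x ≠ 0 := by
    have hrow0 : row 0 ≠ 0 := fun h ↦ by simpa [h] using hrow 0 1 0
    have hndvd : ¬ linearForm (row 0) ∣ ∏ j, linearForm (col j) := by
      rw [(prime_linearForm hrow0).dvd_finsetProd_iff]
      rintro ⟨j, -, hj⟩
      have := (linearForm_dvd_iff hrow0).mp hj (P 0 (j + 1)) ((hrow 0 _ _).mpr rfl)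
      simp [hcol] at this
    simpa [linearForm_dvd_iff hrow0, Finset.prod_eq_zero_iff] using hndvd
  -- Subtracting a multiple of the product of the columns gives a fourth zero `x` on `row 0`.
  let D : MvPolynomial (Fin 3) K := ∏ j, linearForm (col j)
  have hD : D.IsHomogeneous 3 := by
    simpa using IsHomogeneous.prod Finset.univ _ _ fun j _ ↦ isHomogeneous_linearForm (col j)
  have hDP (k l) : eval (P k l) D = 0 := by
    simp [D, Finset.prod_eq_zero (Finset.mem_univ l), hcol]
  have hDx : eval x D ≠ 0 := by simpa [D, Finset.prod_eq_zero_iff] using hcolx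
  let G := F - C (eval x F / eval x D) * D
  have hG : G.IsHomogeneous 3 := hF.sub (by simpa using (isHomogeneous_C _ _).mul hD)
  have hGP (k l) : eval (P k l) G = eval (P k l) F := by simp [G, hDP]
  rw [← hGP]
  exact eval_eq_zero_of_grid_of_mem_row hrow hcol hrowx hcolx hG
    (fun k l hkl ↦ (hGP k l).trans (hzero k l hkl)) (by simp [G, hDx])

end Grid

/-- The hypersurface `F = 0` passes through the point represented by `v` and is smooth there. -/
def IsSmoothZero {σ K : Type*} [CommSemiring K] (F : MvPolynomial σ K) (v : σ → K) : Prop :=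
  eval v F = 0 ∧ ∃ j, eval v (pderiv j F) ≠ 0

/-- The dual form of a 3-net realizing the group `H`, with points given by representative vectors:
`a i`, `b j` and `c k` are collinear, i.e. have zero triple product, exactly when
`i + j + k = 0`. -/
def IsDualNet {H K : Type*} [AddCommGroup H] [Field K] (a b c : H → Fin 3 → K) : Prop :=
  ∀ i j k, a i ⬝ᵥ b j ⨯₃ c k = 0 ↔ i + j + k = 0

namespace IsDualNet

variable {H K : Type*} [AddCommGroup H] [Field K] {a b c : H → Fin 3 → K}
  {F : MvPolynomial (Fin 3) K}

lemma rotate (h : IsDualNet a b c) : IsDualNet b c a := fun i j k ↦ by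
  rw [← triple_product_permutation, h, add_assoc, add_comm]

lemma swap (h : IsDualNet a b c) : IsDualNet b a c := fun i j k ↦ by
  rw [triple_product_permutation, ← cross_anticomm, dotProduct_neg, neg_eq_zero, h, add_comm j]

lemma cross_dotProduct_third_eq_zero_iff (h : IsDualNet a b c) {i j k : H} :
    a i ⨯₃ b j ⬝ᵥ c k = 0 ↔ i + j + k = 0 := by
  rw [dotProduct_comm, triple_product_permutation, h]

section Nontrivial

variable [Nontrivial H]

lemma cross_ne_zero (h : IsDualNet a b c) (i j : H) : a i ⨯₃ b j ≠ 0 := by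
  obtain ⟨k, hk⟩ := exists_ne (-(i + j))
  intro hij
  exact hk (eq_neg_of_add_eq_zero_right (h.cross_dotProduct_third_eq_zero_iff.mp (by simp [hij])))

lemma cross_dotProduct_left_eq_zero_iff (h : IsDualNet a b c) {i i' j : H} :
    a i ⨯₃ b j ⬝ᵥ a i' = 0 ↔ i' = i := by
  constructor
  · intro hi'
    have hcollinear : a i' ⬝ᵥ b j ⨯₃ c (-(i + j)) = 0 :=
      dotProduct_cross_eq_zero_of_normal (h.cross_ne_zero i j) hi'
        (by rw [dotProduct_comm, dot_cross_self])
        (h.cross_dotProduct_third_eq_zero_iff.mpr (add_neg_cancel _))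
    simpa [add_assoc, add_neg_eq_zero] using (h _ _ _).mp hcollinear
  · rintro rfl
    rw [dotProduct_comm, dot_self_cross]

lemma cross_dotProduct_right_eq_zero_iff (h : IsDualNet a b c) {i j j' : H} :
    a i ⨯₃ b j ⬝ᵥ b j' = 0 ↔ j' = j := by
  rw [← cross_anticomm, neg_dotProduct, neg_eq_zero, h.swap.cross_dotProduct_left_eq_zero_iff]

end Nontrivial

variable [Infinite K]

theorem eval_eq_zero_of_grid (h : IsDualNet a b c) (hF : F.IsHomogeneous 3) {α β γ : Fin 3 → H}
    (hα : α.Injective) (hβ : β.Injective) (hγ : γ.Injective)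
    (hrow : ∀ i, α i + β i + γ i = 0) (hcol : ∀ i, α i + β (i + 1) + γ (i + 2) = 0)
    (ha : ∀ i, eval (a (α i)) F = 0) (hb : ∀ i ≠ 2, eval (b (β i)) F = 0)
    (hc : ∀ i, eval (c (γ i)) F = 0) : eval (b (β 2)) F = 0 := by
  have := hα.nontrivial
  -- `row i` meets family `p` in index `i` and `col j` in index `p - j`, so both contain `P i j`.
  refine _root_.eval_eq_zero_of_grid (P := fun k l ↦ ![a (α k), b (β k), c (γ k)] (k + l))
    (row := fun i ↦ a (α i) ⨯₃ b (β i)) (col := fun j ↦ a (α (-j)) ⨯₃ b (β (-j + 1)))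
    (fun i k l ↦ ?_) (fun j k l ↦ ?_) hF fun k l hkl ↦ ?_
  · match k + l with
    | 0 => exact h.cross_dotProduct_left_eq_zero_iff.trans (hα.eq_iff.trans eq_comm)
    | 1 => exact h.cross_dotProduct_right_eq_zero_iff.trans (hβ.eq_iff.trans eq_comm)
    | 2 =>
      refine h.cross_dotProduct_third_eq_zero_iff.trans ?_
      rw [← hrow i, add_right_inj, hγ.eq_iff, eq_comm]
  · obtain ⟨p, rfl⟩ : ∃ p, l = p - k := ⟨k + l, (add_sub_cancel_left k l).symm⟩
    rw [add_sub_cancel]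
    match p with
    | 0 => exact h.cross_dotProduct_left_eq_zero_iff.trans (hα.eq_iff.trans (by grind))
    | 1 => exact h.cross_dotProduct_right_eq_zero_iff.trans (hβ.eq_iff.trans (by grind))
    | 2 =>
      refine h.cross_dotProduct_third_eq_zero_iff.trans ?_
      rw [← hcol (-j), add_right_inj, hγ.eq_iff]
      grind
  · obtain ⟨p, rfl⟩ : ∃ p, l = p - k := ⟨k + l, (add_sub_cancel_left k l).symm⟩
    rw [add_sub_cancel]
    match p with
    | 0 => exact ha k
    | 1 => exact hb k (by rintro rfl; exact hkl rfl)
    | 2 => exact hc k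

lemma eval_add_eq_zero (h : IsDualNet a b c) (hF : F.IsHomogeneous 3) {x y z δ : H}
    (hδ : 2 • δ ≠ 0) (hsum : x + y + z = 0) (ha : ∀ t ∈ ({x - δ, x} : Set H), eval (a t) F = 0)
    (hb : ∀ t ∈ ({y - δ, y, y + δ} : Set H), eval (b t) F = 0)
    (hc : ∀ t ∈ ({z - δ, z, z + δ} : Set H), eval (c t) F = 0) : eval (a (x + δ)) F = 0 := by
  -- As the shifts sum to zero, so do the indices in the rows `z + sᵢ, x + sᵢ₊₁, y + sᵢ₊₂` and in
  -- the columns `z + sᵢ, x + sᵢ₊₂, y + sᵢ₊₁` of a grid.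
  let shift : Fin 3 → H := ![δ, 0, -δ]
  have hshift : shift.Injective := by
    have hδ0 : δ ≠ 0 := by
      rintro rfl
      simp at hδ
    have hne : δ ≠ -δ := by rwa [ne_eq, eq_neg_iff_add_eq_zero, ← two_nsmul]
    intro i j
    fin_cases i <;> fin_cases j <;> simp [shift, hδ0, hδ0.symm, hne, hne.symm]
  have hsum_shift (i : Fin 3) : shift i + shift (i + 1) + shift (i + 2) = 0 := by
    fin_cases i <;> simp [shift]
  have hrow (i j k : Fin 3) (h : shift i + shift j + shift k = 0) :
      z + shift i + (x + shift j) + (y + shift k) = 0 := by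
    calc z + shift i + (x + shift j) + (y + shift k)
        = (x + y + z) + (shift i + shift j + shift k) := by abel
      _ = 0 := by rw [hsum, h, add_zero]
  refine h.rotate.rotate.eval_eq_zero_of_grid hF (α := fun i ↦ z + shift i)
    (β := fun i ↦ x + shift (i + 1)) (γ := fun i ↦ y + shift (i + 2))
    ((add_right_injective z).comp hshift)
    ((add_right_injective x).comp (hshift.comp (add_left_injective 1)))
    ((add_right_injective y).comp (hshift.comp (add_left_injective 2)))
    (fun i ↦ hrow _ _ _ (hsum_shift i)) (fun i ↦ hrow _ _ _ ?_)
    (fun i ↦ hc _ ?_) (fun i hi ↦ ha _ ?_) (fun i ↦ hb _ ?_)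
  · fin_cases i <;> simp [shift]
  · fin_cases i <;> simp [shift, sub_eq_add_neg]
  · fin_cases i <;> simp [shift, sub_eq_add_neg] at hi ⊢
  · fin_cases i <;> simp [shift, sub_eq_add_neg]

end IsDualNet

/-- `A` passes from `p` to a neighbour `p + e`, `e = ±1`, whenever it holds at `p - e` and `p` and
both `B` and `C` hold on the three integers around some `q` and `r` with `p + q + r = 0`. This is
the shape in which Cayley–Bacharach carries the zeros of a cubic along a net. -/
def ExtendsAlong (A B C : ℤ → Prop) : Prop :=
  ∀ e p q r : ℤ, IsUnit e → p + q + r = 0 → (∀ n ∈ ({p - e, p} : Set ℤ), A n) →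
    (∀ n ∈ ({q - e, q, q + e} : Set ℤ), B n) → (∀ n ∈ ({r - e, r, r + e} : Set ℤ), C n) → A (p + e)

section Propagation

variable {A B C : ℤ → Prop}

lemma ExtendsAlong.natAbs_le_succ (h : ExtendsAlong A B C) {N : ℕ} (hN : 2 ≤ N)
    (hA : ∀ n : ℤ, n.natAbs ≤ N → A n) (hB : ∀ n : ℤ, n.natAbs ≤ N → B n)
    (hC : ∀ n : ℤ, n.natAbs ≤ N → C n) (n : ℤ) (hn : n.natAbs ≤ N + 1) : A n := by
  obtain hlt | heq := Nat.lt_succ_iff_lt_or_eq.mp (Nat.lt_succ_of_le hn)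
  · exact hA n (Nat.le_of_lt_succ hlt)
  have step (e : ℤ) (he : IsUnit e) : A (e * N + e) := by
    refine h e (e * N) (-e * (N - 1)) (-e) he (by ring) ?_ ?_ ?_
    all_goals
      simp only [Set.mem_insert_iff, Set.mem_singleton_iff]
      grind [Int.isUnit_iff]
  obtain hpos | hneg := n.natAbs_eq
  · convert step 1 isUnit_one using 1; lia
  · convert step (-1) isUnit_one.neg using 1; lia

theorem ExtendsAlong.forall (hABC : ExtendsAlong A B C) (hBCA : ExtendsAlong B C A)
    (hCAB : ExtendsAlong C A B) (hA : ∀ n ∈ Finset.Icc (-1) 2, A n)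
    (hB : ∀ n ∈ Finset.Icc (-1) 1, B n) (hC : ∀ n ∈ Finset.Icc (-1) 0, C n) (n : ℤ) :
    A n ∧ B n ∧ C n := by
  have hC1 : C 1 := hCAB 1 0 0 0 isUnit_one rfl (by grind) (by grind) (by grind)
  have hCneg2 : C (-1 + -1) := hCAB (-1) (-1) 1 0 isUnit_one.neg rfl (by grind) (by grind)
    (by grind)
  have hBneg2 : B (-1 + -1) := hBCA (-1) (-1) 0 1 isUnit_one.neg rfl (by grind) (by grind)
    (by grind)
  have hB2 : B 2 := hBCA 1 1 (-1) 0 isUnit_one rfl (by grind) (by grind) (by grind)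
  have hC2 : C 2 := hCAB 1 1 0 (-1) isUnit_one rfl (by grind) (by grind) (by grind)
  have hAneg2 : A (-1 + -1) := hABC (-1) (-1) 0 1 isUnit_one.neg rfl (by grind) (by grind)
    (by grind)
  have hall (N : ℕ) (hN : 2 ≤ N) : (∀ n : ℤ, n.natAbs ≤ N → A n) ∧
      (∀ n : ℤ, n.natAbs ≤ N → B n) ∧ ∀ n : ℤ, n.natAbs ≤ N → C n := by
    induction N, hN using Nat.le_induction with
    | base => grind
    | succ N hN ih =>
      obtain ⟨hA, hB, hC⟩ := ih
      exact ⟨hABC.natAbs_le_succ hN hA hB hC, hBCA.natAbs_le_succ hN hB hC hA,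
        hCAB.natAbs_le_succ hN hC hA hB⟩
  obtain ⟨hA, hB, hC⟩ := hall (max 2 n.natAbs) (le_max_left _ _)
  exact ⟨hA n (le_max_right _ _), hB n (le_max_right _ _), hC n (le_max_right _ _)⟩

end Propagation

namespace IsDualNet

variable {H K : Type*} [AddCommGroup H] [Field K] [Infinite K]
  {a b c : H → Fin 3 → K} {F : MvPolynomial (Fin 3) K} {g : H}

lemma extendsAlong (h : IsDualNet a b c) (hF : F.IsHomogeneous 3) (hg : 2 • g ≠ 0) :
    ExtendsAlong (fun n ↦ eval (a (n • g)) F = 0) (fun n ↦ eval (b (n • g)) F = 0)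
      (fun n ↦ eval (c (n • g)) F = 0) := by
  intro e p q r he hpqr ha hb hc
  have hδ : 2 • e • g ≠ 0 := by
    obtain rfl | rfl := Int.isUnit_iff.mp he <;> simpa using hg
  have hsum : p • g + q • g + r • g = 0 := by rw [← add_zsmul, ← add_zsmul, hpqr, zero_zsmul]
  simp only [Set.mem_insert_iff, Set.mem_singleton_iff, forall_eq_or_imp, forall_eq, sub_zsmul,
    add_zsmul, ← sub_eq_add_neg] at ha hb hc ⊢
  exact h.eval_add_eq_zero hF hδ hsum (by simpa using ha) (by simpa using hb) (by simpa using hc)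

theorem exists_cubic (h : IsDualNet a b c) (hg : 2 • g ≠ 0) :
    ∃ F : MvPolynomial (Fin 3) K, F ≠ 0 ∧ F.IsHomogeneous 3 ∧ ∀ n : ℤ,
      eval (a (n • g)) F = 0 ∧ eval (b (n • g)) F = 0 ∧ eval (c (n • g)) F = 0 := by
  obtain ⟨F, hF0, hF, hzero⟩ := exists_isHomogeneous_forall_eval_eq_zero (d := 3) (K := K)
    (ι := Finset.Icc (-1 : ℤ) 2 ⊕ Finset.Icc (-1 : ℤ) 1 ⊕ Finset.Icc (-1 : ℤ) 0)
    (Sum.elim (fun n ↦ a (n.1 • g)) (Sum.elim (fun n ↦ b (n.1 • g)) fun n ↦ c (n.1 • g)))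
    (by simp [Nat.multichoose])
  simp only [Sum.forall, Sum.elim_inl, Sum.elim_inr, Subtype.forall] at hzero
  obtain ⟨ha, hb, hc⟩ := hzero
  exact ⟨F, hF0, hF, (h.extendsAlong hF hg).forall (h.rotate.extendsAlong hF hg)
    (h.rotate.rotate.extendsAlong hF hg) ha hb hc⟩

theorem isSmoothZero_left (h : IsDualNet a b c) (hF0 : F ≠ 0) (hF : F.IsHomogeneous 3)
    (ha : ∀ i, eval (a i) F = 0) (hb : ∀ j, eval (b j) F = 0) (hc : ∀ k, eval (c k) F = 0)
    {s : Finset H} (hs : s.card = 3) (i : H) : IsSmoothZero F (a i) := by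
  have : Nontrivial H :=
    Set.nontrivial_of_nontrivial ((Finset.one_lt_card_iff_nontrivial (s := s)).mp (by lia))
  refine ⟨ha i, ?_⟩
  by_contra! hsing
  have hline (j : H) : linearForm (a i ⨯₃ b j) ∣ F := by
    refine linearForm_dvd_of_singular_zero (h.cross_ne_zero i j) [c (-(i + j))]
      (P := a i) (u := b j) ?_ ?_ hF ?_ hsing
    · simp [h.cross_ne_zero, h.rotate.cross_ne_zero, h.swap.rotate.cross_ne_zero]
    · simp [h.cross_dotProduct_left_eq_zero_iff, h.cross_dotProduct_right_eq_zero_iff,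
        h.cross_dotProduct_third_eq_zero_iff]
    · simp [ha, hb, hc]
  have hdistinct (j j' : H) (hj : j ≠ j') :
      ¬ linearForm (a i ⨯₃ b j) ∣ linearForm (a i ⨯₃ b j') := fun hdvd ↦ by
    have hbj := (linearForm_dvd_iff (h.cross_ne_zero i j)).mp hdvd (b j)
      (h.cross_dotProduct_right_eq_zero_iff.mpr rfl)
    rw [eval_linearForm, h.cross_dotProduct_right_eq_zero_iff] at hbj
    exact hj hbj
  obtain ⟨κ, hκ⟩ := exists_eq_C_mul_prod_linearForm s (fun j _ ↦ h.cross_ne_zero i j)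
    (fun j _ j' _ ↦ hdistinct j j') (by rwa [hs]) fun j _ ↦ hline j
  obtain ⟨i', hi'⟩ := exists_ne i
  have hκ0 : κ = 0 := by
    simpa [hκ, h.cross_dotProduct_left_eq_zero_iff, hi', Finset.prod_eq_zero_iff] using ha i'
  exact hF0 (by rw [hκ, hκ0, C_0, zero_mul])

end IsDualNet

lemma isSmoothZero_sum_prod_erase_linearForm {ι σ K : Type*} [Fintype ι] [DecidableEq ι]
    [Fintype σ] [Field K] {n : ι → σ → K} {i j : ι} {P : σ → K} (hij : i ≠ j)
    (hP : ∀ k, n k ⬝ᵥ P = 0 ↔ k = i ∨ k = j) (hsum : n i + n j ≠ 0) :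
    IsSmoothZero (∑ k, ∏ l ∈ Finset.univ.erase k, linearForm (n l)) P := by
  have hiP := (hP i).mpr (.inl rfl)
  have hjP := (hP j).mpr (.inr rfl)
  let E := ∏ l ∈ (Finset.univ.erase i).erase j, linearForm (n l)
  have hE : eval P E ≠ 0 := by
    simp only [E, eval_prod, eval_linearForm, Finset.prod_ne_zero_iff]
    grind
  have hi : ∏ l ∈ Finset.univ.erase i, linearForm (n l) = linearForm (n j) * E :=
    (Finset.mul_prod_erase _ (fun l ↦ linearForm (n l)) (by simp [hij.symm])).symm
  have hj : ∏ l ∈ Finset.univ.erase j, linearForm (n l) = linearForm (n i) * E := by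
    simp only [E]
    rw [Finset.erase_right_comm,
      Finset.mul_prod_erase _ (fun l ↦ linearForm (n l)) (by simp [hij])]
  obtain ⟨G, hG⟩ : linearForm (n i) * linearForm (n j) ∣
      ∑ k ∈ (Finset.univ.erase i).erase j, ∏ l ∈ Finset.univ.erase k, linearForm (n l) := by
    refine Finset.dvd_sum fun k hk ↦ ?_
    rw [← Finset.prod_pair hij (f := fun l ↦ linearForm (n l))]
    exact Finset.prod_dvd_prod_of_subset _ _ _ (by grind)
  have hF : ∑ k, ∏ l ∈ Finset.univ.erase k, linearForm (n l) =
      (linearForm (n i) + linearForm (n j)) * E + linearForm (n i) * linearForm (n j) * G := by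
    rw [← Finset.add_sum_erase _ _ (Finset.mem_univ i),
      ← Finset.add_sum_erase _ _ (a := j) (by simp [hij.symm]), hG, hi, hj]
    ring
  rw [hF]
  refine ⟨by simp [hiP, hjP], ?_⟩
  obtain ⟨t, ht⟩ := Function.ne_iff.mp hsum
  exact ⟨t, by simpa [hiP, hjP, hE] using ht⟩

lemma isHomogeneous_sum_prod_erase_linearForm {ι σ K : Type*} [Fintype ι] [DecidableEq ι]
    [Fintype σ] [Field K] (n : ι → σ → K) :
    (∑ k, ∏ l ∈ Finset.univ.erase k, linearForm (n l)).IsHomogeneous (Fintype.card ι - 1) := by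
  refine .sum _ _ _ fun k _ ↦ ?_
  simpa [Finset.card_erase_of_mem] using
    IsHomogeneous.prod (Finset.univ.erase k) _ _ fun l _ ↦ isHomogeneous_linearForm (n l)

lemma add_ne_zero_of_dotProduct {σ K : Type*} [Fintype σ] [NonUnitalNonAssocSemiring K]
    {u w v : σ → K} (hu : u ⬝ᵥ v = 0) (hw : w ⬝ᵥ v ≠ 0) : u + w ≠ 0 :=
  fun h ↦ hw (by simpa [add_dotProduct, hu] using congrArg (· ⬝ᵥ v) h)

lemma IsSmoothZero.ne_zero {σ K : Type*} [CommSemiring K] {F : MvPolynomial σ K} {v : σ → K}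
    (h : IsSmoothZero F v) : F ≠ 0 := by
  rintro rfl
  simp [IsSmoothZero] at h

namespace IsDualNet

variable {H K : Type*} [AddCommGroup H] [Field K] {a b c : H → Fin 3 → K}

theorem exists_smooth_cubic_of_card_eq_two (h : IsDualNet a b c) (hcard : Nat.card H = 2) :
    ∃ F : MvPolynomial (Fin 3) K, F ≠ 0 ∧ F.IsHomogeneous 3 ∧
      ∀ i, IsSmoothZero F (a i) ∧ IsSmoothZero F (b i) ∧ IsSmoothZero F (c i) := by
  classical
  have : Finite H := Nat.finite_of_card_ne_zero (by simp [hcard])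
  have : Nontrivial H := Finite.one_lt_card_iff_nontrivial.mp (by simp [hcard])
  have := Fintype.ofFinite H
  obtain ⟨x, y, hxy, hH⟩ := Nat.card_eq_two_iff.mp hcard
  have hmem (z : H) : z = x ∨ z = y := by simpa using hH.ge (Set.mem_univ z)
  let line (p : H × H) := a p.1 ⨯₃ b p.2
  let F : MvPolynomial (Fin 3) K := ∑ p, ∏ q ∈ Finset.univ.erase p, linearForm (line q)
  have ha (i : H) : IsSmoothZero F (a i) := by
    refine isSmoothZero_sum_prod_erase_linearForm (i := (i, x)) (j := (i, y)) (by simp [hxy])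
      (fun p ↦ ?_) (add_ne_zero_of_dotProduct (v := b x)
        (h.cross_dotProduct_right_eq_zero_iff.mpr rfl)
        (h.cross_dotProduct_right_eq_zero_iff.not.mpr hxy))
    rw [h.cross_dotProduct_left_eq_zero_iff]
    have := hmem p.2
    grind
  have hb (j : H) : IsSmoothZero F (b j) := by
    refine isSmoothZero_sum_prod_erase_linearForm (i := (x, j)) (j := (y, j)) (by simp [hxy])
      (fun p ↦ ?_) (add_ne_zero_of_dotProduct (v := a x)
        (h.cross_dotProduct_left_eq_zero_iff.mpr rfl)
        (h.cross_dotProduct_left_eq_zero_iff.not.mpr hxy))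
    rw [h.cross_dotProduct_right_eq_zero_iff]
    have := hmem p.1
    grind
  have hc (k : H) : IsSmoothZero F (c k) := by
    refine isSmoothZero_sum_prod_erase_linearForm (i := (x, -(x + k))) (j := (y, -(y + k)))
      (by simp [hxy]) (fun p ↦ ?_) (add_ne_zero_of_dotProduct (v := a x)
        (h.cross_dotProduct_left_eq_zero_iff.mpr rfl)
        (h.cross_dotProduct_left_eq_zero_iff.not.mpr hxy))
    rw [h.cross_dotProduct_third_eq_zero_iff, add_right_comm, add_comm, ← eq_neg_iff_add_eq_zero]
    have := hmem p.1
    grind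
  refine ⟨F, (ha 0).ne_zero, ?_, fun i ↦ ⟨ha i, hb i, hc i⟩⟩
  simpa [← Nat.card_eq_fintype_card, hcard] using isHomogeneous_sum_prod_erase_linearForm line

theorem exists_smooth_cubic [IsAddCyclic H] [Nontrivial H] [Infinite K] (h : IsDualNet a b c) :
    ∃ F : MvPolynomial (Fin 3) K, F ≠ 0 ∧ F.IsHomogeneous 3 ∧
      ∀ i, IsSmoothZero F (a i) ∧ IsSmoothZero F (b i) ∧ IsSmoothZero F (c i) := by
  classical
  obtain ⟨g, hg⟩ := IsAddCyclic.exists_generator (α := H)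
  have hg0 : g ≠ 0 := by
    rintro rfl
    obtain ⟨x, hx⟩ := exists_ne (0 : H)
    exact hx (by simpa using hg x)
  by_cases h2g : 2 • g = 0
  · refine h.exists_smooth_cubic_of_card_eq_two ?_
    rw [← addOrderOf_eq_card_of_forall_mem_zmultiples hg]
    exact addOrderOf_eq_prime h2g hg0
  · obtain ⟨F, hF0, hF, hzero⟩ := h.exists_cubic h2g
    have hvanish (x : H) : eval (a x) F = 0 ∧ eval (b x) F = 0 ∧ eval (c x) F = 0 := by
      obtain ⟨n, rfl⟩ := hg x
      exact hzero n
    choose ha hb hc using hvanish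
    have hs : Finset.card {0, g, -g} = 3 := by
      have hne : g ≠ -g := by rwa [ne_eq, eq_neg_iff_add_eq_zero, ← two_nsmul]
      simp [hg0.symm, hne, hg0]
    exact ⟨F, hF0, hF, fun x ↦ ⟨h.isSmoothZero_left hF0 hF ha hb hc hs x,
      h.rotate.isSmoothZero_left hF0 hF hb hc ha hs x,
      h.rotate.rotate.isSmoothZero_left hF0 hF hc ha hb hs x⟩⟩

end IsDualNet

lemma finrank_span_triple_le_two_iff {K : Type*} [Field K] (u v w : Fin 3 → K) :
    Module.finrank K (Submodule.span K {u, v, w}) ≤ 2 ↔ u ⬝ᵥ v ⨯₃ w = 0 := by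
  have hrange : {u, v, w} = Set.range ![u, v, w] := by
    simp only [range_cons, range_empty, Set.singleton_union, Set.union_empty]
  have hdet : u ⬝ᵥ v ⨯₃ w = (Matrix.of ![u, v, w]).det := triple_product_eq_det _ _ _
  have hindep : LinearIndependent K ![u, v, w] ↔ u ⬝ᵥ v ⨯₃ w ≠ 0 := by
    rw [hdet, ← isUnit_iff_ne_zero, ← isUnit_iff_isUnit_det]
    exact linearIndependent_rows_iff_isUnit (A := Matrix.of ![u, v, w])
  have hle := finrank_range_le_card (R := K) ![u, v, w]
  rw [← not_iff_not, ← ne_eq, ← hindep, linearIndependent_iff_card_eq_finrank_span, hrange]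
  rw [Fintype.card_fin, Set.finrank] at hle ⊢
  lia

theorem cyclic_realization_is_algebraic_general {H : Type} [AddCommGroup H] [IsAddCyclic H]
    [Nontrivial H] (p₁ p₂ p₃ : H → P2) (h : Realizes p₁ p₂ p₃) : AlgebraicOn p₁ p₂ p₃ := by
  obtain ⟨-, -, -, -, -, -, hcollin⟩ := h
  have hnet : IsDualNet (fun x ↦ (p₁ x).rep) (fun x ↦ (p₂ x).rep) (fun x ↦ (p₃ x).rep) :=
    fun x y z ↦ (finrank_span_triple_le_two_iff _ _ _).symm.trans (hcollin x y z)
  obtain ⟨F, hF0, hF, hsmooth⟩ := hnet.exists_smooth_cubic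
  refine ⟨F, hF0, hF, ?_⟩
  rintro _ ((⟨x, rfl⟩ | ⟨x, rfl⟩) | ⟨x, rfl⟩)
  exacts [(hsmooth x).1, (hsmooth x).2.1, (hsmooth x).2.2]

/-- Every 3-net in ℙ²(ℂ) realizing a cyclic group ℤ/mℤ (m ≥ 2) is
algebraic. -/
theorem cyclic_realization_is_algebraic (m : ℕ) (hm : 2 ≤ m)
    (p₁ p₂ p₃ : ZMod m → P2) (h : Realizes p₁ p₂ p₃) :
    AlgebraicOn p₁ p₂ p₃ := by
  have : Fact (1 < m) := ⟨hm⟩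
  exact cyclic_realization_is_algebraic_general p₁ p₂ p₃ h
end

section
/- Let H be a finite abelian group containing an element of order at least 10. Then every realization of H by a 3-net in ℙ²(ℂ) is algebraic: if p₁, p₂, p₃ : H → ℙ²(ℂ) are injective maps with pairwise disjoint images such that for all x,y,z ∈ H the points p₁(x), p₂(y), p₃(z) are collinear if and only if x+y+z = 0, then there exists a nonzero homogeneous cubic polynomial F ∈ ℂ[X,Y,Z] such that F vanishes at (representatives of) all points in the images of p₁, p₂, p₃, and the gradient of F is nonzero at a representative of each of these points. -/
/-!
Let `h` have order `n ≥ 10` and pick `b₁ + b₂ + b₃ = 0`. The points of the three cosets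
`bᵢ + ⟨h⟩` form a net realizing `ℤ / n`. Some cubic passes through nine of them, and by repeated
application of the Cayley–Bacharach theorem to triples of lines of the net it passes through all.

* If the cubic is irreducible, Bézout's bound shows that it is determined by the points of any one
  coset, so it is also the cubic of every triple of cosets sharing one with the first, and hence
  contains the whole net.
* If it is a line and an irreducible conic, one coset lies on the line and two lie on the conic.
  Either of the latter determines the conic by Bézout's bound, and also the line, on which Pascal's
  theorem places intersection points of chords of the conic. The whole net is again on this cubic.
* If every choice of cosets leads to three lines, each coset is collinear. The three lines are not
  concurrent in characteristic zero, and each coset is a geometric progression on its side of the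
  triangle. The direction of a progression determines the two vertices of the triangle on its line;
  comparing triangles that share a side shows that all cosets of a class lie on one line.

A singular net point would lie on four net lines, each meeting the cubic with multiplicity at
least four and therefore a component of it.
-/

namespace ThreeNet

open MvPolynomial Module
open scoped Matrix

/-! ### Homogeneous polynomials -/

section Homogeneous

variable {σ R : Type*} [CommRing R] {F G : MvPolynomial σ R} {d e : ℕ}

lemma eval_smul_of_isHomogeneous (hF : F.IsHomogeneous d) (c : R) (p : σ → R) :
    eval (c • p) F = c ^ d * eval p F := by
  rw [eval_eq, eval_eq, Finset.mul_sum]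
  refine Finset.sum_congr rfl fun m hm => ?_
  have hdeg : ∏ i ∈ m.support, c ^ m i = c ^ d := by
    rw [Finset.prod_pow_eq_pow_sum, hF.degree_eq_sum_deg_support hm]
  simp only [Pi.smul_apply, smul_eq_mul, mul_pow, Finset.prod_mul_distrib, hdeg]
  ring

lemma order_le_totalDegree (h0 : F ≠ 0) :
    (F : MvPowerSeries σ R).order ≤ F.totalDegree := by
  obtain ⟨m, hm⟩ := ne_zero_iff.1 h0
  refine (MvPowerSeries.order_le (d := m) (by simpa using hm)).trans ?_
  exact_mod_cast le_totalDegree (mem_support_iff.2 hm)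

lemma le_order_of_isHomogeneous (hF : F.IsHomogeneous d) :
    d ≤ (F : MvPowerSeries σ R).order :=
  MvPowerSeries.nat_le_order fun m hm => by
    rw [coeff_coe, hF.coeff_eq_zero hm.ne]

lemma isHomogeneous_of_totalDegree_le_order
    (h : F.totalDegree ≤ (F : MvPowerSeries σ R).order) : F.IsHomogeneous F.totalDegree := by
  intro m hm
  rw [Pi.one_def, ← Finsupp.degree_eq_weight_one]
  refine le_antisymm (le_totalDegree (mem_support_iff.2 hm)) ?_
  exact_mod_cast h.trans (MvPowerSeries.order_le (d := m) (by simpa using hm))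

/- Over a domain both the degree and the order are additive, and a polynomial is homogeneous
exactly when they agree. -/
lemma isHomogeneous_of_dvd [IsDomain R] (hF : F.IsHomogeneous d) (h0 : F ≠ 0) (h : G ∣ F) :
    G.IsHomogeneous G.totalDegree := by
  obtain ⟨K, rfl⟩ := h
  obtain ⟨hG0, hK0⟩ := mul_ne_zero_iff.1 h0
  have hdeg : d = G.totalDegree + K.totalDegree := by
    rw [← totalDegree_mul_of_isDomain hG0 hK0, hF.totalDegree h0]
  have hord := le_order_of_isHomogeneous hF
  rw [coe_mul, MvPowerSeries.order_mul, hdeg, Nat.cast_add] at hord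
  refine isHomogeneous_of_totalDegree_le_order ?_
  have hK := order_le_totalDegree hK0
  by_contra! hlt
  exact hord.not_gt <|
    ENat.add_lt_add_of_lt_of_le (ne_top_of_le_ne_top (ENat.natCast_ne_top _) hK) hlt hK

lemma isHomogeneous_of_mul_left [IsDomain R] (hG : G.IsHomogeneous e) (hG0 : G ≠ 0)
    (hF : (G * F).IsHomogeneous (e + d)) : F.IsHomogeneous d := by
  rcases eq_or_ne F 0 with rfl | hF0
  · exact isHomogeneous_zero _ _ _
  have hdeg := totalDegree_mul_of_isDomain hG0 hF0
  rw [hF.totalDegree (mul_ne_zero hG0 hF0), hG.totalDegree hG0, add_right_inj] at hdeg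
  exact hdeg ▸ isHomogeneous_of_dvd hF (mul_ne_zero hG0 hF0) (dvd_mul_left F G)

end Homogeneous

section Field

variable {σ K : Type*} [Field K] {F : MvPolynomial σ K} {d : ℕ}

lemma isUnit_iff_of_isHomogeneous (hF : F.IsHomogeneous d) (h0 : F ≠ 0) : IsUnit F ↔ d = 0 := by
  rw [isUnit_iff_totalDegree_of_isReduced, hF.totalDegree h0, isUnit_iff_ne_zero,
    and_iff_right_iff_imp]
  rintro rfl hcoeff
  rw [totalDegree_eq_zero_iff_eq_C.1 (hF.totalDegree h0), hcoeff, C_0] at h0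
  exact h0 rfl

lemma irreducible_of_isHomogeneous_one (hF : F.IsHomogeneous 1) (h0 : F ≠ 0) : Irreducible F := by
  refine irreducible_of_totalDegree_eq_one (hF.totalDegree h0) fun x hx => ?_
  obtain ⟨m, hm⟩ := ne_zero_iff.1 h0
  exact isUnit_iff_ne_zero.2 fun h => hm (zero_dvd_iff.1 (h ▸ hx m))

lemma exists_eq_mul_of_not_irreducible (hF : F.IsHomogeneous d) (hd : d ≠ 0) (h0 : F ≠ 0)
    (hi : ¬ Irreducible F) : ∃ a b, a + b = d ∧ a ≠ 0 ∧ b ≠ 0 ∧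
      ∃ G H : MvPolynomial σ K, G.IsHomogeneous a ∧ H.IsHomogeneous b ∧ F = G * H := by
  have hunit : ¬ IsUnit F := by rwa [isUnit_iff_of_isHomogeneous hF h0]
  obtain ⟨G, H, rfl, hG, hH⟩ : ∃ G H, F = G * H ∧ ¬ IsUnit G ∧ ¬ IsUnit H := by
    simpa [irreducible_iff, hunit] using hi
  obtain ⟨hG0, hH0⟩ := mul_ne_zero_iff.1 h0
  have hGh := isHomogeneous_of_dvd hF h0 (dvd_mul_right G H)
  have hHh := isHomogeneous_of_dvd hF h0 (dvd_mul_left H G)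
  rw [isUnit_iff_of_isHomogeneous hGh hG0] at hG
  rw [isUnit_iff_of_isHomogeneous hHh hH0] at hH
  exact ⟨_, _, (hGh.mul hHh).inj_right hF h0, hG, hH, G, H, hGh, hHh, rfl⟩

end Field

/- Both sides are additive in `F` and homogeneous cubics are spanned by the products
`X i * X j * X k`. -/
lemma eval_smul_add_smul_of_isHomogeneous_three {σ R : Type*} [Fintype σ] [CommRing R]
    {F : MvPolynomial σ R} (hF : F.IsHomogeneous 3) (a b : σ → R) (s t : R) :
    eval (s • a + t • b) F = s ^ 3 * eval a F + s ^ 2 * t * ∑ j, b j * eval a (pderiv j F) +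
      s * t ^ 2 * ∑ j, a j * eval b (pderiv j F) + t ^ 3 * eval b F := by
  classical
  rw [← mem_homogeneousSubmodule, ← homogeneousSubmodule_one_pow,
    homogeneousSubmodule_one_eq_span_X, Submodule.span_pow] at hF
  induction hF using Submodule.span_induction with
  | mem x hx =>
    obtain ⟨f, hf, rfl⟩ := Set.mem_pow_iff_prod.1 hx
    choose i hi using hf
    simp [Fin.prod_univ_three, ← hi, pderiv_X, Pi.single_apply, mul_add,
      apply_ite (eval a), apply_ite (eval b), Finset.sum_add_distrib]
    ring
  | zero => simp
  | add x y _ _ hx hy =>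
    simp only [map_add, hx, hy, mul_add, Finset.sum_add_distrib]
    ring
  | smul c x _ hx =>
    simp only [smul_eval, hx, Derivation.map_smul, mul_left_comm _ c, ← Finset.mul_sum]
    ring

section LinearForm

variable {σ R : Type*} [Fintype σ] [CommRing R]

/-- The homogeneous linear polynomial with coefficient vector `l`; for `σ = Fin 3` its zero set is
the line with dual coordinates `l`. -/
noncomputable def linearForm (l : σ → R) : MvPolynomial σ R := ∑ i, C (l i) * X i

@[simp]
lemma eval_linearForm (l p : σ → R) : eval p (linearForm l) = l ⬝ᵥ p := by
  simp [linearForm, dotProduct]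

lemma isHomogeneous_linearForm (l : σ → R) : (linearForm l).IsHomogeneous 1 :=
  .sum _ _ _ fun i _ => isHomogeneous_C_mul_X (l i) i

lemma linearForm_ne_zero {l : σ → R} (hl : l ≠ 0) :
    linearForm l ≠ 0 := by
  classical
  obtain ⟨i, hi⟩ := Function.ne_iff.1 hl
  exact fun h => hi (by simpa [h] using (eval_linearForm l (Pi.single i 1)).symm)

lemma exists_eq_linearForm {F : MvPolynomial σ R} (hF : F.IsHomogeneous 1) :
    ∃ l, F = linearForm l := by
  rw [← mem_homogeneousSubmodule, homogeneousSubmodule_one_eq_span_X,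
    Submodule.mem_span_range_iff_exists_fun] at hF
  obtain ⟨l, rfl⟩ := hF
  exact ⟨l, by simp only [linearForm, smul_eq_C_mul]⟩

end LinearForm

/-! ### Bézout's bound -/

section Dimension

variable {σ K ι : Type*} [Field K]

/-- Simultaneous evaluation of polynomials at a family of points. -/
noncomputable def evalAt (v : ι → σ → K) : MvPolynomial σ K →ₗ[K] ι → K :=
  LinearMap.pi fun i => (aeval (v i)).toLinearMap

@[simp]
lemma evalAt_apply (v : ι → σ → K) (F : MvPolynomial σ K) (i : ι) :
    evalAt v F i = eval (v i) F := by
  simp [evalAt, aeval_eq_eval]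

instance [Finite σ] (n : ℕ) : FiniteDimensional K (homogeneousSubmodule σ K n) :=
  Module.Finite.iff_fg.2 (homogeneousSubmodule_fg σ K n)

variable [Fintype σ] [Fintype ι]

lemma finrank_homogeneousSubmodule (n : ℕ) :
    finrank K (homogeneousSubmodule σ K n) = (Fintype.card σ + n - 1).choose n := by
  classical
  have hset : {d : σ →₀ ℕ | d.degree = n} = (Finset.univ : Finset σ).finsuppAntidiag n := by
    ext d
    simp [Finsupp.degree_eq_sum]
  let e := (LinearEquiv.ofEq _ _ (homogeneousSubmodule_eq_finsupp_supported σ K n)).trans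
    (AddMonoidAlgebra.supportedEquivFinsupp {d : σ →₀ ℕ | d.degree = n})
  rw [hset] at e
  rw [e.finrank_eq, Module.finrank_finsupp_self, ← Finset.card_univ (α := σ),
    ← Finset.card_finsuppAntidiag_nat_eq_choose]
  simp

lemma exists_form_eval_eq_zero (v : ι → σ → K) {d : ℕ}
    (h : Fintype.card ι < (Fintype.card σ + d - 1).choose d) :
    ∃ F : MvPolynomial σ K, F ≠ 0 ∧ F.IsHomogeneous d ∧ ∀ i, eval (v i) F = 0 := by
  have hker : LinearMap.ker ((evalAt v).domRestrict (homogeneousSubmodule σ K d)) ≠ ⊥ :=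
    LinearMap.ker_ne_bot_of_finrank_lt (by simpa [finrank_homogeneousSubmodule] using h)
  obtain ⟨F, hF, hF0⟩ := Submodule.exists_mem_ne_zero_of_ne_bot hker
  refine ⟨F, by simpa using hF0, F.2, fun i => ?_⟩
  simpa using congrFun (LinearMap.mem_ker.1 hF) i

lemma finrank_add_finrank_le_of_map_eq_top {V W : Type*} [AddCommGroup V] [Module K V]
    [AddCommGroup W] [Module K W] {f : V →ₗ[K] W} {A U : Submodule K V} [FiniteDimensional K U]
    (hAU : A ≤ U) (hA : A ≤ LinearMap.ker f) (hU : U.map f = ⊤) :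
    finrank K A + finrank K W ≤ finrank K U := by
  rw [← LinearMap.finrank_range_add_finrank_ker (f.domRestrict U), add_comm,
    LinearMap.range_domRestrict, hU, finrank_top, add_le_add_iff_left,
    ← (Submodule.comapSubtypeEquivOfLe hAU).finrank_eq]
  exact Submodule.finrank_mono fun x hx => hA hx

end Dimension

section Bezout

variable {K ι : Type*} [Field K] [Fintype ι]

lemma exists_dotProduct_eq_zero_ne_zero {u v : Fin 3 → K} (h : u ⨯₃ v ≠ 0) :
    ∃ l : Fin 3 → K, l ⬝ᵥ v = 0 ∧ l ⬝ᵥ u ≠ 0 := by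
  obtain ⟨i, hi⟩ := Function.ne_iff.1 h
  refine ⟨v ⨯₃ Pi.single i 1, by rw [dotProduct_comm, dot_self_cross], ?_⟩
  rwa [dotProduct_comm, triple_product_permutation, triple_product_permutation,
    single_one_dotProduct]

lemma exists_form_eval_ne_zero_iff [Nontrivial ι] {v : ι → Fin 3 → K}
    (hv : Pairwise fun i j => v i ⨯₃ v j ≠ 0) {n : ℕ} (hn : Fintype.card ι ≤ n + 1) (i : ι) :
    ∃ F : MvPolynomial (Fin 3) K, F.IsHomogeneous n ∧ ∀ j, eval (v j) F ≠ 0 ↔ j = i := by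
  classical
  choose! l hl using fun j (hj : i ≠ j) => exists_dotProduct_eq_zero_ne_zero (hv hj)
  obtain ⟨k, hk⟩ := exists_ne i
  refine ⟨linearForm (l k) ^ (n + 1 - Fintype.card ι) * ∏ j ∈ Finset.univ.erase i, linearForm (l j),
    ?_, fun j => ⟨?_, ?_⟩⟩
  · have hdeg : 1 * (n + 1 - Fintype.card ι) + ∑ _j ∈ Finset.univ.erase i, 1 = n := by
      have hpos := Fintype.card_pos_iff.2 ⟨i⟩
      rw [← Finset.card_eq_sum_ones, Finset.card_erase_of_mem (Finset.mem_univ i),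
        Finset.card_univ]
      omega
    have hhom := ((isHomogeneous_linearForm (l k)).pow (n + 1 - Fintype.card ι)).mul
      (IsHomogeneous.prod (Finset.univ.erase i) _ (fun _ => 1)
        fun j _ => isHomogeneous_linearForm (l j))
    rwa [hdeg] at hhom
  · contrapose
    intro hj
    rw [map_mul, map_prod, Finset.prod_eq_zero (Finset.mem_erase.2 ⟨hj, Finset.mem_univ j⟩),
      mul_zero]
    rw [eval_linearForm, (hl j (Ne.symm hj)).1]
  · rintro rfl
    rw [map_mul, map_pow, map_prod, mul_ne_zero_iff, Finset.prod_ne_zero_iff]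
    refine ⟨pow_ne_zero _ ?_, fun j hj => ?_⟩
    · simpa using (hl k hk.symm).2
    · simpa using (hl j (Finset.ne_of_mem_erase hj).symm).2

lemma map_evalAt_homogeneousSubmodule [Nontrivial ι] {v : ι → Fin 3 → K}
    (hv : Pairwise fun i j => v i ⨯₃ v j ≠ 0) {n : ℕ} (hn : Fintype.card ι ≤ n + 1) :
    (homogeneousSubmodule (Fin 3) K n).map (evalAt v) = ⊤ := by
  classical
  rw [eq_top_iff, ← (Pi.basisFun K ι).span_eq, Submodule.span_le]
  rintro _ ⟨i, rfl⟩
  obtain ⟨F, hF, hFv⟩ := exists_form_eval_ne_zero_iff hv hn i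
  refine ⟨(eval (v i) F)⁻¹ • F, Submodule.smul_mem _ _ hF, funext fun j => ?_⟩
  rcases eq_or_ne j i with rfl | hj
  · simp [(hFv j).2 rfl]
  · simp [not_ne_iff.1 (mt (hFv j).1 hj), hj]

lemma choose_two_add_choose_two (m d e : ℕ) :
    (m + d + e + 2).choose 2 + (m + 2).choose 2 =
      (m + d + 2).choose 2 + (m + e + 2).choose 2 + d * e := by
  induction d with
  | zero => simp [add_comm]
  | succ d ih =>
    have hsucc (n : ℕ) : (n + 1).choose 2 = n + n.choose 2 := by
      rw [Nat.choose_succ_succ', Nat.choose_one_right]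
    rw [show m + (d + 1) + e + 2 = m + d + e + 2 + 1 by ring,
      show m + (d + 1) + 2 = m + d + 2 + 1 by ring, hsucc, hsucc (m + d + 2)]
    linarith

lemma finrank_homogeneousSubmodule_fin_three (n : ℕ) :
    finrank K (homogeneousSubmodule (Fin 3) K n) = (n + 2).choose 2 := by
  rw [finrank_homogeneousSubmodule, Fintype.card_fin, show 3 + n - 1 = n + 2 by omega,
    Nat.choose_symm_add]

variable {F G : MvPolynomial (Fin 3) K} {d e : ℕ}

lemma map_mulLeft_inf_map_mulLeft_le (hF : F.IsHomogeneous e) (hp : Prime F) (hdvd : ¬ F ∣ G)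
    (m : ℕ) (U : Submodule K (MvPolynomial (Fin 3) K)) :
    U.map (LinearMap.mulLeft K F) ⊓
        (homogeneousSubmodule (Fin 3) K (e + m)).map (LinearMap.mulLeft K G) ≤
      (homogeneousSubmodule (Fin 3) K m).map (LinearMap.mulLeft K (G * F)) := by
  rintro _ ⟨⟨A, -, rfl⟩, B, hB, hAB⟩
  simp only [LinearMap.mulLeft_apply] at hAB
  obtain ⟨k, rfl⟩ := (hp.dvd_or_dvd ⟨A, hAB⟩).resolve_left hdvd
  exact ⟨k, isHomogeneous_of_mul_left hF hp.ne_zero hB, by simp [← hAB]⟩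

lemma map_mulLeft_homogeneousSubmodule_le (hF : F.IsHomogeneous e) {m n : ℕ} (h : e + m = n) :
    (homogeneousSubmodule (Fin 3) K m).map (LinearMap.mulLeft K F) ≤
      homogeneousSubmodule (Fin 3) K n := by
  rintro _ ⟨P, hP, rfl⟩
  exact h ▸ hF.mul hP

lemma finrank_map_mulLeft (hF : F ≠ 0) (U : Submodule K (MvPolynomial (Fin 3) K)) :
    finrank K (U.map (LinearMap.mulLeft K F)) = finrank K U :=
  (Submodule.equivMapOfInjective _ (mul_right_injective₀ hF) U).finrank_eq.symm

/- If `F ∤ G`, the forms `F A + G B` of a large degree `N` have codimension exactly `d e` in all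
forms of degree `N`, while vanishing at `n` points imposes `n` independent conditions on them. -/
theorem dvd_of_card_common_zeros (hF : F.IsHomogeneous e) (hi : Irreducible F)
    (hG : G.IsHomogeneous d) {v : ι → Fin 3 → K} (hv : Pairwise fun i j => v i ⨯₃ v j ≠ 0)
    (hcard : d * e < Fintype.card ι) (hFv : ∀ i, eval (v i) F = 0) (hGv : ∀ i, eval (v i) G = 0) :
    F ∣ G := by
  by_contra hdvd
  have hG0 : G ≠ 0 := by rintro rfl; exact hdvd (dvd_zero F)
  have he : e ≠ 0 := fun h => hi.not_isUnit ((isUnit_iff_of_isHomogeneous hF hi.ne_zero).2 h)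
  obtain ⟨i⟩ : Nonempty ι := Fintype.card_pos_iff.1 (by omega)
  have hd : d ≠ 0 := fun h => by
    simpa [hGv i] using ((isUnit_iff_of_isHomogeneous hG hG0).2 h).map (eval (v i))
  have : Nontrivial ι := Fintype.one_lt_card_iff_nontrivial.1 <|
    lt_of_le_of_lt (Nat.one_le_iff_ne_zero.2 (mul_ne_zero hd he)) hcard
  set m := Fintype.card ι
  set A := (homogeneousSubmodule (Fin 3) K (d + m)).map (LinearMap.mulLeft K F)
  set B := (homogeneousSubmodule (Fin 3) K (e + m)).map (LinearMap.mulLeft K G)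
  have hinf : finrank K ↥(A ⊓ B) ≤ (m + 2).choose 2 := by
    refine (Submodule.finrank_mono (map_mulLeft_inf_map_mulLeft_le hF hi.prime hdvd m _)).trans ?_
    rw [finrank_map_mulLeft (mul_ne_zero hG0 hi.ne_zero), finrank_homogeneousSubmodule_fin_three]
  have hsup : finrank K ↥(A ⊔ B) + m ≤ (m + d + e + 2).choose 2 := by
    have hle : A ⊔ B ≤ homogeneousSubmodule (Fin 3) K (m + d + e) :=
      sup_le (map_mulLeft_homogeneousSubmodule_le hF (by ring))
        (map_mulLeft_homogeneousSubmodule_le hG (by ring))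
    have hker : A ⊔ B ≤ LinearMap.ker (evalAt v) := by
      refine sup_le ?_ ?_ <;> rintro _ ⟨P, _, rfl⟩ <;> ext i <;> simp [hFv, hGv]
    simpa [finrank_homogeneousSubmodule_fin_three] using finrank_add_finrank_le_of_map_eq_top
      hle hker (map_evalAt_homogeneousSubmodule hv (by omega))
  have hsum := Submodule.finrank_sup_add_finrank_inf_eq A B
  rw [finrank_map_mulLeft hi.ne_zero, finrank_map_mulLeft hG0,
    finrank_homogeneousSubmodule_fin_three, finrank_homogeneousSubmodule_fin_three] at hsum
  have hchoose := choose_two_add_choose_two m d e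
  rw [add_comm d m, add_comm e m] at hsum
  omega

end Bezout

/-! ### Lines of the projective plane -/

section Plane

variable {K : Type*} [Field K] {u v w l : Fin 3 → K}

lemma ne_zero_of_cross_ne_zero_left (h : u ⨯₃ v ≠ 0) : u ≠ 0 := by
  rintro rfl
  simp at h

lemma cross_ne_zero_symm (h : u ⨯₃ v ≠ 0) : v ⨯₃ u ≠ 0 := by
  rwa [← cross_anticomm, neg_ne_zero]

lemma exists_smul_eq_of_cross_eq_zero (hu : u ≠ 0) (h : u ⨯₃ v = 0) : ∃ c : K, c • u = v := by
  by_contra! hc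
  exact crossProduct_ne_zero_iff_linearIndependent.2 ((LinearIndependent.pair_iff' hu).2 hc) h

lemma exists_smul_cross_eq (h : u ⨯₃ v ≠ 0) (hu : l ⬝ᵥ u = 0) (hv : l ⬝ᵥ v = 0) :
    ∃ c : K, c • u ⨯₃ v = l := by
  refine exists_smul_eq_of_cross_eq_zero h ?_
  rw [cross_cross_eq_smul_sub_smul, dotProduct_comm u, dotProduct_comm v, hu, hv]
  simp

lemma dotProduct_cross_eq_zero (hl : l ≠ 0) (hu : l ⬝ᵥ u = 0) (hv : l ⬝ᵥ v = 0)
    (hw : l ⬝ᵥ w = 0) : u ⬝ᵥ v ⨯₃ w = 0 := by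
  by_cases h : v ⨯₃ w = 0
  · rw [h, dotProduct_zero]
  obtain ⟨c, rfl⟩ := exists_smul_cross_eq h hv hw
  rw [smul_dotProduct, smul_eq_mul, dotProduct_comm] at hu
  exact (mul_eq_zero.1 hu).resolve_left (left_ne_zero_of_smul hl)

lemma exists_smul_add_smul_eq (h : u ⨯₃ v ≠ 0) (hw : w ⬝ᵥ u ⨯₃ v = 0) :
    ∃ a b : K, a • u + b • v = w := by
  have hli := crossProduct_ne_zero_iff_linearIndependent.1 h
  have hmem : w ∈ Submodule.span K (Set.range ![u, v]) := by
    by_contra hmem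
    have hrows := Matrix.linearIndependent_rows_iff_isUnit.1
      (linearIndependent_finCons.2 ⟨hli, hmem⟩)
    rw [triple_product_eq_det] at hw
    exact ((Matrix.isUnit_iff_isUnit_det _).1 hrows).ne_zero hw
  simpa only [Matrix.range_cons_cons_empty, Submodule.mem_span_pair] using hmem

end Plane

section Divisibility

variable {K : Type*} [Field K] {F : MvPolynomial (Fin 3) K} {d : ℕ} {a b c l : Fin 3 → K}

lemma pairwise_cross_vecCons {n : ℕ} {v : Fin n → Fin 3 → K} (ha : ∀ i, a ⨯₃ v i ≠ 0)
    (hv : Pairwise fun i j => v i ⨯₃ v j ≠ 0) :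
    Pairwise fun i j => Matrix.vecCons a v i ⨯₃ Matrix.vecCons a v j ≠ 0 := by
  intro i j hij
  cases i using Fin.cases <;> cases j using Fin.cases
  · exact absurd rfl hij
  · exact ha _
  · exact cross_ne_zero_symm (ha _)
  · exact hv fun h => hij (congrArg Fin.succ h)

lemma pairwise_cross_triple (hab : a ⨯₃ b ≠ 0) (hac : a ⨯₃ c ≠ 0) (hbc : b ⨯₃ c ≠ 0) :
    Pairwise fun i j => ![a, b, c] i ⨯₃ ![a, b, c] j ≠ 0 := by
  refine pairwise_cross_vecCons (by simp [Fin.forall_fin_two, hab, hac]) ?_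
  exact pairwise_cross_vecCons (by simpa using hbc) (Subsingleton.pairwise)

lemma linearForm_dvd_of_card_zeros {ι : Type*} [Fintype ι] (hF : F.IsHomogeneous d) (hl : l ≠ 0)
    {v : ι → Fin 3 → K} (hv : Pairwise fun i j => v i ⨯₃ v j ≠ 0) (hcard : d < Fintype.card ι)
    (hlv : ∀ i, l ⬝ᵥ v i = 0) (hFv : ∀ i, eval (v i) F = 0) : linearForm l ∣ F :=
  dvd_of_card_common_zeros (isHomogeneous_linearForm l)
    (irreducible_of_isHomogeneous_one (isHomogeneous_linearForm l) (linearForm_ne_zero hl)) hF hv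
    (by rwa [mul_one]) (by simpa using hlv) hFv

lemma exists_eq_linearForm_mul {ι : Type*} [Fintype ι] (hF : F.IsHomogeneous (d + 1))
    (hl : l ≠ 0) {v : ι → Fin 3 → K} (hv : Pairwise fun i j => v i ⨯₃ v j ≠ 0)
    (hcard : d + 1 < Fintype.card ι) (hlv : ∀ i, l ⬝ᵥ v i = 0) (hFv : ∀ i, eval (v i) F = 0) :
    ∃ G, G.IsHomogeneous d ∧ F = linearForm l * G := by
  obtain ⟨G, rfl⟩ := linearForm_dvd_of_card_zeros hF hl hv hcard hlv hFv
  exact ⟨G, isHomogeneous_of_mul_left (isHomogeneous_linearForm l) (linearForm_ne_zero hl)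
    (add_comm d 1 ▸ hF), rfl⟩

lemma linearForm_cross_dvd [Infinite K] (hF : F.IsHomogeneous d) (hab : a ⨯₃ b ≠ 0)
    (h : ∀ s t : K, eval (s • a + t • b) F = 0) : linearForm (a ⨯₃ b) ∣ F := by
  let τ : Fin (d + 1) → K := fun i => Infinite.natEmbedding K i
  refine linearForm_dvd_of_card_zeros hF hab (v := fun i => (1 : K) • a + τ i • b)
    (fun i j hij => ?_) (by simp) (fun i => ?_) fun i => h _ _
  · have hcross : ((1 : K) • a + τ i • b) ⨯₃ ((1 : K) • a + τ j • b) = (τ j - τ i) • a ⨯₃ b := by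
      simp only [map_add, map_smul, LinearMap.add_apply, LinearMap.smul_apply, cross_self,
        ← cross_anticomm a b]
      module
    refine hcross.trans_ne (smul_ne_zero (sub_ne_zero.2 fun hτ => hij ?_) hab)
    exact Fin.ext ((Infinite.natEmbedding K).injective hτ.symm)
  · simp [dotProduct_comm]

lemma dotProduct_cross_ne_zero_of_irreducible_conic (hF : F.IsHomogeneous 2) (hi : Irreducible F)
    (hab : a ⨯₃ b ≠ 0) (hac : a ⨯₃ c ≠ 0) (hbc : b ⨯₃ c ≠ 0) (ha : eval a F = 0)
    (hb : eval b F = 0) (hc : eval c F = 0) : a ⬝ᵥ b ⨯₃ c ≠ 0 := by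
  intro hcol
  obtain ⟨G, hG, rfl⟩ := exists_eq_linearForm_mul hF hbc
    (pairwise_cross_triple hab hac hbc) (by simp)
    (by simp [Fin.forall_fin_succ, dotProduct_comm (b ⨯₃ c), hcol])
    (by simp [Fin.forall_fin_succ, ha, hb, hc])
  have hG0 := right_ne_zero_of_mul hi.ne_zero
  rcases hi.isUnit_or_isUnit rfl with h | h
  · simpa using (isUnit_iff_of_isHomogeneous (isHomogeneous_linearForm _)
      (linearForm_ne_zero hbc)).1 h
  · simpa using (isUnit_iff_of_isHomogeneous hG hG0).1 h

/- The restriction of the cubic to the line `a b` vanishes doubly at `a` and at two further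
points. -/
lemma linearForm_cross_dvd_of_pderiv_eq_zero [Infinite K] (hF : F.IsHomogeneous 3)
    (ha : eval a F = 0) (hsing : ∀ j, eval a (pderiv j F) = 0) (hab : a ⨯₃ b ≠ 0)
    (hac : a ⨯₃ c ≠ 0) (hbc : b ⨯₃ c ≠ 0) (hcol : c ⬝ᵥ a ⨯₃ b = 0) (hb : eval b F = 0)
    (hc : eval c F = 0) : linearForm (a ⨯₃ b) ∣ F := by
  have heval (s t : K) : eval (s • a + t • b) F = s * t ^ 2 * ∑ j, a j * eval b (pderiv j F) := by
    simp [eval_smul_add_smul_of_isHomogeneous_three hF, ha, hsing, hb]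
  obtain ⟨s, t, rfl⟩ := exists_smul_add_smul_eq hab hcol
  have hs : s ≠ 0 := by rintro rfl; simp at hbc
  have ht : t ≠ 0 := by rintro rfl; simp at hac
  have hL : ∑ j, a j * eval b (pderiv j F) = 0 := by simpa [heval, hs, ht] using hc
  exact linearForm_cross_dvd hF hab fun s t => by rw [heval, hL, mul_zero]

lemma exists_linearForm_mul_of_isHomogeneous_three (hF : F.IsHomogeneous 3) (h0 : F ≠ 0)
    (hi : ¬ Irreducible F) : ∃ l Q, Q.IsHomogeneous 2 ∧ F = linearForm l * Q := by
  obtain ⟨m, n, hmn, hm, hn, G, H, hG, hH, rfl⟩ :=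
    exists_eq_mul_of_not_irreducible hF (by simp) h0 hi
  obtain ⟨rfl, rfl⟩ | ⟨rfl, rfl⟩ : m = 1 ∧ n = 2 ∨ m = 2 ∧ n = 1 := by omega
  · obtain ⟨l, rfl⟩ := exists_eq_linearForm hG
    exact ⟨l, H, hH, rfl⟩
  · obtain ⟨l, rfl⟩ := exists_eq_linearForm hH
    exact ⟨l, G, hG, mul_comm _ _⟩

lemma exists_linearForm_mul_linearForm_of_isHomogeneous_two (hF : F.IsHomogeneous 2) (h0 : F ≠ 0)
    (hi : ¬ Irreducible F) : ∃ l m, F = linearForm l * linearForm m := by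
  obtain ⟨m, n, hmn, hm, hn, G, H, hG, hH, rfl⟩ :=
    exists_eq_mul_of_not_irreducible hF (by simp) h0 hi
  obtain ⟨rfl, rfl⟩ : m = 1 ∧ n = 1 := by omega
  obtain ⟨l, rfl⟩ := exists_eq_linearForm hG
  obtain ⟨m, rfl⟩ := exists_eq_linearForm hH
  exact ⟨l, m, rfl⟩

end Divisibility

section CayleyBacharach

variable {K : Type*} [Field K] {a b c : Fin 3 → Fin 3 → K}

lemma exists_forall_cross_dotProduct_ne_zero [Infinite K] (ha : Pairwise fun i j => a i ⨯₃ a j ≠ 0)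
    (ha' : a 2 ⬝ᵥ a 0 ⨯₃ a 1 = 0) (hab : ∀ i, b i ⬝ᵥ a 0 ⨯₃ a 1 ≠ 0) :
    ∃ w, w ⬝ᵥ a 0 ⨯₃ a 1 = 0 ∧ ∀ i, a i ⨯₃ b i ⬝ᵥ w ≠ 0 := by
  have h01 : a 0 ⨯₃ a 1 ≠ 0 := ha (by decide)
  have hal (i : Fin 3) : a 0 ⨯₃ a 1 ⬝ᵥ a i = 0 := by
    fin_cases i <;> simp [dotProduct_comm, ha']
  by_contra! hw
  have hdvd : linearForm (a 0 ⨯₃ a 1) ∣ ∏ i, linearForm (a i ⨯₃ b i) := by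
    refine linearForm_cross_dvd
      (IsHomogeneous.prod _ _ _ fun i _ => isHomogeneous_linearForm _) h01 fun s t => ?_
    obtain ⟨i, hi⟩ := hw (s • a 0 + t • a 1) (by simp)
    rw [map_prod, Finset.prod_eq_zero (Finset.mem_univ i) (by rwa [eval_linearForm])]
  obtain ⟨i, -, G, hG⟩ := ((irreducible_of_isHomogeneous_one (isHomogeneous_linearForm _)
    (linearForm_ne_zero h01)).prime.dvd_finsetProd_iff _).1 hdvd
  have hline (j : Fin 3) : a i ⨯₃ b i ⬝ᵥ a j = 0 := by
    rw [← eval_linearForm, hG, map_mul, eval_linearForm, hal, zero_mul]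
  obtain ⟨r, hr⟩ := exists_smul_cross_eq h01 (hline 0) (hline 1)
  have hr0 : r = 0 := by
    have hb : r • a 0 ⨯₃ a 1 ⬝ᵥ b i = 0 := by rw [hr, dotProduct_comm, dot_cross_self]
    rw [smul_dotProduct, dotProduct_comm] at hb
    exact (smul_eq_zero.1 hb).resolve_right (hab i)
  rw [hr0, zero_smul] at hr
  have hai : a i ≠ 0 := by
    obtain ⟨j, hj⟩ := exists_ne i
    exact ne_zero_of_cross_ne_zero_left (ha hj.symm)
  obtain ⟨t, ht⟩ := exists_smul_eq_of_cross_eq_zero hai hr.symm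
  exact hab i (by rw [← ht, smul_dotProduct, dotProduct_comm, hal, smul_zero])

lemma eval_eq_zero_of_rows {F : MvPolynomial (Fin 3) K} (hF : F.IsHomogeneous 3)
    {w : Fin 3 → K} (hwa : ∀ i, w ⨯₃ a i ≠ 0) (ha : Pairwise fun i j => a i ⨯₃ a j ≠ 0)
    (hb : Pairwise fun i j => b i ⨯₃ b j ≠ 0) (hc : c 0 ⨯₃ c 1 ≠ 0) (hw : w ⬝ᵥ a 0 ⨯₃ a 1 = 0)
    (ha' : a 2 ⬝ᵥ a 0 ⨯₃ a 1 = 0) (hb' : b 2 ⬝ᵥ b 0 ⨯₃ b 1 = 0) (hc' : c 2 ⬝ᵥ c 0 ⨯₃ c 1 = 0)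
    (hba : ∀ i, b i ⬝ᵥ a 0 ⨯₃ a 1 ≠ 0) (hca : ∀ i ≠ 2, c i ⬝ᵥ a 0 ⨯₃ a 1 ≠ 0)
    (hcb : ∀ i ≠ 2, c i ⬝ᵥ b 0 ⨯₃ b 1 ≠ 0) (hFw : eval w F = 0) (hFa : ∀ i, eval (a i) F = 0)
    (hFb : ∀ i, eval (b i) F = 0) (hFc : ∀ i ≠ 2, eval (c i) F = 0) : eval (c 2) F = 0 := by
  obtain ⟨G, hG, rfl⟩ := exists_eq_linearForm_mul hF (ha (by decide : (0 : Fin 3) ≠ 1))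
    (pairwise_cross_vecCons hwa ha) (by simp)
    (by simp [Fin.forall_fin_succ, dotProduct_comm (a 0 ⨯₃ a 1), ha', hw])
    (Fin.cons hFw hFa)
  simp only [map_mul, eval_linearForm, dotProduct_comm (a 0 ⨯₃ a 1), mul_eq_zero] at hFb hFc ⊢
  obtain ⟨H, hH, rfl⟩ := exists_eq_linearForm_mul hG (hb (by decide : (0 : Fin 3) ≠ 1)) hb
    (by simp) (by simp [Fin.forall_fin_succ, dotProduct_comm (b 0 ⨯₃ b 1), hb'])
    fun i => (hFb i).resolve_left (hba i)
  simp only [map_mul, eval_linearForm, dotProduct_comm (b 0 ⨯₃ b 1), mul_eq_zero] at hFc ⊢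
  obtain ⟨l, rfl⟩ := exists_eq_linearForm hH
  have hl (i) (hi : i ≠ 2) : l ⬝ᵥ c i = 0 := by
    simpa using ((hFc i hi).resolve_left (hca i hi)).resolve_left (hcb i hi)
  obtain ⟨s, t, hst⟩ := exists_smul_add_smul_eq hc hc'
  exact .inr (.inr (by simp [← hst, hl]))

/- With `M` the product of the three columns, `F - r M` vanishes at a fourth point `w` of the row
`a` for a suitable `r`, so that row and then the row `b` split off. -/
theorem cayley_bacharach [Infinite K] {F : MvPolynomial (Fin 3) K} (hF : F.IsHomogeneous 3)
    (ha : Pairwise fun i j => a i ⨯₃ a j ≠ 0) (hb : Pairwise fun i j => b i ⨯₃ b j ≠ 0)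
    (hc : c 0 ⨯₃ c 1 ≠ 0) (ha' : a 2 ⬝ᵥ a 0 ⨯₃ a 1 = 0) (hb' : b 2 ⬝ᵥ b 0 ⨯₃ b 1 = 0)
    (hc' : c 2 ⬝ᵥ c 0 ⨯₃ c 1 = 0) (hcol : ∀ i, c i ⬝ᵥ a i ⨯₃ b i = 0)
    (hba : ∀ i, b i ⬝ᵥ a 0 ⨯₃ a 1 ≠ 0) (hca : ∀ i ≠ 2, c i ⬝ᵥ a 0 ⨯₃ a 1 ≠ 0)
    (hcb : ∀ i ≠ 2, c i ⬝ᵥ b 0 ⨯₃ b 1 ≠ 0) (hFa : ∀ i, eval (a i) F = 0)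
    (hFb : ∀ i, eval (b i) F = 0) (hFc : ∀ i ≠ 2, eval (c i) F = 0) : eval (c 2) F = 0 := by
  obtain ⟨w, hw, hwcol⟩ := exists_forall_cross_dotProduct_ne_zero ha ha' hba
  have hwa (i) : w ⨯₃ a i ≠ 0 := fun h => by
    obtain ⟨j, hj⟩ := exists_ne i
    obtain ⟨s, hs⟩ := exists_smul_eq_of_cross_eq_zero
      (ne_zero_of_cross_ne_zero_left (ha hj.symm)) (by rw [← cross_anticomm, h, neg_zero])
    exact hwcol i (by rw [← hs, dotProduct_smul, dotProduct_comm, dot_self_cross, smul_zero])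
  set M := ∏ i, linearForm (a i ⨯₃ b i) with hM
  have hMh : M.IsHomogeneous 3 := by
    simpa using IsHomogeneous.prod Finset.univ _ _ fun i _ => isHomogeneous_linearForm (a i ⨯₃ b i)
  have hMeval (p) : eval p M = ∏ i, a i ⨯₃ b i ⬝ᵥ p := by simp [hM, map_prod]
  have hMzero {p} (i : Fin 3) (hp : p ⬝ᵥ a i ⨯₃ b i = 0) : eval p M = 0 := by
    rw [hMeval, Finset.prod_eq_zero (Finset.mem_univ i) (by rwa [dotProduct_comm])]
  have hMa (i) : eval (a i) M = 0 := hMzero i (dot_self_cross _ _)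
  have hMb (i) : eval (b i) M = 0 := hMzero i (dot_cross_self _ _)
  have hMc (i) : eval (c i) M = 0 := hMzero i (hcol i)
  have hMw : eval w M ≠ 0 := by rw [hMeval]; exact Finset.prod_ne_zero_iff.2 fun i _ => hwcol i
  set r := eval w F / eval w M with hr
  have hzero := eval_eq_zero_of_rows (F := F - C r * M) (hF.sub (hMh.C_mul r)) hwa ha hb hc hw
    ha' hb' hc' hba hca hcb (by simp [hr, hMw]) (by simp [hFa, hMa]) (by simp [hFb, hMb])
    fun i hi => by simp [hFc i hi, hMc]
  simpa [hMc] using hzero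

end CayleyBacharach

/-! ### Nets -/

section Net

variable {K H : Type*} [Field K] [AddCommGroup H]

/-- The dual of a 3-net realizing `H`, in homogeneous coordinates: the points `P 0 x`, `P 1 y`,
`P 2 z` of the three classes are collinear exactly when `x + y + z = 0`. -/
structure IsNet (P : Fin 3 → H → Fin 3 → K) : Prop where
  cross_ne_zero : ∀ {i j x y}, (i, x) ≠ (j, y) → P i x ⨯₃ P j y ≠ 0
  collinear_iff : ∀ {x y z}, P 0 x ⬝ᵥ P 1 y ⨯₃ P 2 z = 0 ↔ x + y + z = 0

lemma sum_fin_three_eq {M : Type*} [AddCommMonoid M] (c : Fin 3 → M) (l : Fin 3) :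
    ∑ i, c i = c l + c (l + 1) + c (l + 2) := by
  rw [Fin.sum_univ_three]
  fin_cases l
  · rfl
  · exact add_rotate (c 0) (c 1) (c 2)
  · exact (add_rotate (c 2) (c 0) (c 1)).symm

lemma exists_ne_and_ne (i j : Fin 3) : ∃ k, k ≠ i ∧ k ≠ j := by
  decide +revert

lemma exists_sum_eq_zero {i j k : Fin 3} (hij : i ≠ j) (hik : i ≠ k) (hjk : j ≠ k) (x y : H) :
    ∃ c : Fin 3 → H, ∑ l, c l = 0 ∧ c i = x ∧ c j = y ∧ c k = -(x + y) := by
  have huniv : (Finset.univ : Finset (Fin 3)) = {i, j, k} := by decide +revert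
  refine ⟨fun l => if l = i then x else if l = j then y else -(x + y), ?_, ?_⟩
  · rw [huniv, Finset.sum_insert (by simp [hij, hik]), Finset.sum_pair hjk]
    simp only [hij.symm, hik.symm, hjk.symm, if_true, if_false]
    abel
  · simp [hij.symm, hik.symm, hjk.symm]

namespace IsNet

variable {P : Fin 3 → H → Fin 3 → K}

lemma collinear_iff_add (hP : IsNet P) (l : Fin 3) {x y z : H} :
    P l x ⬝ᵥ P (l + 1) y ⨯₃ P (l + 2) z = 0 ↔ x + y + z = 0 := by
  fin_cases l
  · exact hP.collinear_iff
  · rw [← triple_product_permutation, add_rotate, add_rotate]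
    exact hP.collinear_iff
  · rw [triple_product_permutation, add_rotate]
    exact hP.collinear_iff

variable {c : Fin 3 → H} {i j l : Fin 3}

lemma mem_line (hP : IsNet P) (hc : ∑ l, c l = 0) :
    P l (c l) ⬝ᵥ P i (c i) ⨯₃ P j (c j) = 0 := by
  have hcol : P l (c l) ⬝ᵥ P (l + 1) (c (l + 1)) ⨯₃ P (l + 2) (c (l + 2)) = 0 := by
    rwa [hP.collinear_iff_add, ← sum_fin_three_eq]
  have hcases : ∀ i j l : Fin 3, i = j ∨ l = i ∨ l = j ∨
      (i = l + 1 ∧ j = l + 2) ∨ (i = l + 2 ∧ j = l + 1) := by decide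
  obtain rfl | rfl | rfl | ⟨rfl, rfl⟩ | ⟨rfl, rfl⟩ := hcases i j l
  · rw [cross_self, dotProduct_zero]
  · exact dot_self_cross _ _
  · exact dot_cross_self _ _
  · exact hcol
  · rw [← cross_anticomm, dotProduct_neg, hcol, neg_zero]

lemma mem_line_iff (hP : IsNet P) (hc : ∑ l, c l = 0) (hij : i ≠ j) {x : H} :
    P l x ⬝ᵥ P i (c i) ⨯₃ P j (c j) = 0 ↔ x = c l := by
  refine ⟨fun h => ?_, fun h => h ▸ hP.mem_line hc⟩
  have hline (m) : P i (c i) ⨯₃ P j (c j) ⬝ᵥ P m (c m) = 0 := by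
    rw [dotProduct_comm, hP.mem_line hc]
  have hsum := (hP.collinear_iff_add l).1 <| dotProduct_cross_eq_zero
    (hP.cross_ne_zero (by simp [hij])) (by rwa [dotProduct_comm]) (hline (l + 1)) (hline (l + 2))
  rw [sum_fin_three_eq c l, add_assoc] at hc
  rw [add_assoc] at hsum
  exact add_right_cancel (hsum.trans hc.symm)

end IsNet

/-- A net realizing `ℤ / n`, with its classes indexed periodically by integers. -/
structure IsCyclicNet (n : ℕ) (u : Fin 3 → ℤ → Fin 3 → K) : Prop where
  periodic : ∀ i, (u i).Periodic n
  cross_ne_zero : ∀ {i j r s}, (i ≠ j ∨ ¬ (n : ℤ) ∣ r - s) → u i r ⨯₃ u j s ≠ 0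
  mem_line_iff : ∀ {c : Fin 3 → ℤ} {i j l : Fin 3} {r : ℤ}, ∑ l, c l = 0 → i ≠ j →
    (u l r ⬝ᵥ u i (c i) ⨯₃ u j (c j) = 0 ↔ (n : ℤ) ∣ r - c l)

/-- The points of the three cosets `b i + ⟨h⟩`, one in each class. -/
def cosetPoints {X : Type*} (P : Fin 3 → H → X) (h : H) (b : Fin 3 → H) (i : Fin 3) (r : ℤ) : X :=
  P i (b i + r • h)

@[simp]
lemma cosetPoints_zero {X : Type*} (P : Fin 3 → H → X) (h : H) (b : Fin 3 → H) (i : Fin 3) :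
    cosetPoints P h b i 0 = P i (b i) := by
  simp [cosetPoints]

lemma IsNet.isCyclicNet_cosetPoints {P : Fin 3 → H → Fin 3 → K} (hP : IsNet P) (h : H)
    {b : Fin 3 → H} (hb : ∑ i, b i = 0) : IsCyclicNet (addOrderOf h) (cosetPoints P h b) where
  periodic i r := by simp [cosetPoints, add_smul]
  cross_ne_zero {i j r s} hne := by
    refine hP.cross_ne_zero fun heq => ?_
    obtain ⟨rfl, heq⟩ := Prod.mk_inj.1 heq
    refine hne.resolve_left (· rfl) ?_
    rwa [addOrderOf_dvd_iff_zsmul_eq_zero, sub_smul, sub_eq_zero, ← add_right_inj (b i)]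
  mem_line_iff {c i j l r} hc hij := by
    unfold cosetPoints
    rw [hP.mem_line_iff (c := fun i => b i + c i • h) _ hij, add_right_inj,
      addOrderOf_dvd_iff_zsmul_eq_zero, sub_smul, sub_eq_zero]
    rw [Finset.sum_add_distrib, hb, ← Finset.sum_smul, hc, zero_smul, add_zero]

lemma not_intCast_dvd_of_natAbs_lt {n : ℕ} {m : ℤ} (hm : m ≠ 0) (h : m.natAbs < n) :
    ¬ (n : ℤ) ∣ m := fun hdvd =>
  hm (Int.eq_zero_of_abs_lt_dvd hdvd (by rw [Int.abs_eq_natAbs]; exact_mod_cast h))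

namespace IsCyclicNet

variable {n : ℕ} {u : Fin 3 → ℤ → Fin 3 → K} {i j k : Fin 3} {r s t : ℤ}

lemma collinear_iff (hu : IsCyclicNet n u) (hij : i ≠ j) (hik : i ≠ k) (hjk : j ≠ k) :
    u i r ⬝ᵥ u j s ⨯₃ u k t = 0 ↔ (n : ℤ) ∣ r + s + t := by
  obtain ⟨c, hc, rfl, rfl, hi⟩ := exists_sum_eq_zero hjk hij.symm hik.symm s t
  rw [hu.mem_line_iff hc hjk, hi, sub_neg_eq_add, add_assoc]

lemma mem_line_left_iff (hu : IsCyclicNet n u) (hij : i ≠ j) :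
    u i r ⬝ᵥ u i s ⨯₃ u j t = 0 ↔ (n : ℤ) ∣ r - s := by
  obtain ⟨k, hki, hkj⟩ := exists_ne_and_ne i j
  obtain ⟨c, hc, rfl, rfl, -⟩ := exists_sum_eq_zero hij hki.symm hkj.symm s t
  exact hu.mem_line_iff hc hij

lemma mem_line_right_iff (hu : IsCyclicNet n u) (hij : i ≠ j) :
    u j r ⬝ᵥ u i s ⨯₃ u j t = 0 ↔ (n : ℤ) ∣ r - t := by
  rw [← cross_anticomm, dotProduct_neg, neg_eq_zero, hu.mem_line_left_iff hij.symm]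

lemma collinear (hu : IsCyclicNet n u) (hij : i ≠ j) (hik : i ≠ k) (hjk : j ≠ k)
    (h : r + s + t = 0) : u i r ⬝ᵥ u j s ⨯₃ u k t = 0 :=
  (hu.collinear_iff hij hik hjk).2 (h ▸ dvd_zero _)

lemma not_collinear (hu : IsCyclicNet n u) (hij : i ≠ j) (hik : i ≠ k) (hjk : j ≠ k)
    (h : r + s + t ≠ 0 ∧ (r + s + t).natAbs < n) : u i r ⬝ᵥ u j s ⨯₃ u k t ≠ 0 := fun h0 =>
  not_intCast_dvd_of_natAbs_lt h.1 h.2 ((hu.collinear_iff hij hik hjk).1 h0)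

lemma notMem_line_left (hu : IsCyclicNet n u) (hij : i ≠ j)
    (h : r - s ≠ 0 ∧ (r - s).natAbs < n) : u i r ⬝ᵥ u i s ⨯₃ u j t ≠ 0 := fun h0 =>
  not_intCast_dvd_of_natAbs_lt h.1 h.2 ((hu.mem_line_left_iff hij).1 h0)

lemma notMem_line_right (hu : IsCyclicNet n u) (hij : i ≠ j)
    (h : r - t ≠ 0 ∧ (r - t).natAbs < n) : u j r ⬝ᵥ u i s ⨯₃ u j t ≠ 0 := fun h0 =>
  not_intCast_dvd_of_natAbs_lt h.1 h.2 ((hu.mem_line_right_iff hij).1 h0)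

lemma neg (hu : IsCyclicNet n u) : IsCyclicNet n fun i r => u i (-r) where
  periodic i r := by simp only [neg_add', (hu.periodic i).sub_eq]
  cross_ne_zero {i j r s} h := hu.cross_ne_zero (by rwa [← neg_add', dvd_neg, ← sub_eq_add_neg])
  mem_line_iff {c i j l r} hc hij := by
    rw [hu.mem_line_iff (c := fun i => -c i) (by rw [Finset.sum_neg_distrib, hc, neg_zero]) hij,
      ← neg_add', dvd_neg, ← sub_eq_add_neg]

variable {F : MvPolynomial (Fin 3) K}

lemma eval_eq_zero_of_windows_left [Infinite K] (hu : IsCyclicNet n u) (hn : 10 ≤ n)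
    (hF : F.IsHomogeneous 3) (hij : i ≠ j) (hik : i ≠ k) (hjk : j ≠ k) (hrst : r + s + t = -3)
    (hi : ∀ m, r ≤ m → m ≤ r + 2 → eval (u i m) F = 0)
    (hj : ∀ m, s ≤ m → m ≤ s + 2 → eval (u j m) F = 0)
    (hk : ∀ m, t + 1 ≤ m → m ≤ t + 2 → eval (u k m) F = 0) : eval (u k t) F = 0 := by
  have hji := hij.symm
  have hki := hik.symm
  have hkj := hjk.symm
  have hne {i j : Fin 3} (h : i ≠ j) (r s) : u i r ⨯₃ u j s ≠ 0 := hu.cross_ne_zero (.inl h)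
  refine cayley_bacharach (a := ![u j s, u k (t + 1), u i (r + 2)])
    (b := ![u k (t + 2), u i r, u j (s + 1)]) (c := ![u i (r + 1), u j (s + 2), u k t]) hF
    (pairwise_cross_triple (hne hjk _ _) (hne hji _ _) (hne hki _ _))
    (pairwise_cross_triple (hne hki _ _) (hne hkj _ _) (hne hij _ _)) (hne hij _ _)
    (hu.collinear hij hik hjk (by omega)) (hu.collinear hjk hji hki (by omega))
    (hu.collinear hki hkj hij (by omega)) (fun m => ?_) (fun m => ?_) (fun m hm => ?_)
    (fun m hm => ?_) (fun m => ?_) (fun m => ?_) (fun m hm => ?_) <;> fin_cases m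
  · exact hu.collinear hij hik hjk (by omega)
  · exact hu.collinear hjk hji hki (by omega)
  · exact hu.collinear hki hkj hij (by omega)
  · exact hu.notMem_line_right hjk (by omega)
  · exact hu.not_collinear hij hik hjk (by omega)
  · exact hu.notMem_line_left hjk (by omega)
  · exact hu.not_collinear hij hik hjk (by omega)
  · exact hu.notMem_line_left hjk (by omega)
  · exact absurd rfl hm
  · exact hu.notMem_line_right hki (by omega)
  · exact hu.not_collinear hjk hji hki (by omega)
  · exact absurd rfl hm
  · exact hj _ (by omega) (by omega)
  · exact hk _ (by omega) (by omega)
  · exact hi _ (by omega) (by omega)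
  · exact hk _ (by omega) (by omega)
  · exact hi _ (by omega) (by omega)
  · exact hj _ (by omega) (by omega)
  · exact hi _ (by omega) (by omega)
  · exact hj _ (by omega) (by omega)
  · exact absurd rfl hm

lemma eval_eq_zero_of_windows_right [Infinite K] (hu : IsCyclicNet n u) (hn : 10 ≤ n)
    (hF : F.IsHomogeneous 3) (hij : i ≠ j) (hik : i ≠ k) (hjk : j ≠ k) (hrst : r + s + t = -3)
    (hi : ∀ m, r ≤ m → m ≤ r + 2 → eval (u i m) F = 0)
    (hj : ∀ m, s ≤ m → m ≤ s + 2 → eval (u j m) F = 0)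
    (hk : ∀ m, t ≤ m → m ≤ t + 1 → eval (u k m) F = 0) : eval (u k (t + 2)) F = 0 := by
  have h := hu.neg.eval_eq_zero_of_windows_left hn hF hij hik hjk
    (r := -(r + 2)) (s := -(s + 2)) (t := -(t + 2)) (by omega)
    (fun m _ _ => hi _ (by omega) (by omega))
    (fun m _ _ => hj _ (by omega) (by omega))
    (fun m _ _ => hk _ (by omega) (by omega))
  rwa [neg_neg] at h

end IsCyclicNet

lemma forall_le_of_forall_le_sub_one {p : ℤ → Prop} {a b : ℤ}
    (h : ∀ m, a ≤ m → m ≤ b - 1 → p m) (hb : p b) : ∀ m, a ≤ m → m ≤ b → p m := by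
  intro m ha hm
  obtain rfl | hlt := hm.eq_or_lt
  exacts [hb, h m ha (by omega)]

lemma forall_le_of_forall_add_one_le {p : ℤ → Prop} {a b : ℤ}
    (h : ∀ m, a + 1 ≤ m → m ≤ b → p m) (ha : p a) : ∀ m, a ≤ m → m ≤ b → p m := by
  intro m hm hb
  obtain rfl | hlt := hm.eq_or_lt
  exacts [ha, h m (by omega) hb]

/-- The cubic `F` vanishes on windows of three sequences of points that are long enough for the
vanishing to propagate along a cyclic net, provided that `r + s + t = -5`. -/
structure VanishesOnWindows (F : MvPolynomial (Fin 3) K) (v w x : ℤ → Fin 3 → K) (r s t : ℤ) :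
    Prop where
  left : ∀ m, r ≤ m → m ≤ r + 3 → eval (v m) F = 0
  mid : ∀ m, s ≤ m → m ≤ s + 3 → eval (w m) F = 0
  right : ∀ m, t ≤ m → m ≤ t + 4 → eval (x m) F = 0

lemma forall_eq_of_periodic {α : Type*} {f : ℤ → α} {a : α} {n : ℕ} (hn : n ≠ 0)
    (hf : f.Periodic n) {r : ℤ} (h : ∀ m : ℕ, f (r + m) = a) (s : ℤ) : f s = a := by
  have hle : r ≤ s + (r - s).natAbs * n := by
    nlinarith [neg_abs_le (r - s), le_abs_self (r - s), Int.natCast_natAbs (r - s),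
      show (1 : ℤ) ≤ n by omega]
  obtain ⟨m, hm⟩ := Int.eq_ofNat_of_zero_le (sub_nonneg.2 hle)
  rw [← hf.nat_mul (r - s).natAbs s, ← h m, ← hm]
  congr 1
  ring

namespace IsCyclicNet

variable {n : ℕ} {u : Fin 3 → ℤ → Fin 3 → K} {i j k : Fin 3} {r s t : ℤ}
  {F : MvPolynomial (Fin 3) K}

lemma vanishesOnWindows_succ [Infinite K] (hu : IsCyclicNet n u) (hn : 10 ≤ n)
    (hF : F.IsHomogeneous 3) (hij : i ≠ j) (hik : i ≠ k) (hjk : j ≠ k) (hrst : r + s + t = -5)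
    (hW : VanishesOnWindows F (u i) (u j) (u k) r s t) :
    VanishesOnWindows F (u i) (u j) (u k) (r + 1) s (t - 1) := by
  obtain ⟨hi, hj, hk⟩ := hW
  have hi' : ∀ m, r ≤ m → m ≤ r + 2 + 2 → eval (u i m) F = 0 := by
    refine forall_le_of_forall_le_sub_one (fun m _ _ => hi m (by omega) (by omega)) ?_
    exact hu.eval_eq_zero_of_windows_right hn hF hjk hij.symm hik.symm (r := s) (s := t)
      (by omega) (fun m _ _ => hj m (by omega) (by omega))
      (fun m _ _ => hk m (by omega) (by omega)) fun m _ _ => hi m (by omega) (by omega)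
  refine ⟨fun m _ _ => hi' m (by omega) (by omega), hj, ?_⟩
  refine forall_le_of_forall_add_one_le (fun m _ _ => hk m (by omega) (by omega)) ?_
  exact hu.eval_eq_zero_of_windows_left hn hF hij hik hjk (r := r + 2) (s := s + 1) (by omega)
    (fun m _ _ => hi' m (by omega) (by omega)) (fun m _ _ => hj m (by omega) (by omega))
    fun m _ _ => hk m (by omega) (by omega)

lemma vanishesOnWindows_nat [Infinite K] (hu : IsCyclicNet n u) (hn : 10 ≤ n)
    (hF : F.IsHomogeneous 3) (hij : i ≠ j) (hik : i ≠ k) (hjk : j ≠ k) (hrst : r + s + t = -5)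
    (hW : VanishesOnWindows F (u i) (u j) (u k) r s t) (m : ℕ) :
    VanishesOnWindows F (u i) (u j) (u k) (r + m) s (t - m) := by
  induction m with
  | zero => simpa using hW
  | succ m ih =>
    have h := hu.vanishesOnWindows_succ hn hF hij hik hjk (by omega) ih
    rwa [add_assoc, sub_sub] at h

lemma eval_eq_zero_of_vanishesOnWindows [Infinite K] (hu : IsCyclicNet n u) (hn : 10 ≤ n)
    (hF : F.IsHomogeneous 3) (hrst : r + s + t = -5)
    (hW : VanishesOnWindows F (u 0) (u 1) (u 2) r s t) (l : Fin 3) (m : ℤ) :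
    eval (u l m) F = 0 := by
  have hperiodic (l : Fin 3) : (fun m => eval (u l m) F).Periodic n :=
    (hu.periodic l).comp (eval · F)
  have hW₀ := hu.vanishesOnWindows_nat hn hF (by decide) (by decide) (by decide) hrst hW
  have hW₁ := hu.vanishesOnWindows_nat hn hF (by decide) (by decide) (by decide) (by omega)
    ⟨hW.mid, hW.left, hW.right⟩
  have h₂ (m : ℕ) : eval (u 2 (-(-t + m))) F = 0 :=
    (hW₀ m).right _ (by omega) (by omega)
  fin_cases l
  · exact forall_eq_of_periodic (by omega) (hperiodic 0)
      (fun m => (hW₀ m).left _ le_rfl (by omega)) m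
  · exact forall_eq_of_periodic (by omega) (hperiodic 1)
      (fun m => (hW₁ m).left _ le_rfl (by omega)) m
  · simpa using
      forall_eq_of_periodic (by omega) ((hu.neg.periodic 2).comp (eval · F)) h₂ (-m)

lemma vanishesOnWindows_of_eval_eq_zero [Infinite K] (hu : IsCyclicNet n u) (hn : 10 ≤ n)
    (hF : F.IsHomogeneous 3) (hij : i ≠ j) (hik : i ≠ k) (hjk : j ≠ k)
    (hi : ∀ m, 0 ≤ m → m ≤ 3 → eval (u i m) F = 0)
    (hj : ∀ m, 0 ≤ m → m ≤ 2 → eval (u j m) F = 0)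
    (hk : ∀ m, -2 ≤ m → m ≤ -1 → eval (u k m) F = 0) :
    VanishesOnWindows F (u i) (u j) (u k) 0 0 (-5) := by
  have hk₃ : ∀ m, -3 ≤ m → m ≤ -1 → eval (u k m) F = 0 := by
    refine forall_le_of_forall_add_one_le (by simpa using hk) ?_
    exact hu.eval_eq_zero_of_windows_left hn hF hij hik hjk (r := 0) (s := 0) (by simp)
      (fun m _ _ => hi m (by omega) (by omega)) (fun m _ _ => hj m (by omega) (by omega))
      fun m _ _ => hk m (by omega) (by omega)
  have hk₄ : ∀ m, -4 ≤ m → m ≤ -1 → eval (u k m) F = 0 := by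
    refine forall_le_of_forall_add_one_le (by simpa using hk₃) ?_
    exact hu.eval_eq_zero_of_windows_left hn hF hij hik hjk (r := 1) (s := 0) (by simp)
      (fun m _ _ => hi m (by omega) (by omega)) (fun m _ _ => hj m (by omega) (by omega))
      fun m _ _ => hk₃ m (by omega) (by omega)
  have hj₃ : ∀ m, 0 ≤ m → m ≤ 3 → eval (u j m) F = 0 := by
    refine forall_le_of_forall_le_sub_one (by simpa using hj) ?_
    exact hu.eval_eq_zero_of_windows_right hn hF hik hij hjk.symm (r := 0) (s := -4) (t := 1)
      (by simp) (fun m _ _ => hi m (by omega) (by omega))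
      (fun m _ _ => hk₄ m (by omega) (by omega)) fun m _ _ => hj m (by omega) (by omega)
  refine ⟨hi, hj₃, forall_le_of_forall_add_one_le (by simpa using hk₄) ?_⟩
  exact hu.eval_eq_zero_of_windows_left hn hF hij hik hjk (r := 1) (s := 1) (by simp)
    (fun m _ _ => hi m (by omega) (by omega)) (fun m _ _ => hj₃ m (by omega) (by omega))
    fun m _ _ => hk₄ m (by omega) (by omega)

theorem exists_cubic [Infinite K] (hu : IsCyclicNet n u) (hn : 10 ≤ n) :
    ∃ F : MvPolynomial (Fin 3) K, F ≠ 0 ∧ F.IsHomogeneous 3 ∧ ∀ i r, eval (u i r) F = 0 := by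
  obtain ⟨F, h0, hF, hz⟩ := exists_form_eval_eq_zero (d := 3)
    ![u 0 0, u 0 1, u 0 2, u 0 3, u 1 0, u 1 1, u 1 2, u 2 (-2), u 2 (-1)] (by decide)
  refine ⟨F, h0, hF, hu.eval_eq_zero_of_vanishesOnWindows hn hF (by simp)
    (hu.vanishesOnWindows_of_eval_eq_zero hn hF (by decide) (by decide) (by decide)
      (fun m _ _ => ?_) (fun m _ _ => ?_) fun m _ _ => ?_)⟩ <;> interval_cases m
  exacts [hz 0, hz 1, hz 2, hz 3, hz 4, hz 5, hz 6, hz 7, hz 8]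

end IsCyclicNet

end Net

/-! ### Cubics with an irreducible component of degree at least two -/

section Conic

variable {K H : Type*} [Field K] [AddCommGroup H]

namespace IsCyclicNet

variable {n : ℕ} {u : Fin 3 → ℤ → Fin 3 → K} {i j : Fin 3} {r s t : ℤ}
  {F G : MvPolynomial (Fin 3) K} {d e : ℕ} {l : Fin 3 → K}

lemma cross_ne_zero_of_natAbs_lt (hu : IsCyclicNet n u) (h : r - s ≠ 0 ∧ (r - s).natAbs < n) :
    u i r ⨯₃ u i s ≠ 0 :=
  hu.cross_ne_zero (.inr (not_intCast_dvd_of_natAbs_lt h.1 h.2))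

lemma dvd_of_eval_eq_zero (hu : IsCyclicNet n u) (hn : d * e < n) (hF : F.IsHomogeneous e)
    (hi : Irreducible F) (hG : G.IsHomogeneous d) (hFu : ∀ r, eval (u j r) F = 0)
    (hGu : ∀ r, eval (u j r) G = 0) : F ∣ G := by
  refine dvd_of_card_common_zeros hF hi hG (v := fun r : Fin n => u j (r : ℕ)) (fun r s hrs => ?_)
    (by simpa using hn) (fun r => hFu _) fun r => hGu _
  exact hu.cross_ne_zero_of_natAbs_lt (by omega)

lemma dotProduct_ne_zero_of_dotProduct_eq_zero (hu : IsCyclicNet n u) (hl : l ≠ 0) (hij : i ≠ j)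
    (h : r - s ≠ 0 ∧ (r - s).natAbs < n) (hr : l ⬝ᵥ u i r = 0) (hs : l ⬝ᵥ u i s = 0) (t : ℤ) :
    l ⬝ᵥ u j t ≠ 0 := fun ht =>
  hu.notMem_line_left hij h (dotProduct_cross_eq_zero hl hr hs ht)

end IsCyclicNet

/-- The class `i` of the points `u` lies on the line `l`, the other two on the irreducible
conic `Q`. -/
structure LineConic (u : Fin 3 → ℤ → Fin 3 → K) (i : Fin 3) (l : Fin 3 → K)
    (Q : MvPolynomial (Fin 3) K) : Prop where
  line_ne_zero : l ≠ 0
  isHomogeneous : Q.IsHomogeneous 2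
  irreducible : Irreducible Q
  line : ∀ r, l ⬝ᵥ u i r = 0
  conic : ∀ {j}, j ≠ i → ∀ r, eval (u j r) Q = 0

/-- The intersection of the line through `w m` and `w (m + 3)` with the line through `w (m + 1)`
and `w (m + 2)`. -/
def pascalPoint (w : ℤ → Fin 3 → K) (m : ℤ) : Fin 3 → K :=
  (w m ⨯₃ w (m + 3)) ⨯₃ (w (m + 1) ⨯₃ w (m + 2))

lemma pascalPoint_dotProduct_outer (w : ℤ → Fin 3 → K) (m : ℤ) :
    pascalPoint w m ⬝ᵥ w m ⨯₃ w (m + 3) = 0 := by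
  rw [dotProduct_comm]
  exact dot_self_cross _ _

lemma pascalPoint_dotProduct_inner (w : ℤ → Fin 3 → K) (m : ℤ) :
    pascalPoint w m ⬝ᵥ w (m + 1) ⨯₃ w (m + 2) = 0 := by
  rw [dotProduct_comm]
  exact dot_cross_self _ _

lemma eval_cross_cross_ne_zero_of_irreducible_conic {Q : MvPolynomial (Fin 3) K}
    (hQ : Q.IsHomogeneous 2) (hi : Irreducible Q) {p q r s : Fin 3 → K} (hpq : p ⨯₃ q ≠ 0)
    (hpr : p ⨯₃ r ≠ 0) (hps : p ⨯₃ s ≠ 0) (hqr : q ⨯₃ r ≠ 0) (hqs : q ⨯₃ s ≠ 0) (hrs : r ⨯₃ s ≠ 0)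
    (hp : eval p Q = 0) (hq : eval q Q = 0) (hr : eval r Q = 0) (hs : eval s Q = 0) :
    eval ((p ⨯₃ s) ⨯₃ (q ⨯₃ r)) Q ≠ 0 := by
  intro h
  have hpX : p ⨯₃ ((p ⨯₃ s) ⨯₃ (q ⨯₃ r)) = (p ⬝ᵥ q ⨯₃ r) • p ⨯₃ s := by
    rw [cross_cross_eq_smul_sub_smul', dotProduct_comm _ p, dot_self_cross, zero_smul, sub_zero]
  have hsX : s ⨯₃ ((p ⨯₃ s) ⨯₃ (q ⨯₃ r)) = (s ⬝ᵥ q ⨯₃ r) • p ⨯₃ s := by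
    rw [cross_cross_eq_smul_sub_smul', dotProduct_comm _ s, dot_cross_self, zero_smul, sub_zero]
  refine dotProduct_cross_ne_zero_of_irreducible_conic hQ hi hps ?_ ?_ hp hs h ?_
  · rw [hpX]
    exact smul_ne_zero
      (dotProduct_cross_ne_zero_of_irreducible_conic hQ hi hpq hpr hqr hp hq hr) hps
  · rw [hsX]
    exact smul_ne_zero (dotProduct_cross_ne_zero_of_irreducible_conic hQ hi (cross_ne_zero_symm hqs)
      (cross_ne_zero_symm hrs) hqr hs hq hr) hps
  · rw [hsX, dotProduct_smul, dot_self_cross, smul_zero]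

namespace LineConic

variable {n : ℕ} {u : Fin 3 → ℤ → Fin 3 → K} {i j : Fin 3} {l : Fin 3 → K}
  {Q : MvPolynomial (Fin 3) K}

lemma eval_pascalPoint_ne_zero (hu : IsCyclicNet n u) (hn : 3 < n) (h : LineConic u i l Q)
    (hji : j ≠ i) (m : ℤ) : eval (pascalPoint (u j) m) Q ≠ 0 := by
  have hQ := h.conic hji
  apply eval_cross_cross_ne_zero_of_irreducible_conic h.isHomogeneous h.irreducible
  any_goals exact hQ _
  all_goals exact hu.cross_ne_zero_of_natAbs_lt (by omega)

/- Pascal's theorem for the hexagon with vertices `u j m`, …, `u j (m + 3)` and two points of the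
other class on the conic; the other two Pascal points are `u i 0` and `u i 2`. -/
lemma dotProduct_pascalPoint [Infinite K] (hu : IsCyclicNet n u) (hn : 10 ≤ n)
    (h : LineConic u i l Q) (hji : j ≠ i) (m : ℤ) : l ⬝ᵥ pascalPoint (u j) m = 0 := by
  obtain ⟨k, hki, hkj⟩ := exists_ne_and_ne i j
  have hij := hji.symm
  have hik := hki.symm
  have hjk := hkj.symm
  have hne {i j : Fin 3} (h : i ≠ j) (r s) : u i r ⨯₃ u j s ≠ 0 := hu.cross_ne_zero (.inl h)
  have hFi (r) : eval (u i r) (linearForm l * Q) = 0 := by simp [h.line]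
  have hF {j} (hji : j ≠ i) (r) : eval (u j r) (linearForm l * Q) = 0 := by simp [h.conic hji]
  have hX : eval (pascalPoint (u j) m) (linearForm l * Q) = 0 := by
    refine cayley_bacharach (a := ![u i 2, u k (-3 - m), u j (m + 1)])
      (b := ![u k (-2 - m), u i 0, u j (m + 2)])
      (c := ![u j m, u j (m + 3), pascalPoint (u j) m])
      ((isHomogeneous_linearForm l).mul h.isHomogeneous)
      (pairwise_cross_triple (hne hik _ _) (hne hij _ _) (hne hkj _ _))
      (pairwise_cross_triple (hne hki _ _) (hne hkj _ _) (hne hij _ _))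
      (hu.cross_ne_zero_of_natAbs_lt (by omega))
      (hu.collinear hji hjk hik (by omega)) (hu.collinear hjk hji hki (by omega))
      (pascalPoint_dotProduct_outer _ _) (fun e => ?_) (fun e => ?_) (fun e he => ?_)
      (fun e he => ?_) (fun e => ?_) (fun e => ?_) (fun e he => ?_) <;> fin_cases e
    exacts [hu.collinear hji hjk hik (by omega), hu.collinear hjk hji hki (by omega),
      pascalPoint_dotProduct_inner _ _, hu.notMem_line_right hik (by omega),
      hu.notMem_line_left hik (by omega), hu.not_collinear hji hjk hik (by omega),
      hu.not_collinear hji hjk hik (by omega), hu.not_collinear hji hjk hik (by omega),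
      absurd rfl he, hu.not_collinear hjk hji hki (by omega),
      hu.not_collinear hjk hji hki (by omega), absurd rfl he, hFi _, hF hki _, hF hji _, hF hki _,
      hFi _, hF hji _, hF hji _, hF hji _, absurd rfl he]
  rw [map_mul, eval_linearForm, mul_eq_zero] at hX
  exact hX.resolve_right (h.eval_pascalPoint_ne_zero hu (by omega) hji m)

lemma cross_pascalPoint_ne_zero (hu : IsCyclicNet n u) (hn : 4 < n) (h : LineConic u i l Q)
    (hji : j ≠ i) : pascalPoint (u j) 0 ⨯₃ pascalPoint (u j) 1 ≠ 0 := by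
  intro h0
  have hne {r s : ℤ} (hrs : r - s ≠ 0 ∧ (r - s).natAbs < n) : u j r ⨯₃ u j s ≠ 0 :=
    hu.cross_ne_zero_of_natAbs_lt hrs
  have hX (m) : eval (pascalPoint (u j) m) Q ≠ 0 := h.eval_pascalPoint_ne_zero hu (by omega) hji m
  have hX₁ : pascalPoint (u j) 1 ≠ 0 := fun h₁ => hX 1 <| by
    rw [h₁, ← zero_smul K (u j 0), eval_smul_of_isHomogeneous h.isHomogeneous, h.conic hji,
      mul_zero]
  obtain ⟨c, hc⟩ := exists_smul_eq_of_cross_eq_zero hX₁ (by rw [← cross_anticomm, h0, neg_zero])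
  have h₁₂ : pascalPoint (u j) 0 ⬝ᵥ u j 1 ⨯₃ u j 2 = 0 := pascalPoint_dotProduct_inner (u j) 0
  have h₂₃ : pascalPoint (u j) 0 ⬝ᵥ u j 2 ⨯₃ u j 3 = 0 := by
    rw [← hc, smul_dotProduct]
    simpa using congrArg (c * ·) (pascalPoint_dotProduct_inner (u j) 1)
  have hw : u j 1 ⬝ᵥ u j 2 ⨯₃ u j 3 ≠ 0 :=
    dotProduct_cross_ne_zero_of_irreducible_conic h.isHomogeneous h.irreducible
      (hne (by omega)) (hne (by omega)) (hne (by omega)) (h.conic hji _) (h.conic hji _)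
      (h.conic hji _)
  have hcross : (u j 1 ⨯₃ u j 2) ⨯₃ (u j 2 ⨯₃ u j 3) = (u j 1 ⬝ᵥ u j 2 ⨯₃ u j 3) • u j 2 := by
    rw [cross_cross_eq_smul_sub_smul, dot_self_cross, zero_smul, sub_zero]
  obtain ⟨e, he⟩ := exists_smul_cross_eq
    (hcross ▸ smul_ne_zero hw (ne_zero_of_cross_ne_zero_left (hne (s := 0) (by omega)))) h₁₂ h₂₃
  apply hX 0
  rw [← he, hcross, smul_smul, eval_smul_of_isHomogeneous h.isHomogeneous, h.conic hji, mul_zero]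

end LineConic

namespace IsCyclicNet

variable {n : ℕ} {u u' : Fin 3 → ℤ → Fin 3 → K} {i j : Fin 3} {l : Fin 3 → K}
  {Q : MvPolynomial (Fin 3) K}

lemma eval_ne_zero_of_conic (hu : IsCyclicNet n u) (hQ : Q.IsHomogeneous 2) (hi : Irreducible Q)
    (hconic : ∀ {j}, j ≠ i → ∀ r, eval (u j r) Q = 0) (r : ℤ) : eval (u i r) Q ≠ 0 := fun hr => by
  obtain ⟨j, hji, -⟩ := exists_ne_and_ne i i
  obtain ⟨k, hki, hkj⟩ := exists_ne_and_ne i j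
  exact dotProduct_cross_ne_zero_of_irreducible_conic hQ hi (hu.cross_ne_zero (.inl hji.symm))
    (hu.cross_ne_zero (.inl hki.symm)) (hu.cross_ne_zero (.inl hkj.symm)) hr (hconic hji (-r))
    (hconic hki 0) (hu.collinear hji.symm hki.symm hkj.symm (by simp))

lemma exists_dotProduct_eq_zero (hu : IsCyclicNet n u) (hn : 6 < n) (hQ : Q.IsHomogeneous 2)
    (hi : Irreducible Q) (hz : ∀ i r, l ⬝ᵥ u i r = 0 ∨ eval (u i r) Q = 0) :
    ∃ i r s, (r - s ≠ 0 ∧ (r - s).natAbs < n) ∧ l ⬝ᵥ u i r = 0 ∧ l ⬝ᵥ u i s = 0 := by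
  let c (m : ℤ) : Fin 3 → ℤ := ![m, m, -(m + m)]
  have htriple (m : Fin 4) : ∃ i, l ⬝ᵥ u i (c m i) = 0 := by
    by_contra! hne
    have hQc (i) : eval (u i (c m i)) Q = 0 := (hz i _).resolve_left (hne i)
    exact dotProduct_cross_ne_zero_of_irreducible_conic hQ hi
      (hu.cross_ne_zero (.inl (by decide))) (hu.cross_ne_zero (.inl (by decide)))
      (hu.cross_ne_zero (.inl (by decide))) (hQc 0) (hQc 1) (hQc 2)
      (hu.collinear (by decide) (by decide) (by decide) (add_neg_cancel _))
  choose i hi using htriple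
  obtain ⟨m, m', hmm', him⟩ := Fintype.exists_ne_map_eq_of_card_lt i (by simp)
  refine ⟨i m, c m (i m), c m' (i m), ?_, hi m, him ▸ hi m'⟩
  generalize i m = k
  fin_cases k <;> simp [c] <;> omega

lemma exists_lineConic (hu : IsCyclicNet n u) (hn : 6 < n) (hl : l ≠ 0) (hQ : Q.IsHomogeneous 2)
    (hi : Irreducible Q) (hz : ∀ i r, eval (u i r) (linearForm l * Q) = 0) :
    ∃ i, LineConic u i l Q := by
  simp only [map_mul, eval_linearForm, mul_eq_zero] at hz
  obtain ⟨i, r, s, hrs, hr, hs⟩ := hu.exists_dotProduct_eq_zero hn hQ hi hz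
  have hconic {j} (hji : j ≠ i) (t) : eval (u j t) Q = 0 := (hz j t).resolve_left
    (hu.dotProduct_ne_zero_of_dotProduct_eq_zero hl hji.symm hrs hr hs t)
  exact ⟨i, hl, hQ, hi, fun t => (hz i t).resolve_right (hu.eval_ne_zero_of_conic hQ hi hconic t),
    hconic⟩

/- The line is determined by the sequence `u j`, being spanned by two of its Pascal points. -/
lemma exists_lineConic_of_eq [Infinite K] (hu : IsCyclicNet n u) (hu' : IsCyclicNet n u')
    (hn : 10 ≤ n) (h : LineConic u i l Q) (hji : j ≠ i) (hj : u' j = u j) :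
    ∃ i', LineConic u' i' l Q := by
  obtain ⟨F, h0, hF, hz⟩ := hu'.exists_cubic hn
  obtain ⟨G, rfl⟩ := hu.dvd_of_eval_eq_zero (by omega) h.isHomogeneous h.irreducible hF
    (h.conic hji) (hj ▸ hz j)
  obtain ⟨l', rfl⟩ := exists_eq_linearForm
    (isHomogeneous_of_mul_left (e := 2) (d := 1) h.isHomogeneous h.irreducible.ne_zero hF)
  have hl' : l' ≠ 0 := by
    rintro rfl
    simp [linearForm] at h0
  obtain ⟨i', h'⟩ := hu'.exists_lineConic (by omega) hl' h.isHomogeneous h.irreducible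
    (by simpa only [mul_comm] using hz)
  have hji' : j ≠ i' := by
    rintro rfl
    exact hu'.eval_ne_zero_of_conic h.isHomogeneous h.irreducible h'.conic 0
      (hj ▸ h.conic hji 0)
  have hpascal := h.cross_pascalPoint_ne_zero hu (by omega) hji
  obtain ⟨c, rfl⟩ := exists_smul_cross_eq hpascal (h.dotProduct_pascalPoint hu hn hji 0)
    (h.dotProduct_pascalPoint hu hn hji 1)
  obtain ⟨c', rfl⟩ := exists_smul_cross_eq hpascal (hj ▸ h'.dotProduct_pascalPoint hu' hn hji' 0)
    (hj ▸ h'.dotProduct_pascalPoint hu' hn hji' 1)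
  refine ⟨i', h.line_ne_zero, h.isHomogeneous, h.irreducible, fun r => ?_, h'.conic⟩
  have hr := h'.line r
  rw [smul_dotProduct, smul_eq_zero_iff_right (left_ne_zero_of_smul hl')] at hr
  rw [smul_dotProduct, hr, smul_zero]

end IsCyclicNet

variable {P : Fin 3 → H → Fin 3 → K} {h : H} {b b' : Fin 3 → H} {i j : Fin 3} {l : Fin 3 → K}
  {F Q : MvPolynomial (Fin 3) K}

lemma LineConic.of_eq [Infinite K] (hP : IsNet P) (ho : 10 ≤ addOrderOf h) (hb : ∑ i, b i = 0)
    (hb' : ∑ i, b' i = 0) (hc : LineConic (cosetPoints P h b) i l Q) (hji : j ≠ i)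
    (hj : b' j = b j) : LineConic (cosetPoints P h b') i l Q := by
  have hu' := hP.isCyclicNet_cosetPoints h hb'
  obtain ⟨i', hc'⟩ := (hP.isCyclicNet_cosetPoints h hb).exists_lineConic_of_eq hu' ho hc hji
    (funext fun r => by rw [cosetPoints, cosetPoints, hj])
  obtain rfl | hii' := eq_or_ne i i'
  · exact hc'
  obtain ⟨k, hki, hki'⟩ := exists_ne_and_ne i i'
  obtain ⟨c, hcsum, hci, hci', -⟩ := exists_sum_eq_zero hii' hki.symm hki'.symm (b i) (b' i')
  have hcol : P i' (b' i' + h) ⬝ᵥ P i' (c i') ⨯₃ P i (c i) = 0 := by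
    rw [hci, hci']
    exact dotProduct_cross_eq_zero hc.line_ne_zero (by simpa [cosetPoints] using hc'.line 1)
      (by simpa using hc'.line 0) (by simpa using hc.line 0)
  have hh : h = 0 := by simpa [hci'] using (hP.mem_line_iff hcsum hii'.symm).1 hcol
  simp [hh] at ho

theorem LineConic.eval_eq_zero [Infinite K] (hP : IsNet P) (ho : 10 ≤ addOrderOf h)
    (hb : ∑ i, b i = 0) (hc : LineConic (cosetPoints P h b) i l Q) (t : Fin 3) (x : H) :
    eval (P t x) (linearForm l * Q) = 0 := by
  obtain rfl | hti := eq_or_ne t i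
  · obtain ⟨j, hjt, -⟩ := exists_ne_and_ne t t
    obtain ⟨k, hkt, hkj⟩ := exists_ne_and_ne t j
    obtain ⟨b', hb', rfl, hj, -⟩ := exists_sum_eq_zero hjt.symm hkt.symm hkj.symm x (b j)
    have hline := (hc.of_eq hP ho hb hb' hjt hj).line 0
    rw [cosetPoints_zero] at hline
    rw [map_mul, eval_linearForm, hline, zero_mul]
  · obtain ⟨j, hjt, hji⟩ := exists_ne_and_ne t i
    obtain ⟨b', hb', rfl, hj, -⟩ := exists_sum_eq_zero hjt.symm hti hji x (b j)
    have hconic := (hc.of_eq hP ho hb hb' hji hj).conic hti 0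
    rw [cosetPoints_zero] at hconic
    rw [map_mul, hconic, mul_zero]

theorem eval_eq_zero_of_irreducible_cubic [Infinite K] (hP : IsNet P) (ho : 10 ≤ addOrderOf h)
    (hF : F.IsHomogeneous 3) (hi : Irreducible F)
    (hz : ∀ i r, eval (cosetPoints P h b i r) F = 0) (i : Fin 3) (x : H) : eval (P i x) F = 0 := by
  obtain ⟨j, hji, -⟩ := exists_ne_and_ne i i
  obtain ⟨k, hki, hkj⟩ := exists_ne_and_ne i j
  obtain ⟨b', hb', rfl, hj, -⟩ := exists_sum_eq_zero hji.symm hki.symm hkj.symm x (b j)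
  obtain ⟨G, h0, hG, hzG⟩ := (hP.isCyclicNet_cosetPoints h hb').exists_cubic ho
  have hjz (r) : eval (cosetPoints P h b' j r) F = 0 := by
    rw [cosetPoints, hj]
    exact hz j r
  obtain ⟨E, rfl⟩ := (hP.isCyclicNet_cosetPoints h hb').dvd_of_eval_eq_zero (by omega) hF hi hG
    hjz (hzG j)
  have hE : IsUnit E := (isUnit_iff_of_isHomogeneous
    (isHomogeneous_of_mul_left (e := 3) (d := 0) hF hi.ne_zero hG) (right_ne_zero_of_mul h0)).2 rfl
  have hx := hzG i 0
  rw [cosetPoints_zero, map_mul] at hx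
  exact (mul_eq_zero.1 hx).resolve_right (hE.map (eval _)).ne_zero

end Conic

/-! ### Cubics consisting of three lines -/

section ThreeLines

@[to_additive]
lemma exists_forall_succ_eq_mul {A : Type*} [CommGroup A] {f : Fin 3 → ℤ → A} {c : A}
    (h : ∀ r s t, r + s + t = 0 → f 0 r * f 1 s * f 2 t = c) :
    ∃ z, ∀ i r, f i (r + 1) = z * f i r := by
  have h₁ (s : ℤ) : f 1 (s + 1) = f 0 1 / f 0 0 * f 1 s := by
    have h₀₁ := (h 1 s (-s - 1) (by omega)).trans (h 0 (s + 1) (-s - 1) (by omega)).symm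
    rw [div_mul_eq_mul_div, eq_div_iff_mul_eq', mul_right_cancel h₀₁, mul_comm]
  have h₂ (s : ℤ) : f 2 (s + 1) = f 0 1 / f 0 0 * f 2 s := by
    have h₀₂ := (h 1 (-s - 1) s (by omega)).trans (h 0 (-s - 1) (s + 1) (by omega)).symm
    rw [mul_right_comm, mul_right_comm (f 0 0)] at h₀₂
    rw [div_mul_eq_mul_div, eq_div_iff_mul_eq', mul_right_cancel h₀₂, mul_comm]
  have h₀ (r : ℤ) : f 0 (r + 1) = f 0 1 / f 0 0 * f 0 r := by
    have h₀₁ := (h (r + 1) 0 (-r - 1) (by omega)).trans (h r (0 + 1) (-r - 1) (by omega)).symm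
    rw [h₁ 0, ← mul_assoc] at h₀₁
    rw [mul_right_cancel (mul_right_cancel h₀₁), mul_comm]
  refine ⟨f 0 1 / f 0 0, fun i => ?_⟩
  fin_cases i
  exacts [h₀, h₁, h₂]

variable {K H : Type*} [Field K] [AddCommGroup H]

lemma eq_zero_of_periodic [CharZero K] {f : ℤ → K} {n : ℕ} {z : K} (hn : n ≠ 0)
    (hf : f.Periodic n) (hz : ∀ r, f (r + 1) = z + f r) : z = 0 := by
  have hiter (m : ℕ) : f m = m * z + f 0 := by
    induction m with
    | zero => simp
    | succ m ih => rw [Nat.cast_succ, hz, ih, Nat.cast_succ, add_one_mul]; ring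
  have hfn := hiter n
  rw [hf.eq, right_eq_add, mul_eq_zero] at hfn
  exact hfn.resolve_left (Nat.cast_ne_zero.2 hn)

lemma triple_product_mul_triple_product (p q r a b c : Fin 3 → K) :
    (p ⬝ᵥ q ⨯₃ r) * (a ⬝ᵥ b ⨯₃ c) =
      p ⬝ᵥ a * (q ⬝ᵥ b * r ⬝ᵥ c - q ⬝ᵥ c * r ⬝ᵥ b) - p ⬝ᵥ b * (q ⬝ᵥ a * r ⬝ᵥ c - q ⬝ᵥ c * r ⬝ᵥ a) +
        p ⬝ᵥ c * (q ⬝ᵥ a * r ⬝ᵥ b - q ⬝ᵥ b * r ⬝ᵥ a) := by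
  simp only [cross_apply, dotProduct, Fin.sum_univ_three, Matrix.cons_val]
  ring

lemma triple_product_mul_dotProduct (l p q m w : Fin 3 → K) :
    (l ⬝ᵥ p ⨯₃ q) * m ⬝ᵥ w = l ⬝ᵥ w * (m ⬝ᵥ p ⨯₃ q) + p ⬝ᵥ w * (m ⬝ᵥ q ⨯₃ l) +
      q ⬝ᵥ w * (m ⬝ᵥ l ⨯₃ p) := by
  simp only [cross_apply, dotProduct, Fin.sum_univ_three, Matrix.cons_val]
  ring

/-- Each of the three classes of points is collinear. -/
def CollinearClasses (u : Fin 3 → ℤ → Fin 3 → K) : Prop :=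
  ∀ i r, u i r ⬝ᵥ u i 0 ⨯₃ u i 1 = 0

/-- The line carrying the class `i` when that class is collinear. -/
def classLine (u : Fin 3 → ℤ → Fin 3 → K) (i : Fin 3) : Fin 3 → K :=
  u i 0 ⨯₃ u i 1

namespace IsCyclicNet

variable {n : ℕ} {u : Fin 3 → ℤ → Fin 3 → K} {i j : Fin 3}

lemma collinearClasses (hu : IsCyclicNet n u) (hn : 3 < n) {m : Fin 3 → Fin 3 → K}
    (hm : ∀ c, m c ≠ 0) (hz : ∀ i r, ∃ c, m c ⬝ᵥ u i r = 0) : CollinearClasses u := by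
  have hpair (i) : ∃ c, ∃ r s : ℤ, (r - s ≠ 0 ∧ (r - s).natAbs < n) ∧
      m c ⬝ᵥ u i r = 0 ∧ m c ⬝ᵥ u i s = 0 := by
    choose c hc using hz i
    obtain ⟨a, b, hab, hcab⟩ :=
      Fintype.exists_ne_map_eq_of_card_lt (fun a : Fin 4 => c (a : ℕ)) (by simp)
    exact ⟨_, _, _, by omega, hc _, hcab ▸ hc _⟩
  choose σ r s hrs hr hs using hpair
  have hoff {i j} (hij : i ≠ j) := hu.dotProduct_ne_zero_of_dotProduct_eq_zero (hm (σ i)) hij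
    (hrs i) (hr i) (hs i)
  have hσ : Function.Injective σ := fun i j hij => by
    by_contra hne
    exact hoff hne (r j) (hij ▸ hr j)
  have hon (i t) : m (σ i) ⬝ᵥ u i t = 0 := by
    obtain ⟨c, hc⟩ := hz i t
    obtain ⟨j, rfl⟩ := Finite.surjective_of_injective hσ c
    obtain rfl | hji := eq_or_ne j i
    exacts [hc, absurd hc (hoff hji t)]
  exact fun i t => dotProduct_cross_eq_zero (hm (σ i)) (hon i t) (hon i 0) (hon i 1)

lemma classLine_dotProduct_ne_zero (hu : IsCyclicNet n u) (hn : 1 < n) (hij : i ≠ j) (r : ℤ) :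
    classLine u i ⬝ᵥ u j r ≠ 0 := by
  rw [dotProduct_comm, classLine, triple_product_permutation]
  exact hu.notMem_line_left hij (by simpa using hn)

lemma cross_classLine_ne_zero (hu : IsCyclicNet n u) (hn : 1 < n) (hcol : CollinearClasses u)
    (hij : i ≠ j) : classLine u i ⨯₃ classLine u j ≠ 0 := fun h => by
  obtain ⟨c, hc⟩ := exists_smul_eq_of_cross_eq_zero
    (hu.cross_ne_zero_of_natAbs_lt (by simpa using hn)) h
  apply hu.classLine_dotProduct_ne_zero hn hij.symm 0
  have hi := hcol i 0
  rw [dotProduct_comm] at hi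
  rw [← hc, smul_dotProduct, hi, smul_zero]

end IsCyclicNet

lemma triple_product_mul_of_add_eq_zero {m w : Fin 3 → Fin 3 → K} (t : Fin 3 → K)
    (hm : m 0 + m 1 + m 2 = 0) (hw : ∀ i, m i ⬝ᵥ w i = 0) :
    (m 0 ⬝ᵥ m 1 ⨯₃ t) * (w 0 ⬝ᵥ w 1 ⨯₃ w 2) =
      t ⬝ᵥ w 0 * (m 2 ⬝ᵥ w 1) * (m 0 ⬝ᵥ w 2) + m 1 ⬝ᵥ w 0 * (t ⬝ᵥ w 1) * (m 0 ⬝ᵥ w 2) +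
        m 1 ⬝ᵥ w 0 * (m 2 ⬝ᵥ w 1) * (t ⬝ᵥ w 2) := by
  have h₀ := hw 0
  have h₁ := hw 1
  have hm₂ : m 2 = -(m 0 + m 1) := by rw [eq_neg_iff_add_eq_zero, add_comm, hm]
  have h₂ := hw 2
  simp only [hm₂, neg_dotProduct, add_dotProduct] at h₂ ⊢
  rw [triple_product_mul_triple_product, h₀, h₁]
  linear_combination (m 0 ⬝ᵥ w 1) * (t ⬝ᵥ w 0) * (-h₂)

namespace IsCyclicNet

variable {n : ℕ} {u : Fin 3 → ℤ → Fin 3 → K} {i j : Fin 3}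

/- If the three lines were concurrent, their parameters would satisfy `f 0 r + f 1 s + f 2 t = 0`
exactly on collinear triples, so each would run through a periodic arithmetic progression. -/
lemma line_add_line_add_line_ne_zero [CharZero K] (hu : IsCyclicNet n u) (hn : 1 < n)
    {m : Fin 3 → Fin 3 → K} (hon : ∀ i r, m i ⬝ᵥ u i r = 0)
    (hoff : ∀ {i j}, i ≠ j → ∀ r, m i ⬝ᵥ u j r ≠ 0) : m 0 + m 1 + m 2 ≠ 0 := by
  intro hm
  have h₀₁ : m 0 ⨯₃ m 1 ≠ 0 := fun h => by
    have h₀ : m 0 ≠ 0 := fun h₀ => hoff (by decide : (0 : Fin 3) ≠ 1) 0 (by simp [h₀])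
    obtain ⟨c, hc⟩ := exists_smul_eq_of_cross_eq_zero h₀ h
    exact hoff (by decide : (1 : Fin 3) ≠ 0) 0 (by rw [← hc, smul_dotProduct, hon, smul_zero])
  obtain ⟨t, ht⟩ : ∃ t, t ⬝ᵥ m 0 ⨯₃ m 1 ≠ 0 := by
    by_contra! ht
    exact h₀₁ (dotProduct_eq_zero _ fun t => by rw [dotProduct_comm, ht])
  rw [triple_product_permutation] at ht
  let f (i : Fin 3) (r : ℤ) : K := t ⬝ᵥ u i r / m (i + 1) ⬝ᵥ u i r
  have hsum (r s q) : u 0 r ⬝ᵥ u 1 s ⨯₃ u 2 q = 0 ↔ f 0 r + f 1 s + f 2 q = 0 := by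
    have hdet := triple_product_mul_of_add_eq_zero (w := ![u 0 r, u 1 s, u 2 q]) t hm
      (by simp [Fin.forall_fin_succ, hon])
    have h₁ : m 1 ⬝ᵥ u 0 r ≠ 0 := hoff (by decide) r
    have h₂ : m 2 ⬝ᵥ u 1 s ≠ 0 := hoff (by decide) s
    have h₀ : m 0 ⬝ᵥ u 2 q ≠ 0 := hoff (by decide) q
    have hf : (m 0 ⬝ᵥ m 1 ⨯₃ t) * (u 0 r ⬝ᵥ u 1 s ⨯₃ u 2 q) =
        (m 1 ⬝ᵥ u 0 r * (m 2 ⬝ᵥ u 1 s) * (m 0 ⬝ᵥ u 2 q)) * (f 0 r + f 1 s + f 2 q) := by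
      refine hdet.trans ?_
      simp only [Matrix.cons_val, zero_add, Fin.reduceAdd, f]
      field_simp
    simpa [ht, h₀, h₁, h₂] using congrArg (· = 0) hf
  obtain ⟨z, hz⟩ := exists_forall_succ_eq_add fun r s q h =>
    (hsum r s q).1 (hu.collinear (by decide) (by decide) (by decide) h)
  have hz₀ : z = 0 := eq_zero_of_periodic (by omega)
    ((hu.periodic 0).comp fun v => t ⬝ᵥ v / m 1 ⬝ᵥ v) (hz 0)
  refine hu.not_collinear (by decide : (0 : Fin 3) ≠ 1) (by decide : (0 : Fin 3) ≠ 2) (by decide)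
    (r := 1) (s := 0) (t := 0) (by simpa using hn) ((hsum 1 0 0).2 ?_)
  rw [← zero_add 1, hz, hz₀, zero_add, ← hsum]
  exact hu.collinear (by decide) (by decide) (by decide) (by simp)

end IsCyclicNet

/-- The points `w r` of the line `l` are in geometric progression with ratio `z`, in the
coordinate that vanishes on the line `p` and has its pole on the line `q`. -/
structure IsGeometric (w : ℤ → Fin 3 → K) (l p q : Fin 3 → K) (z : K) : Prop where
  mem_line : ∀ r, l ⬝ᵥ w r = 0
  left_ne_zero : ∀ r, p ⬝ᵥ w r ≠ 0
  right_ne_zero : ∀ r, q ⬝ᵥ w r ≠ 0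
  triple_product_ne_zero : l ⬝ᵥ p ⨯₃ q ≠ 0
  ratio_ne_zero : z ≠ 0
  ratio_sq_ne_one : z ^ 2 ≠ 1
  div_succ : ∀ r, p ⬝ᵥ w (r + 1) / q ⬝ᵥ w (r + 1) = z * (p ⬝ᵥ w r / q ⬝ᵥ w r)

/-- The three class lines form a triangle, and each class is a geometric progression with ratio
`z` with respect to the two vertices of the triangle on its line. -/
def IsTriangle (u : Fin 3 → ℤ → Fin 3 → K) (z : K) : Prop :=
  ∀ {i j k : Fin 3}, j = i + 1 → k = j + 1 →
    IsGeometric (u i) (classLine u i) (classLine u j) (classLine u k) z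

/- Menelaus' theorem: the factors are coordinates of the points `w i` on the sides of the triangle
with side lines `l i`. -/
lemma triple_product_eq_zero_iff_prod_eq_neg_one {l w : Fin 3 → Fin 3 → K}
    (hl : l 0 ⬝ᵥ l 1 ⨯₃ l 2 ≠ 0) (hon : ∀ i, l i ⬝ᵥ w i = 0) (h₀ : l 2 ⬝ᵥ w 0 ≠ 0)
    (h₁ : l 0 ⬝ᵥ w 1 ≠ 0) (h₂ : l 1 ⬝ᵥ w 2 ≠ 0) :
    w 0 ⬝ᵥ w 1 ⨯₃ w 2 = 0 ↔
      l 1 ⬝ᵥ w 0 / l 2 ⬝ᵥ w 0 * (l 2 ⬝ᵥ w 1 / l 0 ⬝ᵥ w 1) * (l 0 ⬝ᵥ w 2 / l 1 ⬝ᵥ w 2) = -1 := by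
  rw [← mul_right_inj' hl, mul_zero, triple_product_mul_triple_product, hon, hon, hon]
  field_simp
  rw [eq_neg_iff_add_eq_zero]
  ring_nf

namespace IsCyclicNet

variable {n : ℕ} {u : Fin 3 → ℤ → Fin 3 → K} {i j : Fin 3}

lemma triple_product_classLine_ne_zero [CharZero K] (hu : IsCyclicNet n u) (hn : 1 < n)
    (hcol : CollinearClasses u) :
    classLine u 0 ⬝ᵥ classLine u 1 ⨯₃ classLine u 2 ≠ 0 := by
  intro h
  have hcross {i j : Fin 3} (hij : i ≠ j) : classLine u i ⨯₃ classLine u j ≠ 0 :=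
    hu.cross_classLine_ne_zero hn hcol hij
  obtain ⟨a, b, hab⟩ := exists_smul_add_smul_eq (hcross (by decide)) h
  have ha : a ≠ 0 := by
    rintro rfl
    exact hcross (by decide : (0 : Fin 3) ≠ 2) (by simp [← hab])
  have hb : b ≠ 0 := by
    rintro rfl
    exact hcross (by decide : (0 : Fin 3) ≠ 1) (by simp [← hab])
  let m (i : Fin 3) : Fin 3 → K := ![-1, a, b] i • classLine u i
  refine hu.line_add_line_add_line_ne_zero hn (m := m) (fun i r => ?_) (fun {i j} hij r => ?_) ?_
  · rw [smul_dotProduct, dotProduct_comm, classLine, hcol, smul_zero]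
  · rw [smul_dotProduct]
    refine smul_ne_zero ?_ (hu.classLine_dotProduct_ne_zero hn hij r)
    fin_cases i
    exacts [neg_ne_zero.2 one_ne_zero, ha, hb]
  · simp [m, ← hab, add_assoc]

lemma triple_product_classLine_cyclic_ne_zero [CharZero K] (hu : IsCyclicNet n u) (hn : 1 < n)
    (hcol : CollinearClasses u) (i : Fin 3) :
    classLine u i ⬝ᵥ classLine u (i + 1) ⨯₃ classLine u (i + 2) ≠ 0 := by
  have h := hu.triple_product_classLine_ne_zero hn hcol
  fin_cases i
  · exact h
  · rwa [triple_product_permutation] at h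
  · rwa [← triple_product_permutation] at h

lemma exists_isTriangle [CharZero K] (hu : IsCyclicNet n u) (hn : 2 < n)
    (hcol : CollinearClasses u) : ∃ z, IsTriangle u z := by
  have hne {i j} (hij : i ≠ j) (r) := hu.classLine_dotProduct_ne_zero (by omega : 1 < n) hij r
  have hon (i r) : classLine u i ⬝ᵥ u i r = 0 := by rw [dotProduct_comm]; exact hcol i r
  have hl := hu.triple_product_classLine_cyclic_ne_zero (by omega) hcol
  let f (i : Fin 3) (r : ℤ) : Kˣ :=
    Units.mk0 (classLine u (i + 1) ⬝ᵥ u i r) (hne (by simp) r) /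
      Units.mk0 (classLine u (i + 2) ⬝ᵥ u i r) (hne (by simp) r)
  have hprod (r s t) : u 0 r ⬝ᵥ u 1 s ⨯₃ u 2 t = 0 ↔ f 0 r * f 1 s * f 2 t = -1 := by
    simpa [Units.ext_iff, f] using triple_product_eq_zero_iff_prod_eq_neg_one (l := classLine u)
      (w := ![u 0 r, u 1 s, u 2 t]) (hl 0) (by simp [Fin.forall_fin_succ, hon])
      (hne (by decide) r) (hne (by decide) s) (hne (by decide) t)
  obtain ⟨z, hz⟩ := exists_forall_succ_eq_mul fun r s t h =>
    (hprod r s t).1 (hu.collinear (by decide) (by decide) (by decide) h)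
  have hz₂ : z ^ 2 ≠ 1 := fun hz₂ => by
    have hf : f 0 2 = f 0 0 := by
      rw [show (2 : ℤ) = 0 + 1 + 1 by rfl, hz, hz, ← mul_assoc, ← sq, hz₂, one_mul]
    refine hu.not_collinear (by decide : (0 : Fin 3) ≠ 1) (by decide : (0 : Fin 3) ≠ 2)
      (by decide) (r := 2) (s := 0) (t := 0) (by simpa using hn) ((hprod 2 0 0).2 ?_)
    rw [hf, ← hprod]
    exact hu.collinear (by decide) (by decide) (by decide) (by simp)
  refine ⟨z, fun {i j k} hj hk => ?_⟩
  obtain rfl : k = i + 2 := by decide +revert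
  subst hj
  exact ⟨hon i, hne (by simp), hne (by simp), hl i, z.ne_zero,
    by rwa [← Units.val_pow_eq_pow_val, Ne, Units.val_eq_one],
    fun r => by simpa [f] using congrArg Units.val (hz i r)⟩

end IsCyclicNet

lemma quadratic_eq_zero_of_geometric_zeros {p q s x z : K} (hx : x ≠ 0) (hz : z ≠ 0)
    (hz₂ : z ^ 2 ≠ 1) (h : ∀ r < 3, p * (z ^ r * x) ^ 2 + q * (z ^ r * x) + s = 0) :
    p = 0 ∧ q = 0 ∧ s = 0 := by
  have h₀ := h 0 (by simp)
  have h₁ := h 1 (by simp)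
  have h₂ := h 2 (by simp)
  have hz₁ : z - 1 ≠ 0 := fun h => hz₂ (by rw [sub_eq_zero.1 h, one_pow])
  have hslope : p * x * (z + 1) + q = 0 :=
    (mul_eq_zero.1 (by linear_combination h₁ - h₀ :
      (z - 1) * x * (p * x * (z + 1) + q) = 0)).resolve_left (mul_ne_zero hz₁ hx)
  have hp : p = 0 :=
    (mul_eq_zero.1 (by linear_combination h₂ - h₁ - z * (z - 1) * x * hslope :
      z * (z - 1) * (z ^ 2 - 1) * x ^ 2 * p = 0)).resolve_left (mul_ne_zero (mul_ne_zero
        (mul_ne_zero hz hz₁) (sub_ne_zero.2 hz₂)) (pow_ne_zero 2 hx))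
  have hq : q = 0 := by simpa [hp] using hslope
  exact ⟨hp, hq, by simpa [hp, hq] using h₀⟩

/- A homography conjugating one dilation to another preserves or exchanges their fixed points `0`
and `∞`. -/
lemma homography_of_geometric {a b c d z z' : K} {x y : ℤ → K} (hdet : a * d - b * c ≠ 0)
    (hz : z ≠ 0) (hz₂ : z ^ 2 ≠ 1) (hz' : z' ≠ 1) (hx₀ : x 0 ≠ 0) (hx : ∀ r, x (r + 1) = z * x r)
    (hy : ∀ r, y (r + 1) = z' * y r) (hxy : ∀ r, y r * (c * x r + d) = a * x r + b) :
    (z' = z ∧ b = 0 ∧ c = 0) ∨ (z * z' = 1 ∧ a = 0 ∧ d = 0) := by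
  have hquad (r : ℤ) : a * c * z * (1 - z') * x r ^ 2 +
      (a * d * (z - z') + b * c * (1 - z * z')) * x r + b * d * (1 - z') = 0 := by
    have hsucc := hxy (r + 1)
    rw [hx, hy] at hsucc
    linear_combination z' * (c * (z * x r) + d) * hxy r - (c * x r + d) * hsucc
  have hpow (r : ℕ) : z ^ r * x 0 = x r := by
    induction r with
    | zero => simp
    | succ r ih => rw [Nat.cast_succ, hx, ← ih, pow_succ', mul_assoc]
  obtain ⟨hac, hmid, hbd⟩ := quadratic_eq_zero_of_geometric_zeros hx₀ hz hz₂ fun r _ => by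
    rw [hpow]; exact hquad r
  simp only [mul_eq_zero, hz, sub_ne_zero.2 hz'.symm, or_false] at hac hbd
  obtain rfl | rfl := hac
  · have hb : b ≠ 0 := by rintro rfl; simp at hdet
    have hc : c ≠ 0 := by rintro rfl; simp at hdet
    refine .inr ⟨?_, rfl, hbd.resolve_left hb⟩
    exact (sub_eq_zero.1 (by simpa [hb, hc] using hmid)).symm
  · have ha : a ≠ 0 := by rintro rfl; simp at hdet
    have hd : d ≠ 0 := by rintro rfl; simp at hdet
    refine .inl ⟨?_, hbd.resolve_right hd, rfl⟩
    exact (sub_eq_zero.1 (by simpa [ha, hd] using hmid)).symm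

namespace IsGeometric

variable {w : ℤ → Fin 3 → K} {l p q p' q' : Fin 3 → K} {z z' : K}

lemma eq_or_mul_eq_one (h : IsGeometric w l p q z) (h' : IsGeometric w l p' q' z') :
    (z' = z ∧ p' ⬝ᵥ l ⨯₃ p = 0 ∧ q' ⬝ᵥ q ⨯₃ l = 0) ∨
      (z * z' = 1 ∧ p' ⬝ᵥ q ⨯₃ l = 0 ∧ q' ⬝ᵥ l ⨯₃ p = 0) := by
  have hcoord (m : Fin 3 → K) (r : ℤ) : (l ⬝ᵥ p ⨯₃ q) * m ⬝ᵥ w r =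
      p ⬝ᵥ w r * (m ⬝ᵥ q ⨯₃ l) + q ⬝ᵥ w r * (m ⬝ᵥ l ⨯₃ p) := by
    rw [triple_product_mul_dotProduct, h.mem_line]
    ring
  have hdet : p' ⬝ᵥ q ⨯₃ l * q' ⬝ᵥ l ⨯₃ p - p' ⬝ᵥ l ⨯₃ p * q' ⬝ᵥ q ⨯₃ l =
      (l ⬝ᵥ p ⨯₃ q) * (l ⬝ᵥ p' ⨯₃ q') := by
    simp only [cross_apply, dotProduct, Fin.sum_univ_three, Matrix.cons_val]
    ring
  refine homography_of_geometric (x := fun r => p ⬝ᵥ w r / q ⬝ᵥ w r)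
    (y := fun r => p' ⬝ᵥ w r / q' ⬝ᵥ w r)
    (hdet ▸ mul_ne_zero h.triple_product_ne_zero h'.triple_product_ne_zero)
    h.ratio_ne_zero h.ratio_sq_ne_one (fun hz => h'.ratio_sq_ne_one (by simp [hz]))
    (div_ne_zero (h.left_ne_zero 0) (h.right_ne_zero 0)) h.div_succ h'.div_succ fun r => ?_
  have hp := hcoord p' r
  have hq := hcoord q' r
  have h₀ := h.right_ne_zero r
  have h₁ := h'.right_ne_zero r
  field_simp
  linear_combination q' ⬝ᵥ w r * hp - p' ⬝ᵥ w r * hq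

end IsGeometric

lemma exists_smul_eq_of_triple_product_eq_zero {a b c m : Fin 3 → K} (h : a ⬝ᵥ b ⨯₃ c ≠ 0)
    (hb : m ⬝ᵥ a ⨯₃ b = 0) (hc : m ⬝ᵥ c ⨯₃ a = 0) : ∃ t : K, t • a = m := by
  refine ⟨(m ⬝ᵥ b ⨯₃ c) / (a ⬝ᵥ b ⨯₃ c), dotProduct_eq _ _ fun w => ?_⟩
  have hw := triple_product_mul_dotProduct a b c m w
  rw [hb, hc] at hw
  rw [smul_dotProduct, smul_eq_mul, div_mul_eq_mul_div, div_eq_iff h]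
  linear_combination -hw

/- Three triangles with side lines `X Y Z`, `X' Y Z'`, `X' Y' Z`. -/
lemma IsGeometric.exists_smul_eq {X Y Z X' Y' Z' : Fin 3 → K} {z₁ z₂ z₃ : K}
    {wX' wY wZ : ℤ → Fin 3 → K} (hY₁ : IsGeometric wY Y Z X z₁) (hZ₁ : IsGeometric wZ Z X Y z₁)
    (hY₂ : IsGeometric wY Y Z' X' z₂) (hX₂ : IsGeometric wX' X' Y Z' z₂)
    (hZ₃ : IsGeometric wZ Z X' Y' z₃) (hX₃ : IsGeometric wX' X' Y' Z z₃) :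
    ∃ t : K, t • X = X' := by
  obtain ⟨-, -, hXY⟩ | ⟨h₁₂, -, hYZ⟩ := hY₁.eq_or_mul_eq_one hY₂ <;>
    obtain ⟨-, hZX, -⟩ | ⟨h₁₃, hYZ, -⟩ := hZ₁.eq_or_mul_eq_one hZ₃
  · refine exists_smul_eq_of_triple_product_eq_zero ?_ hXY hZX
    rw [triple_product_permutation]
    exact hY₁.triple_product_ne_zero
  · obtain ⟨t, rfl⟩ :=
      exists_smul_eq_of_triple_product_eq_zero hY₁.triple_product_ne_zero hYZ hXY
    exact absurd (by simp) hX₂.triple_product_ne_zero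
  · obtain ⟨t, rfl⟩ :=
      exists_smul_eq_of_triple_product_eq_zero hZ₁.triple_product_ne_zero hZX hYZ
    exact absurd (by simp) hX₃.triple_product_ne_zero
  · have h₂₃ : z₂ = z₃ := mul_left_cancel₀ hY₁.ratio_ne_zero (h₁₂.trans h₁₃.symm)
    obtain ⟨-, -, hZ⟩ | ⟨h₂₃', -, -⟩ := hX₂.eq_or_mul_eq_one hX₃
    · have hZX' : Z ⨯₃ X' ≠ 0 := fun h => hZ₃.triple_product_ne_zero <| by
        rw [← triple_product_permutation, h, dotProduct_zero]
      refine absurd (dotProduct_cross_eq_zero hZX' ?_ ?_ ?_) hX₂.triple_product_ne_zero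
      · rw [dotProduct_comm, dot_cross_self]
      · rw [dotProduct_comm, ← triple_product_permutation, hYZ]
      · rw [dotProduct_comm, triple_product_permutation, ← cross_anticomm, dotProduct_neg, hZ,
          neg_zero]
    · exact absurd (by rw [sq, ← h₂₃', ← h₂₃]) hX₂.ratio_sq_ne_one

variable {P : Fin 3 → H → Fin 3 → K} {h : H}

/-- The line spanned by the points of class `i` indexed by `x` and `x + h`. -/
def cosetLine (P : Fin 3 → H → Fin 3 → K) (h : H) (i : Fin 3) (x : H) : Fin 3 → K :=
  P i x ⨯₃ P i (x + h)

lemma classLine_cosetPoints (b : Fin 3 → H) (i : Fin 3) :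
    classLine (cosetPoints P h b) i = cosetLine P h i (b i) := by
  simp [classLine, cosetPoints, cosetLine]

lemma IsNet.exists_isGeometric [CharZero K] (hP : IsNet P) (ho : 2 < addOrderOf h)
    (hall : ∀ b, ∑ i, b i = 0 → CollinearClasses (cosetPoints P h b)) (i : Fin 3) {x y z : H}
    (hs : x + y + z = 0) :
    ∃ c, IsGeometric (fun r : ℤ => P i (x + r • h)) (cosetLine P h i x)
        (cosetLine P h (i + 1) y) (cosetLine P h (i + 2) z) c ∧
      IsGeometric (fun r : ℤ => P (i + 1) (y + r • h)) (cosetLine P h (i + 1) y)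
        (cosetLine P h (i + 2) z) (cosetLine P h i x) c ∧
      IsGeometric (fun r : ℤ => P (i + 2) (z + r • h)) (cosetLine P h (i + 2) z)
        (cosetLine P h i x) (cosetLine P h (i + 1) y) c := by
  obtain ⟨b, hb, rfl, rfl, hbz⟩ :=
    exists_sum_eq_zero (by simp : i ≠ i + 1) (by simp : i ≠ i + 2) (by simp) x y
  obtain rfl : z = b (i + 2) := by rw [hbz, eq_neg_iff_add_eq_zero, add_comm, hs]
  obtain ⟨c, hc⟩ := (hP.isCyclicNet_cosetPoints h hb).exists_isTriangle ho (hall b hb)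
  simp only [← classLine_cosetPoints]
  have h₂ : i + 2 = i + 1 + 1 := by rw [add_assoc]; rfl
  have h₃ : i = i + 2 + 1 := by rw [add_assoc]; exact (add_zero i).symm
  exact ⟨c, hc rfl h₂, hc h₂ h₃, hc h₃ rfl⟩

lemma IsNet.cosetLine_dotProduct_eq_zero [CharZero K] (hP : IsNet P) (ho : 2 < addOrderOf h)
    (hall : ∀ b, ∑ i, b i = 0 → CollinearClasses (cosetPoints P h b)) (i : Fin 3) (x x' : H) :
    cosetLine P h i x ⬝ᵥ P i x' = 0 := by
  obtain ⟨z₁, -, hY₁, hZ₁⟩ := hP.exists_isGeometric ho hall i (add_neg_cancel (x + 0))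
  obtain ⟨z₂, hX₂, hY₂, -⟩ := hP.exists_isGeometric ho hall i (add_neg_cancel (x' + 0))
  obtain ⟨z₃, hX₃, -, hZ₃⟩ := hP.exists_isGeometric ho hall i
    (by abel : x' + (x - x') + -(x + 0) = 0)
  obtain ⟨t, ht⟩ := hY₁.exists_smul_eq hZ₁ hY₂ hX₂ hZ₃ hX₃
  have ht₀ : t ≠ 0 := by
    rintro rfl
    refine hX₂.triple_product_ne_zero ?_
    rw [← ht, zero_smul, zero_dotProduct]
  have hmem := hX₂.mem_line 0
  rw [← ht] at hmem
  simpa [ht₀] using hmem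

theorem IsNet.exists_cubic_of_collinearClasses [CharZero K] (hP : IsNet P)
    (ho : 2 < addOrderOf h) (hall : ∀ b, ∑ i, b i = 0 → CollinearClasses (cosetPoints P h b)) :
    ∃ F : MvPolynomial (Fin 3) K, F ≠ 0 ∧ F.IsHomogeneous 3 ∧ ∀ i x, eval (P i x) F = 0 := by
  have hne (i) : cosetLine P h i 0 ≠ 0 := hP.cross_ne_zero fun heq => by
    obtain rfl : h = 0 := by simpa [eq_comm] using heq
    simp at ho
  have hhom : (∏ i, linearForm (cosetLine P h i 0)).IsHomogeneous 3 := by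
    simpa using IsHomogeneous.prod Finset.univ _ _ fun i _ =>
      isHomogeneous_linearForm (cosetLine P h i 0)
  refine ⟨_, Finset.prod_ne_zero_iff.2 fun i _ => linearForm_ne_zero (hne i), hhom,
    fun i x => ?_⟩
  rw [map_prod, Finset.prod_eq_zero (Finset.mem_univ i)]
  rw [eval_linearForm, hP.cosetLine_dotProduct_eq_zero ho hall]

end ThreeLines

/-! ### The cubic of a net -/

section Net

variable {K H : Type*} [Field K] [AddCommGroup H] {P : Fin 3 → H → Fin 3 → K} {h : H}
  {b : Fin 3 → H}

lemma IsNet.exists_cubic_or_collinearClasses [Infinite K] (hP : IsNet P) (ho : 10 ≤ addOrderOf h)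
    (hb : ∑ i, b i = 0) :
    (∃ F : MvPolynomial (Fin 3) K, F ≠ 0 ∧ F.IsHomogeneous 3 ∧ ∀ i x, eval (P i x) F = 0) ∨
      CollinearClasses (cosetPoints P h b) := by
  have hu := hP.isCyclicNet_cosetPoints h hb
  obtain ⟨F, h0, hF, hz⟩ := hu.exists_cubic ho
  by_cases hi : Irreducible F
  · exact .inl ⟨F, h0, hF, eval_eq_zero_of_irreducible_cubic hP ho hF hi hz⟩
  obtain ⟨l, Q, hQ, rfl⟩ := exists_linearForm_mul_of_isHomogeneous_three hF h0 hi
  obtain ⟨hl₀, hQ₀⟩ := mul_ne_zero_iff.1 h0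
  have ne_zero {l : Fin 3 → K} (hl : linearForm l ≠ 0) : l ≠ 0 := by
    rintro rfl
    simp [linearForm] at hl
  by_cases hi : Irreducible Q
  · obtain ⟨i, hc⟩ := hu.exists_lineConic (by omega) (ne_zero hl₀) hQ hi hz
    exact .inl ⟨_, h0, hF, hc.eval_eq_zero hP ho hb⟩
  obtain ⟨m, m', rfl⟩ := exists_linearForm_mul_linearForm_of_isHomogeneous_two hQ hQ₀ hi
  obtain ⟨hm₀, hm₀'⟩ := mul_ne_zero_iff.1 hQ₀
  refine .inr (hu.collinearClasses (by omega) (m := ![l, m, m']) ?_ fun i r => ?_)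
  · simp [Fin.forall_fin_succ, ne_zero hl₀, ne_zero hm₀, ne_zero hm₀']
  · simpa [Fin.exists_fin_succ] using hz i r

theorem IsNet.exists_cubic [CharZero K] (hP : IsNet P) (ho : 10 ≤ addOrderOf h) :
    ∃ F : MvPolynomial (Fin 3) K, F ≠ 0 ∧ F.IsHomogeneous 3 ∧ ∀ i x, eval (P i x) F = 0 := by
  by_contra hF
  exact hF <| hP.exists_cubic_of_collinearClasses (by omega) fun b hb =>
    (hP.exists_cubic_or_collinearClasses ho hb).resolve_left hF

lemma IsNet.isRelPrime_linearForm_cross (hP : IsNet P) {i j : Fin 3} (hij : i ≠ j) {x y y' : H}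
    (hy : y ≠ y') :
    IsRelPrime (linearForm (P i x ⨯₃ P j y)) (linearForm (P i x ⨯₃ P j y')) := by
  have hl := hP.cross_ne_zero (x := x) (y := y) (mt (congrArg Prod.fst) hij)
  rw [(irreducible_of_isHomogeneous_one (isHomogeneous_linearForm _)
    (linearForm_ne_zero hl)).isRelPrime_iff_not_dvd]
  rintro ⟨G, hG⟩
  obtain ⟨k, hki, hkj⟩ := exists_ne_and_ne i j
  obtain ⟨c, hc, rfl, rfl, -⟩ := exists_sum_eq_zero hij hki.symm hkj.symm x y'
  have heval := congrArg (eval (P j y)) hG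
  rw [map_mul, eval_linearForm, eval_linearForm, dotProduct_comm, dotProduct_comm _ (P j y),
    dot_cross_self, zero_mul, hP.mem_line_iff hc hij] at heval
  exact hy heval

/- Every line through a singular point of the cubic and two further net points is a component of
the cubic, and there are at least four of them. -/
theorem IsNet.exists_pderiv_ne_zero [Infinite K] (hP : IsNet P) (ho : 4 ≤ addOrderOf h)
    {F : MvPolynomial (Fin 3) K} (h0 : F ≠ 0) (hF : F.IsHomogeneous 3)
    (hz : ∀ i x, eval (P i x) F = 0) (i : Fin 3) (x : H) :
    ∃ j, eval (P i x) (pderiv j F) ≠ 0 := by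
  by_contra! hsing
  obtain ⟨j, hji, -⟩ := exists_ne_and_ne i i
  obtain ⟨k, hki, hkj⟩ := exists_ne_and_ne i j
  have hdvd (y : H) : linearForm (P i x ⨯₃ P j y) ∣ F := by
    obtain ⟨c, hc, rfl, rfl, -⟩ := exists_sum_eq_zero hji.symm hki.symm hkj.symm x y
    have hne {i j : Fin 3} (hij : i ≠ j) (x y) : P i x ⨯₃ P j y ≠ 0 :=
      hP.cross_ne_zero (mt (congrArg Prod.fst) hij)
    exact linearForm_cross_dvd_of_pderiv_eq_zero hF (hz _ _) hsing (hne hji.symm _ _)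
      (hne hki.symm _ (c k)) (hne hkj.symm _ _) (hP.mem_line hc) (hz _ _) (hz _ _)
  have hinj : Function.Injective fun r : Fin 4 => (r : ℕ) • h := fun r s hrs =>
    Fin.ext (nsmul_injOn_Iio_addOrderOf (r.2.trans_le ho) (s.2.trans_le ho) hrs)
  obtain ⟨G, hG⟩ : ∏ r : Fin 4, linearForm (P i x ⨯₃ P j ((r : ℕ) • h)) ∣ F :=
    Finset.prod_dvd_of_isRelPrime
      (fun r _ s _ hrs => hP.isRelPrime_linearForm_cross hji.symm (hinj.ne hrs)) fun r _ => hdvd _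
  have hdeg : (∏ r : Fin 4, linearForm (P i x ⨯₃ P j ((r : ℕ) • h))).IsHomogeneous 4 := by
    simpa using IsHomogeneous.prod Finset.univ _ _ fun (r : Fin 4) _ =>
      isHomogeneous_linearForm (P i x ⨯₃ P j ((r : ℕ) • h))
  rw [hG] at hF h0
  have hmul := totalDegree_mul_of_isDomain (left_ne_zero_of_mul h0) (right_ne_zero_of_mul h0)
  rw [hF.totalDegree h0, hdeg.totalDegree (left_ne_zero_of_mul h0)] at hmul
  omega

end Net

/-! ### Realizations by 3-nets -/

section Realization

lemma linearIndependent_iff_triple_product_ne_zero {K : Type*} [Field K] {u v w : Fin 3 → K} :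
    LinearIndependent K ![u, v, w] ↔ u ⬝ᵥ v ⨯₃ w ≠ 0 := by
  rw [triple_product_eq_det, ← isUnit_iff_ne_zero]
  exact (Matrix.linearIndependent_rows_iff_isUnit (A := .of ![u, v, w])).trans
    (Matrix.isUnit_iff_isUnit_det _)

lemma collin_iff {p q r : P2} : Collin p q r ↔ p.rep ⬝ᵥ q.rep ⨯₃ r.rep = 0 := by
  have hrange : Set.range ![p.rep, q.rep, r.rep] = {p.rep, q.rep, r.rep} := by
    simp only [Matrix.range_cons, Matrix.range_empty, Set.union_empty, Set.singleton_union]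
  have hle := finrank_range_le_card (R := ℂ) (b := ![p.rep, q.rep, r.rep])
  rw [← not_iff_not, ← Ne, ← linearIndependent_iff_triple_product_ne_zero,
    linearIndependent_iff_card_eq_finrank_span, Collin]
  rw [Set.finrank, hrange, Fintype.card_fin] at *
  omega

lemma cross_rep_ne_zero {p q : P2} (h : p ≠ q) : p.rep ⨯₃ q.rep ≠ 0 := by
  intro h0
  obtain ⟨c, hc⟩ := exists_smul_eq_of_cross_eq_zero p.rep_nonzero h0
  refine h.symm ?_
  rw [← p.mk_rep, ← q.mk_rep, Projectivization.mk_eq_mk_iff']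
  exact ⟨c, hc⟩

lemma isNet_of_realizes {H : Type} [AddCommGroup H] {p₁ p₂ p₃ : H → P2}
    (h : Realizes p₁ p₂ p₃) : IsNet fun i x => (![p₁, p₂, p₃] i x).rep := by
  obtain ⟨h₁, h₂, h₃, h₁₂, h₁₃, h₂₃, hcol⟩ := h
  rw [Set.disjoint_range_iff] at h₁₂ h₁₃ h₂₃
  refine ⟨fun {i j x y} hne => cross_rep_ne_zero ?_, collin_iff.symm.trans (hcol _ _ _)⟩
  fin_cases i <;> fin_cases j
  · exact h₁.ne fun hxy => hne (by simp [hxy])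
  · exact h₁₂ x y
  · exact h₁₃ x y
  · exact (h₁₂ y x).symm
  · exact h₂.ne fun hxy => hne (by simp [hxy])
  · exact h₂₃ x y
  · exact (h₁₃ y x).symm
  · exact (h₂₃ y x).symm
  · exact h₃.ne fun hxy => hne (by simp [hxy])

end Realization

end ThreeNet

open ThreeNet in
theorem realization_is_algebraic_of_large_order_general {H : Type} [AddCommGroup H] {h : H}
    (ho : 10 ≤ addOrderOf h) {p₁ p₂ p₃ : H → P2} (hp : Realizes p₁ p₂ p₃) :
    AlgebraicOn p₁ p₂ p₃ := by
  have hP := isNet_of_realizes hp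
  obtain ⟨F, h0, hF, hz⟩ := hP.exists_cubic ho
  have hsmooth := hP.exists_pderiv_ne_zero (ho.trans' (by simp)) h0 hF hz
  refine ⟨F, h0, hF, ?_⟩
  rintro _ ((⟨x, rfl⟩ | ⟨x, rfl⟩) | ⟨x, rfl⟩)
  exacts [⟨hz 0 x, hsmooth 0 x⟩, ⟨hz 1 x, hsmooth 1 x⟩, ⟨hz 2 x, hsmooth 2 x⟩]

/-- If a finite abelian group `H` has an element of order at least 10,
then every realization of `H` by a 3-net in ℙ²(ℂ) is algebraic. -/
theorem realization_is_algebraic_of_large_order (H : Type) [AddCommGroup H] [Fintype H]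
    (hord : ∃ h : H, 10 ≤ addOrderOf h)
    (p₁ p₂ p₃ : H → P2) (h : Realizes p₁ p₂ p₃) :
    AlgebraicOn p₁ p₂ p₃ := by
  obtain ⟨g, hg⟩ := hord
  exact realization_is_algebraic_of_large_order_general hg h
end

section
/- Let H be a finite abelian group containing an element of order at least 7. Then H can be realized by a 3-net in ℙ²(ℂ) one class of which is a pencil (i.e., there exist injective maps p₁, p₂, p₃ : H → ℙ²(ℂ) with pairwise disjoint images such that p₁(x), p₂(y), p₃(z) are collinear if and only if x+y+z = 0, and the image of one of the maps p_i is contained in a line) if and only if H is cyclic. -/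
/-- A line in ℙ²(ℂ): the set of points annihilated by a nonzero linear form on ℂ³. -/
def IsProjLine (L : Set P2) : Prop :=
  ∃ f : (Fin 3 → ℂ) →ₗ[ℂ] ℂ, f ≠ 0 ∧ L = {p : P2 | f p.rep = 0}

/-!
Put the first class on a line `f = 0`. The other two classes avoid it, so they have representatives
`v y`, `w z` with `f = 1`, and the net condition says that `v y - w (-x - y)` lies on the line of
`ℂ³` spanned by `p₁ x`. Multiply by `ψ (-y)` and sum over `y`: for every character `ψ`, the vector
`v̂ ψ - ψ x • ŵ (-ψ)` also lies on `p₁ x`. Since `v` is not constant, `v̂ ψ ≠ 0` for some nontrivial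
`ψ`. If `ψ t = 1`, then `p₁ x` and `p₁ (x + t)` contain the same vector, which is nonzero for a
suitable `x`, so `t = 0`. Hence `ψ` is injective and `H` embeds into `ℂˣ`.

Conversely, a faithful character `χ` of a cyclic group gives a net on the sides of the coordinate
triangle, by Menelaus' theorem.
-/

open Projectivization
open scoped LinearAlgebra.Projectivization

section Fourier

variable {H K V : Type*} [AddCommGroup H] [AddCommGroup V]

/-- The discrete Fourier transform of a vector-valued function on a finite abelian group, as a
function of the `K`-valued characters. It is not normalized. -/
def dft [Fintype H] [CommRing K] [Module K V] (v : H → V) (ψ : AddChar H K) : V :=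
  ∑ y, ψ (-y) • v y

theorem sum_smul_sub_comp_eq_dft_sub [Fintype H] [CommRing K] [Module K V] (v w : H → V)
    (ψ : AddChar H K) (x : H) :
    ∑ y, ψ (-y) • (v y - w (-x - y)) = dft v ψ - ψ x • dft w (-ψ) := by
  have hw : ∑ y, ψ (-y) • w (-x - y) = ∑ z, ψ (x + z) • w z := by
    rw [← Equiv.sum_comp (Equiv.subLeft (-x))]
    simp [add_comm x]
  simp only [smul_sub, Finset.sum_sub_distrib, hw, dft, AddChar.neg_apply, neg_neg,
    AddChar.map_add_eq_mul, mul_smul, Finset.smul_sum]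

theorem sum_smul_dft [Fintype H] [Module ℂ V] (v : H → V) (u : H) :
    ∑ ψ : AddChar H ℂ, ψ u • dft v ψ = (Fintype.card H : ℂ) • v u := by
  classical
  calc ∑ ψ : AddChar H ℂ, ψ u • dft v ψ
      = ∑ y, (∑ ψ : AddChar H ℂ, ψ (u - y)) • v y := by
        simp only [dft, Finset.smul_sum, Finset.sum_smul, smul_smul, sub_eq_add_neg,
          AddChar.map_add_eq_mul]
        exact Finset.sum_comm
    _ = (Fintype.card H : ℂ) • v u := by
        simp [AddChar.sum_apply_eq_ite, sub_eq_zero, ite_smul]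

theorem exists_dft_ne_zero [Fintype H] [Module ℂ V] {v : H → V} {y y' : H} (hv : v y ≠ v y') :
    ∃ ψ : AddChar H ℂ, ψ ≠ 0 ∧ dft v ψ ≠ 0 := by
  by_contra! hdft
  have hconst (u : H) : (Fintype.card H : ℂ) • v u = dft v (0 : AddChar H ℂ) := by
    rw [← sum_smul_dft, Fintype.sum_eq_single 0 fun ψ hψ ↦ by rw [hdft ψ hψ, smul_zero]]
    simp
  have hcard : (Fintype.card H : ℂ) ≠ 0 := Nat.cast_ne_zero.2 Fintype.card_ne_zero
  exact hv (smul_right_injective V hcard ((hconst y).trans (hconst y').symm))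

end Fourier

section CyclicityCriterion

variable {H K V : Type*} [AddCommGroup V]

theorem eq_of_mem_submodule_of_mem_submodule [DivisionRing K] [Module K V] {p q : ℙ K V} {a : V}
    (ha : a ≠ 0) (hp : a ∈ p.submodule) (hq : a ∈ q.submodule) : p = q := by
  have eq_mk (r : ℙ K V) (hr : a ∈ r.submodule) : mk K a ha = r := by
    rw [submodule_eq, Submodule.mem_span_singleton] at hr
    rw [← mk_rep r, mk_eq_mk_iff']
    exact hr
  exact (eq_mk p hp).symm.trans (eq_mk q hq)

theorem addChar_injective_of_sub_smul_mem [AddCommGroup H] [Field K] [Module K V]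
    {u : H → ℙ K V} (hu : Function.Injective u) {ψ : AddChar H K} (hψ : ψ ≠ 0) {a b : V}
    (ha : a ≠ 0) (hab : ∀ x, a - ψ x • b ∈ (u x).submodule) : Function.Injective ψ := by
  obtain ⟨x, hx⟩ : ∃ x, a - ψ x • b ≠ 0 := by
    by_contra! hzero
    obtain rfl : a = b := by simpa [sub_eq_zero] using hzero 0
    obtain ⟨x, hx⟩ := AddChar.ne_zero_iff.1 hψ
    have hfix : ψ x • a = (1 : K) • a := by rw [one_smul, ← sub_eq_zero.1 (hzero x)]
    exact hx (smul_left_injective K ha hfix)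
  rw [AddChar.injective_iff]
  intro t ht
  have hxt : a - ψ x • b ∈ (u (x + t)).submodule := by
    simpa [AddChar.map_add_eq_mul, ht] using hab (x + t)
  exact left_eq_add.1 (hu (eq_of_mem_submodule_of_mem_submodule hx (hab x) hxt))

theorem isAddCyclic_of_injective_addChar [AddGroup H] [Finite H] [CommRing K] [IsDomain K]
    {ψ : AddChar H K} (hψ : Function.Injective ψ) : IsAddCyclic H :=
  isCyclic_multiplicative_iff.1 (isCyclic_of_injective_ringHom ψ.toMonoidHom hψ)

theorem isAddCyclic_of_sub_mem_submodule [AddCommGroup H] [Finite H] [Module ℂ V]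
    {u : H → ℙ ℂ V} (hu : Function.Injective u) {v w : H → V} {y y' : H} (hv : v y ≠ v y')
    (hvw : ∀ x y, v y - w (-x - y) ∈ (u x).submodule) : IsAddCyclic H := by
  cases nonempty_fintype H
  obtain ⟨ψ, hψ, hdft⟩ := exists_dft_ne_zero hv
  refine isAddCyclic_of_injective_addChar (addChar_injective_of_sub_smul_mem hu hψ hdft
    (b := dft w (-ψ)) fun x ↦ ?_)
  rw [← sum_smul_sub_comp_eq_dft_sub]
  exact Submodule.sum_mem _ fun y _ ↦ Submodule.smul_mem _ _ (hvw x y)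

end CyclicityCriterion

section AffineRep

variable {K V : Type*} [DivisionRing K] [AddCommGroup V] [Module K V]

/-- The representative of a point `p` on the affine hyperplane `f = 1`, giving affine coordinates
on the complement of the hyperplane `f = 0`. The junk value on that hyperplane is `0`. -/
noncomputable def affineRep (f : V →ₗ[K] K) (p : ℙ K V) : V :=
  (f p.rep)⁻¹ • p.rep

theorem affineRep_injOn (f : V →ₗ[K] K) : Set.InjOn (affineRep f) {p | f p.rep ≠ 0} := by
  have mem_submodule (p : ℙ K V) : affineRep f p ∈ p.submodule := by
    rw [submodule_eq]
    exact Submodule.smul_mem _ _ (Submodule.mem_span_singleton_self _)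
  intro p hp q _ hpq
  have hne : affineRep f p ≠ 0 := smul_ne_zero (inv_ne_zero hp) p.rep_nonzero
  exact eq_of_mem_submodule_of_mem_submodule hne (mem_submodule p) (hpq ▸ mem_submodule q)

theorem affineRep_sub_affineRep_mem_submodule {f : V →ₗ[K] K} {p q r : ℙ K V}
    (hp : f p.rep = 0) (hr : f r.rep ≠ 0)
    (hmem : r.rep ∈ Submodule.span K {p.rep, q.rep}) :
    affineRep f q - affineRep f r ∈ p.submodule := by
  obtain ⟨α, β, hαβ⟩ := Submodule.mem_span_pair.1 hmem
  have hfr : f r.rep = β * f q.rep := by simp [← hαβ, hp]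
  have hβ : β ≠ 0 := left_ne_zero_of_mul (hfr ▸ hr)
  rw [submodule_eq, Submodule.mem_span_singleton]
  refine ⟨-(f r.rep)⁻¹ * α, ?_⟩
  rw [affineRep, affineRep, hfr, ← hαβ, mul_inv_rev]
  simp [mul_smul, smul_add, inv_smul_smul₀ hβ]

end AffineRep

section Collinearity

theorem collin_iff_finrank_sup_le {p q r : P2} :
    Collin p q r ↔ Module.finrank ℂ ↥(p.submodule ⊔ q.submodule ⊔ r.submodule) ≤ 2 := by
  rw [Collin, Submodule.span_insert, Submodule.span_insert, submodule_eq, submodule_eq,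
    submodule_eq, sup_assoc]

theorem collin_mk_iff_det_eq_zero {u v w : Fin 3 → ℂ} (hu : u ≠ 0) (hv : v ≠ 0) (hw : w ≠ 0) :
    Collin (mk ℂ u hu) (mk ℂ v hv) (mk ℂ w hw) ↔ (Matrix.of ![u, v, w]).det = 0 := by
  have hspan : (ℂ ∙ u) ⊔ (ℂ ∙ v) ⊔ (ℂ ∙ w) = Submodule.span ℂ (Set.range ![u, v, w]) := by
    simp only [Matrix.range_cons, Matrix.range_empty, Set.union_empty, Set.singleton_union,
      Submodule.span_insert, sup_assoc]
  have hindep : LinearIndependent ℂ ![u, v, w] ↔ (Matrix.of ![u, v, w]).det ≠ 0 := by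
    rw [← isUnit_iff_ne_zero, ← Matrix.isUnit_iff_isUnit_det,
      ← Matrix.linearIndependent_rows_iff_isUnit]
    rfl
  rw [collin_iff_finrank_sup_le, submodule_mk, submodule_mk, submodule_mk, hspan, ← not_iff_not,
    ← ne_eq (Matrix.det _), ← hindep, linearIndependent_iff_card_le_finrank_span,
    Fintype.card_fin, not_le]
  rfl

theorem Collin.rep_mem_span_pair {p q r : P2} (h : Collin p q r) (hpq : p ≠ q) :
    r.rep ∈ Submodule.span ℂ {p.rep, q.rep} := by
  have hrank : Module.finrank ℂ (Submodule.span ℂ {p.rep, q.rep}) = 2 := by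
    have hli : LinearIndependent ℂ ![p.rep, q.rep] := linearIndependent_pair_iff_ne.2 hpq
    rw [← Matrix.range_cons_cons_empty _ _ ![], finrank_span_eq_card hli, Fintype.card_fin]
  have hspan : Submodule.span ℂ {p.rep, q.rep} = Submodule.span ℂ {p.rep, q.rep, r.rep} :=
    Submodule.eq_of_le_of_finrank_le
      (Submodule.span_mono (Set.insert_subset_insert (Set.subset_insert_iff.2 (by simp))))
      (hrank ▸ h)
  rw [hspan]
  exact Submodule.subset_span (by simp)

theorem collin_swap12 {p q r : P2} : Collin q p r ↔ Collin p q r := by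
  rw [Collin, Collin, Set.insert_comm]

theorem collin_swap23 {p q r : P2} : Collin p r q ↔ Collin p q r := by
  rw [Collin, Collin, Set.pair_comm]

theorem IsProjLine.collin {L : Set P2} (hL : IsProjLine L) {p q r : P2} (hp : p ∈ L)
    (hq : q ∈ L) (hr : r ∈ L) : Collin p q r := by
  obtain ⟨f, hf, rfl⟩ := hL
  have hker : Module.finrank ℂ (LinearMap.ker f) = 2 := by
    simpa using Module.Dual.finrank_ker_add_one_of_ne_zero hf
  have hle : Submodule.span ℂ {p.rep, q.rep, r.rep} ≤ LinearMap.ker f := by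
    rw [Submodule.span_le]
    rintro _ (rfl | rfl | rfl) <;> assumption
  exact (Submodule.finrank_mono hle).trans_eq hker

theorem IsProjLine.mem_of_collin {L : Set P2} (hL : IsProjLine L) {p q r : P2} (hp : p ∈ L)
    (hq : q ∈ L) (hpq : p ≠ q) (h : Collin p q r) : r ∈ L := by
  obtain ⟨f, -, rfl⟩ := hL
  have hle : Submodule.span ℂ {p.rep, q.rep} ≤ LinearMap.ker f := by
    rw [Submodule.span_le]
    rintro _ (rfl | rfl) <;> assumption
  exact hle (h.rep_mem_span_pair hpq)

end Collinearity

section Net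

variable {H : Type} [AddCommGroup H] {p₁ p₂ p₃ : H → P2}

theorem Realizes.swap12 (h : Realizes p₁ p₂ p₃) : Realizes p₂ p₁ p₃ := by
  obtain ⟨h₁, h₂, h₃, h₁₂, h₁₃, h₂₃, hcollin⟩ := h
  refine ⟨h₂, h₁, h₃, h₁₂.symm, h₂₃, h₁₃, fun x y z ↦ ?_⟩
  rw [collin_swap12, hcollin, add_comm y x]

theorem Realizes.swap23 (h : Realizes p₁ p₂ p₃) : Realizes p₁ p₃ p₂ := by
  obtain ⟨h₁, h₂, h₃, h₁₂, h₁₃, h₂₃, hcollin⟩ := h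
  refine ⟨h₁, h₃, h₂, h₁₃, h₁₂, h₂₃.symm, fun x y z ↦ ?_⟩
  rw [collin_swap23, hcollin, add_right_comm]

theorem Realizes.ne₁₂ (h : Realizes p₁ p₂ p₃) (x y : H) : p₁ x ≠ p₂ y :=
  h.2.2.2.1.ne_of_mem (Set.mem_range_self x) (Set.mem_range_self y)

theorem Realizes.collin_iff (h : Realizes p₁ p₂ p₃) {x y z : H} :
    Collin (p₁ x) (p₂ y) (p₃ z) ↔ x + y + z = 0 :=
  h.2.2.2.2.2.2 x y z

theorem Realizes.notMem_of_range_subset [Nontrivial H] (h : Realizes p₁ p₂ p₃) {L : Set P2}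
    (hL : IsProjLine L) (hp : Set.range p₁ ⊆ L) (y : H) : p₂ y ∉ L := by
  intro hy
  have hp₁ (x : H) : p₁ x ∈ L := hp (Set.mem_range_self x)
  have hz : p₃ (-y) ∈ L :=
    hL.mem_of_collin (hp₁ 0) hy (h.ne₁₂ 0 y) (h.collin_iff.2 (by simp))
  obtain ⟨x, hx⟩ := exists_ne (0 : H)
  exact hx (by simpa using h.collin_iff.1 (hL.collin (hp₁ x) hy hz))

theorem Realizes.isAddCyclic_of_range_subset [Finite H] (h : Realizes p₁ p₂ p₃) {L : Set P2}
    (hL : IsProjLine L) (hp : Set.range p₁ ⊆ L) : IsAddCyclic H := by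
  rcases subsingleton_or_nontrivial H
  · infer_instance
  have h₂ := h.notMem_of_range_subset hL hp
  have h₃ := h.swap23.notMem_of_range_subset hL hp
  obtain ⟨f, -, rfl⟩ := hL
  obtain ⟨y, y', hy⟩ := exists_pair_ne H
  refine isAddCyclic_of_sub_mem_submodule h.1 (v := affineRep f ∘ p₂) (w := affineRep f ∘ p₃)
    (fun heq ↦ hy (h.2.1 (affineRep_injOn f (h₂ y) (h₂ y') heq))) fun x y ↦ ?_
  exact affineRep_sub_affineRep_mem_submodule (hp (Set.mem_range_self x)) (h₃ _)
    ((h.collin_iff.2 (by abel)).rep_mem_span_pair (h.ne₁₂ x y))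

end Net

section Triangle

/-- The point with parameter `t` on the side `X i = 0` of the coordinate triangle, having
homogeneous coordinates `X (i + 1) = 1` and `X (i + 2) = -t` (indices modulo `3`). -/
def trianglePoint {K : Type*} [DivisionRing K] (i : Fin 3) (t : K) : ℙ K (Fin 3 → K) :=
  mk K (fun j ↦ ![0, 1, -t] (j - i)) fun h ↦ by simpa using congrFun h (i + 1)

variable {K : Type*} [DivisionRing K]

theorem trianglePoint_injective (i : Fin 3) :
    Function.Injective (trianglePoint i : K → ℙ K (Fin 3 → K)) := by
  intro s t hst
  obtain ⟨a, ha⟩ := (mk_eq_mk_iff' K _ _ _ _).1 hst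
  have ha₁ : a = 1 := by simpa using congrFun ha (i + 1)
  simpa [ha₁] using (congrFun ha (i + 2)).symm

theorem trianglePoint_ne_trianglePoint {i j : Fin 3} (hij : i ≠ j) {s t : K} (hs : s ≠ 0) :
    trianglePoint i s ≠ trianglePoint j t := by
  intro h
  obtain ⟨a, ha⟩ := (mk_eq_mk_iff' K _ _ _ _).1 h
  have hj : ![0, 1, -s] (j - i) = 0 := by simpa using (congrFun ha j).symm
  have hji : j - i ≠ 0 := sub_ne_zero.2 hij.symm
  generalize j - i = k at hj hji
  fin_cases k <;> simp_all

theorem collin_trianglePoint_iff {r s t : ℂ} :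
    Collin (trianglePoint 0 r) (trianglePoint 1 s) (trianglePoint 2 t) ↔ r * s * t = 1 := by
  rw [trianglePoint, trianglePoint, trianglePoint, collin_mk_iff_det_eq_zero]
  have hdet : (Matrix.of ![fun j ↦ ![0, 1, -r] (j - 0), fun j ↦ ![0, 1, -s] (j - 1),
      fun j ↦ ![0, 1, -t] (j - 2)]).det = 1 + -(r * s * t) := by
    simp [Matrix.det_fin_three]
  rw [hdet, add_neg_eq_zero, eq_comm]

theorem isProjLine_coord_eq_zero (i : Fin 3) : IsProjLine {p | p.rep i = 0} := by
  refine ⟨LinearMap.proj i, fun h ↦ ?_, rfl⟩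
  simpa using LinearMap.congr_fun h 1

theorem trianglePoint_rep_apply_self (i : Fin 3) (t : K) : (trianglePoint i t).rep i = 0 := by
  obtain ⟨a, ha⟩ := exists_smul_eq_mk_rep K (fun j ↦ ![0, 1, -t] (j - i)) _
  exact (congrFun ha i).symm.trans (by simp)

theorem realizes_trianglePoint {H : Type} [AddCommGroup H] {χ : AddChar H ℂ}
    (hχ : Function.Injective χ) :
    Realizes (trianglePoint 0 ∘ χ) (trianglePoint 1 ∘ χ) (trianglePoint 2 ∘ χ) := by
  have hinj (i : Fin 3) : Function.Injective (trianglePoint i ∘ χ) :=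
    (trianglePoint_injective i).comp hχ
  have hdisj {i j : Fin 3} (hij : i ≠ j) :
      Disjoint (Set.range (trianglePoint i ∘ χ)) (Set.range (trianglePoint j ∘ χ)) := by
    rw [Set.disjoint_range_iff]
    exact fun x y ↦ trianglePoint_ne_trianglePoint hij (χ.val_isUnit x).ne_zero
  refine ⟨hinj 0, hinj 1, hinj 2, hdisj (by decide), hdisj (by decide), hdisj (by decide),
    fun x y z ↦ ?_⟩
  rw [Function.comp_apply, Function.comp_apply, Function.comp_apply, collin_trianglePoint_iff,
    ← AddChar.map_add_eq_mul, ← AddChar.map_add_eq_mul, ← χ.map_zero_eq_one, hχ.eq_iff]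

theorem exists_injective_addChar (H : Type*) [AddCommGroup H] [Finite H] [IsAddCyclic H] :
    ∃ χ : AddChar H ℂ, Function.Injective χ := by
  have : NeZero (Nat.card H) := ⟨Nat.card_pos.ne'⟩
  let e : H ≃+ ZMod (Nat.card H) := (zmodAddCyclicAddEquiv ‹_›).symm
  exact ⟨ZMod.stdAddChar.compAddMonoidHom (e : H →+ ZMod (Nat.card H)),
    ZMod.injective_stdAddChar.comp e.injective⟩

end Triangle

theorem realizable_with_pencil_iff_cyclic_general (H : Type) [AddCommGroup H] [Finite H] :
    (∃ p₁ p₂ p₃ : H → P2, Realizes p₁ p₂ p₃ ∧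
        ∃ L : Set P2, IsProjLine L ∧
          (Set.range p₁ ⊆ L ∨ Set.range p₂ ⊆ L ∨ Set.range p₃ ⊆ L)) ↔
      IsAddCyclic H := by
  constructor
  · rintro ⟨p₁, p₂, p₃, h, L, hL, hp | hp | hp⟩
    · exact h.isAddCyclic_of_range_subset hL hp
    · exact h.swap12.isAddCyclic_of_range_subset hL hp
    · exact h.swap23.swap12.isAddCyclic_of_range_subset hL hp
  · intro _
    obtain ⟨χ, hχ⟩ := exists_injective_addChar H
    refine ⟨_, _, _, realizes_trianglePoint hχ, _, isProjLine_coord_eq_zero 0, Or.inl ?_⟩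
    rintro _ ⟨x, rfl⟩
    exact trianglePoint_rep_apply_self 0 (χ x)

/-- A finite abelian group `H` with an element of order at least 7 can be
realized by a 3-net in ℙ²(ℂ) one class of which is a pencil (dually: the image of one of
the three maps is contained in a line) if and only if `H` is cyclic. -/
theorem realizable_with_pencil_iff_cyclic (H : Type) [AddCommGroup H] [Fintype H]
    (hord : ∃ h : H, 7 ≤ addOrderOf h) :
    (∃ p₁ p₂ p₃ : H → P2, Realizes p₁ p₂ p₃ ∧
        ∃ L : Set P2, IsProjLine L ∧
          (Set.range p₁ ⊆ L ∨ Set.range p₂ ⊆ L ∨ Set.range p₃ ⊆ L)) ↔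
      IsAddCyclic H := by
  exact realizable_with_pencil_iff_cyclic_general H
end
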